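/- Let G be a finitely generated co-Hopfian virtually free group with Out(G) finite. Then G is prime: for every group G' that is elementarily equivalent to G, there exists an elementary embedding of G into G'. -/

import Mathlib

open FirstOrder Language

/-- Function symbols of the first-order language of groups:
a binary multiplication, a unary inverse and a constant for the identity. -/
inductive GroupFunc : ℕ → Type
  | mul : GroupFunc 2
  | inv : GroupFunc 1
  | one : GroupFunc 0

/-- The first-order language of groups. -/
def groupLang : FirstOrder.Language :=
  { Functions := GroupFunc
    Relations := fun _ => Empty }

/-- Every group is a structure for the language of groups in the natural way. -/
instance groupLangStructure (G : Type*) [Group G] : groupLang.Structure G where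
  funMap {n} f v :=
    match f with
    | .mul => v 0 * v 1
    | .inv => (v 0)⁻¹
    | .one => 1
  RelMap {n} r _ := r.elim

/-- Existential formulas: iterated existential quantifications of a
quantifier-free formula. -/
inductive IsExistentialQF {α : Type*} : ∀ {n : ℕ}, groupLang.BoundedFormula α n → Prop
  | of_isQF {n : ℕ} {φ : groupLang.BoundedFormula α n} (h : φ.IsQF) : IsExistentialQF φ
  | ex {n : ℕ} {φ : groupLang.BoundedFormula α (n + 1)} (h : IsExistentialQF φ) :
      IsExistentialQF φ.ex

/-- Universal formulas: iterated universal quantifications of a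
quantifier-free formula. -/
inductive IsUniversalQF {α : Type*} : ∀ {n : ℕ}, groupLang.BoundedFormula α n → Prop
  | of_isQF {n : ℕ} {φ : groupLang.BoundedFormula α n} (h : φ.IsQF) : IsUniversalQF φ
  | all {n : ℕ} {φ : groupLang.BoundedFormula α (n + 1)} (h : IsUniversalQF φ) :
      IsUniversalQF φ.all

/-- ∀∃-formulas: iterated universal quantifications of an existential formula. -/
inductive IsAE {α : Type*} : ∀ {n : ℕ}, groupLang.BoundedFormula α n → Prop
  | of_existential {n : ℕ} {φ : groupLang.BoundedFormula α n} (h : IsExistentialQF φ) : IsAE φ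
  | all {n : ℕ} {φ : groupLang.BoundedFormula α (n + 1)} (h : IsAE φ) : IsAE φ.all

/-- A group is virtually free if it has a free subgroup of finite index. -/
def VirtuallyFree (G : Type*) [Group G] : Prop :=
  ∃ H : Subgroup G, H.FiniteIndex ∧ Nonempty (IsFreeGroup H)

/-- A group is co-Hopfian if every injective endomorphism is surjective. -/
def CoHopfian (G : Type*) [Group G] : Prop :=
  ∀ φ : G →* G, Function.Injective φ → Function.Surjective φ

/-- Two homomorphisms `φ, φ' : G → G'` are equivalent if they coincide up to
conjugation on every finite subgroup of `G`. -/
def HomEquiv {G G' : Type*} [Group G] [Group G'] (φ φ' : G →* G') : Prop :=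
  ∀ H : Subgroup G, (H : Set G).Finite →
    ∃ g' : G', ∀ h ∈ H, φ' h = g' * φ h * g'⁻¹

/-- Two groups are ∀∃-equivalent if they satisfy the same ∀∃-sentences. -/
def AEEquivalent (G : Type*) (G' : Type*) [Group G] [Group G'] : Prop :=
  ∀ φ : groupLang.Sentence, IsAE φ → (G ⊨ φ ↔ G' ⊨ φ)

/-- Two groups are ∃-equivalent if they satisfy the same existential sentences. -/
def ExistentiallyEquivalent (G : Type*) (G' : Type*) [Group G] [Group G'] : Prop :=
  ∀ φ : groupLang.Sentence, IsExistentialQF φ → (G ⊨ φ ↔ G' ⊨ φ)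

/-- An endomorphism is rigid-testing: `G` is rigid if every endomorphism
equivalent to the identity is an automorphism. -/
def Rigid (G : Type*) [Group G] : Prop :=
  ∀ φ : G →* G, HomEquiv φ (MonoidHom.id G) → Function.Bijective φ

/-- `Out G` is finite, expressed as: the inner automorphisms form a finite index
subgroup of `Aut G`. -/
def OutFinite (G : Type*) [Group G] : Prop :=
  (MulAut.conj : G →* MulAut G).range.FiniteIndex

/-- Iterated composition of an endomorphism. -/
def homPow {G : Type*} [Group G] (φ : G →* G) : ℕ → (G →* G)
  | 0 => MonoidHom.id G
  | n + 1 => φ.comp (homPow φ n)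

/-- An endomorphism `φ` of `G` is class-permuting if some positive power of `φ`
is equivalent to the identity of `G`. -/
def ClassPermuting {G : Type*} [Group G] (φ : G →* G) : Prop :=
  ∃ n : ℕ, 1 ≤ n ∧ HomEquiv (homPow φ n) (MonoidHom.id G)

/-- A maximal finite subgroup: a finite subgroup maximal with respect to
inclusion among finite subgroups. -/
def MaximalFiniteSubgroup {G : Type*} [Group G] (A : Subgroup G) : Prop :=
  (A : Set G).Finite ∧ ∀ B : Subgroup G, (B : Set G).Finite → A ≤ B → A = B

/-- Two subgroups are conjugate. -/
def SubgroupConj {G : Type*} [Group G] (A B : Subgroup G) : Prop :=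
  ∃ g : G, B = A.map (MulAut.conj g).toMonoidHom

/-- A group is strongly co-Hopfian if there is a finite subset `F` of
`G \ {1}` such that every endomorphism whose kernel misses `F` is an
automorphism. -/
def StronglyCoHopfian (G : Type*) [Group G] : Prop :=
  ∃ F : Finset G, (1 : G) ∉ F ∧
    ∀ φ : G →* G, (∀ f ∈ F, φ f ≠ 1) → Function.Bijective φ

/-- A group is finitely presented. -/
def GroupFinitelyPresented (G : Type*) [Group G] : Prop :=
  ∃ (n : ℕ) (rels : Finset (FreeGroup (Fin n))),
    Nonempty (PresentedGroup (rels : Set (FreeGroup (Fin n))) ≃* G)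

namespace PrimeProof
universe u v w

/-- every element of the subgroup generated by `s` is the value of a term. -/
theorem exists_term {G : Type u} [Group G] {σ : Type w} (s : σ → G)
    (hs : Subgroup.closure (Set.range s) = ⊤) (g : G) :
    ∃ t : groupLang.Term σ, t.realize s = g := by
  have hg : g ∈ Subgroup.closure (Set.range s) := by rw [hs]; trivial
  induction hg using Subgroup.closure_induction with
  | mem x hx =>
    obtain ⟨i, rfl⟩ := hx
    exact ⟨Term.var i, rfl⟩
  | one =>
    refine ⟨Term.func (L := groupLang) (l := 0) GroupFunc.one Fin.elim0, rfl⟩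
  | mul x y _ _ hx hy =>
    obtain ⟨t, rfl⟩ := hx
    obtain ⟨t', rfl⟩ := hy
    exact ⟨Term.func (L := groupLang) (l := 2) GroupFunc.mul ![t, t'], rfl⟩
  | inv x _ hx =>
    obtain ⟨t, rfl⟩ := hx
    exact ⟨Term.func (L := groupLang) (l := 1) GroupFunc.inv ![t], rfl⟩

theorem exists_word_term (G : Type u) [Group G] {σ : Type w} (g : FreeGroup σ) :
    ∃ t : groupLang.Term σ, ∀ x : σ → G, t.realize x = FreeGroup.lift x g := by
  induction g using FreeGroup.induction_on with
  | of i => exact ⟨Term.var i, fun x => by simp⟩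
  | C1 => exact ⟨Term.func (L := groupLang) (l := 0) GroupFunc.one Fin.elim0, fun x => by
      rw [map_one]; rfl⟩
  | mul x y hx hy =>
    obtain ⟨t, h1⟩ := hx
    obtain ⟨t', h2⟩ := hy
    refine ⟨Term.func (L := groupLang) (l := 2) GroupFunc.mul ![t, t'], fun x => ?_⟩
    rw [map_mul, ← h1, ← h2]; rfl
  | inv_of x hx =>
    obtain ⟨t, h1⟩ := hx
    refine ⟨Term.func (L := groupLang) (l := 1) GroupFunc.inv ![t], fun x => ?_⟩
    rw [map_inv, ← h1]; rfl

/-- automorphism as structure isomorphism -/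
def autEquiv {G : Type u} [Group G] (a : G ≃* G) : G ≃[groupLang] G where
  toEquiv := a.toEquiv
  map_fun' {n} f x := by
    cases f
    · exact a.map_mul _ _
    · exact a.map_inv _
    · exact a.map_one
  map_rel' {n} r x := r.elim

theorem realize_aut {G : Type u} [Group G] (a : G ≃* G) {α : Type w} (φ : groupLang.Formula α)
    (x : α → G) : φ.Realize (fun i => a (x i)) ↔ φ.Realize x :=
  StrongHomClass.realize_formula (autEquiv a) φ (v := x)

theorem elementary_of_definable {G : Type u} [Group G] {σ : Type w} [Finite σ] (s : σ → G)
    (hs : Subgroup.closure (Set.range s) = ⊤) (T : Set (σ → G))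
    (hT : (∅ : Set G).Definable groupLang T) (hsT : s ∈ T)
    (hA : ∀ x ∈ T, ∃ a : G ≃* G, ∀ i, x i = a (s i))
    (G' : Type v) [Group G'] (h : G ≅[groupLang] G') : Nonempty (G ↪ₑ[groupLang] G') := by
  classical
  obtain ⟨θ, rfl⟩ := Set.empty_definable_iff.1 hT
  choose t ht using exists_term s hs
  have key : ∀ ψ : groupLang.Formula σ, (∃ x : σ → G, ψ.Realize x) ↔ ∃ x : σ → G', ψ.Realize x := by
    intro ψ
    have := (elementarilyEquivalent_iff.1 h) ((ψ.relabel (Sum.inr : σ → Empty ⊕ σ)).iExs σ)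
    simpa [Sentence.Realize, Formula.realize_iExs, Formula.realize_relabel, Function.comp_def]
      using this
  obtain ⟨x', hx'⟩ := (key θ).1 ⟨s, hsT⟩
  have imp : ∀ {n} (φ : groupLang.Formula (Fin n)) (x : Fin n → G), φ.Realize x →
      φ.Realize (fun i => (t (x i)).realize x') := by
    intro n φ x hx
    by_contra hc
    let ψ : groupLang.Formula σ := BoundedFormula.subst φ (fun i => t (x i))
    obtain ⟨y, hy⟩ := (key (θ ⊓ ψ.not)).2 ⟨x', by
      rw [Formula.realize_inf, Formula.realize_not]
      exact ⟨hx', fun h => hc (BoundedFormula.realize_subst.1 h)⟩⟩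
    rw [Formula.realize_inf, Formula.realize_not] at hy
    obtain ⟨a, ha⟩ := hA y hy.1
    apply hy.2
    have : y = fun i => a (s i) := funext ha
    rw [this, realize_aut]
    refine BoundedFormula.realize_subst.2 ?_
    have e : (fun i => (t (x i)).realize s) = x := funext fun i => ht _
    rw [e]
    exact hx
  refine ⟨⟨fun g => (t g).realize x', fun n φ x => ⟨fun hh => ?_, fun hh => imp φ x hh⟩⟩⟩
  by_contra hc
  have := imp φ.not x (Formula.realize_not.2 hc)
  exact (Formula.realize_not.1 this) hh

theorem definable_word_eq {G : Type u} [Group G] {σ : Type w} (a b : FreeGroup σ) :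
    (∅ : Set G).Definable groupLang {x : σ → G | FreeGroup.lift x a = FreeGroup.lift x b} := by
  obtain ⟨t, ht⟩ := exists_word_term G a
  obtain ⟨t', ht'⟩ := exists_word_term G b
  refine Set.empty_definable_iff.2 ⟨t.equal t', ?_⟩
  ext x
  simp [Formula.realize_equal, ht, ht']

/-- at most m elements commute with all the words in A -/
theorem definable_centralizer {G : Type u} [Group G] {σ : Type w} [Finite σ]
    (A : Finset (FreeGroup σ)) (m : ℕ) :
    (∅ : Set G).Definable groupLang {x : σ → G | ¬ ∃ c : Fin (m+1) → G, Function.Injective c ∧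
      ∀ i, ∀ a ∈ A, c i * FreeGroup.lift x a = FreeGroup.lift x a * c i} := by
  classical
  have h1 : (∅ : Set G).Definable groupLang {y : σ ⊕ Fin (m+1) → G |
      (∀ i j, i ≠ j → y (Sum.inr i) ≠ y (Sum.inr j)) ∧
      ∀ i, ∀ a ∈ A, y (Sum.inr i) * FreeGroup.lift (fun k => y (Sum.inl k)) a =
        FreeGroup.lift (fun k => y (Sum.inl k)) a * y (Sum.inr i)} := by
    have e1 : {y : σ ⊕ Fin (m+1) → G |
      (∀ i j, i ≠ j → y (Sum.inr i) ≠ y (Sum.inr j)) ∧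
      ∀ i, ∀ a ∈ A, y (Sum.inr i) * FreeGroup.lift (fun k => y (Sum.inl k)) a =
        FreeGroup.lift (fun k => y (Sum.inl k)) a * y (Sum.inr i)} =
      (⋂ p : {p : Fin (m+1) × Fin (m+1) // p.1 ≠ p.2},
        {y : σ ⊕ Fin (m+1) → G | FreeGroup.lift y (FreeGroup.of (Sum.inr p.1.1)) =
          FreeGroup.lift y (FreeGroup.of (Sum.inr p.1.2))}ᶜ) ∩
      (⋂ p : Fin (m+1) × A, {y : σ ⊕ Fin (m+1) → G |
        FreeGroup.lift y (FreeGroup.of (Sum.inr p.1) * FreeGroup.map Sum.inl p.2.1) =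
        FreeGroup.lift y (FreeGroup.map Sum.inl p.2.1 * FreeGroup.of (Sum.inr p.1))}) := by
      ext y
      have : ∀ a : FreeGroup σ, FreeGroup.lift y (FreeGroup.map Sum.inl a) =
          FreeGroup.lift (fun k => y (Sum.inl k)) a := by
        intro a
        induction a <;> simp_all
      simp [this]
    rw [e1]
    exact (Set.definable_iInter_of_finite fun p => (definable_word_eq _ _).compl).inter
      (Set.definable_iInter_of_finite fun p => definable_word_eq _ _)
  have h2 := (h1.image_comp (Sum.inl : σ → σ ⊕ Fin (m+1))).compl
  convert h2 using 1
  ext x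
  simp only [Set.mem_ofPred_eq, Set.mem_compl_iff, Set.mem_image, not_iff_not]
  constructor
  · rintro ⟨c, hc, h⟩
    refine ⟨Sum.elim x c, ⟨fun i j hij => by simpa using hc.ne hij, fun i a ha => ?_⟩, ?_⟩
    · simpa using h i a ha
    · ext i; simp
  · rintro ⟨y, ⟨h1, h2⟩, rfl⟩
    refine ⟨fun i => y (Sum.inr i), fun i j hij => ?_, fun i a ha => h2 i a ha⟩
    by_contra hne
    exact h1 i j hne hij

end PrimeProof

namespace PrimeProof
universe u v w

theorem freeGroup_support {β : Type u} (x : FreeGroup β) :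
    ∃ T : Set β, T.Finite ∧ ∀ f : β → Multiplicative ℤ, (∀ c ∈ T, f c = 1) →
      FreeGroup.lift f x = 1 := by
  induction x using FreeGroup.induction_on with
  | of i => exact ⟨{i}, Set.finite_singleton i, fun f hf => by simpa using hf i rfl⟩
  | C1 => exact ⟨∅, Set.finite_empty, fun f hf => by simp⟩
  | mul x y hx hy =>
    obtain ⟨T, h1, h2⟩ := hx
    obtain ⟨T', h1', h2'⟩ := hy
    refine ⟨T ∪ T', h1.union h1', fun f hf => ?_⟩
    rw [map_mul, h2 f fun c hc => hf c (Or.inl hc), h2' f fun c hc => hf c (Or.inr hc), mul_one]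
  | inv_of x hx =>
    obtain ⟨T, h1, h2⟩ := hx
    exact ⟨T, h1, fun f hf => by rw [map_inv, h2 f hf, inv_one]⟩

theorem finite_of_freeGroup_fg {β : Type u} (h : Group.FG (FreeGroup β)) : Finite β := by
  classical
  obtain ⟨S, hS⟩ := Group.fg_def.1 h
  choose T hT hT2 using fun x : FreeGroup β => freeGroup_support x
  have hfin : (⋃ x ∈ S, T x).Finite := Set.Finite.biUnion S.finite_toSet fun x _ => hT x
  by_contra hinf
  have : Infinite β := not_finite_iff_infinite.1 hinf
  obtain ⟨b, hb⟩ := hfin.exists_notMem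
  let f : β → Multiplicative ℤ := fun c => if c = b then Multiplicative.ofAdd 1 else 1
  have h1 : FreeGroup.lift f = 1 := by
    apply MonoidHom.eq_of_eqOn_dense hS
    intro x hx
    refine hT2 x f fun c hc => ?_
    have : c ≠ b := by
      rintro rfl
      exact hb (Set.mem_biUnion hx hc)
    simp [f, this]
  have h2 := DFunLike.congr_fun h1 (FreeGroup.of b)
  simp [f] at h2

/-- the data of a free finite-index subgroup with right transversal -/
theorem exists_setup (G : Type u) [Group G] (hfg : Group.FG G) (hvf : VirtuallyFree G) :
    ∃ (β : Type u) (_ : Finite β) (ι : FreeGroup β →* G) (R : Set G), Function.Injective ι ∧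
      R.Finite ∧ (1 : G) ∈ R ∧ ∀ g : G, ∃! p : FreeGroup β × R, ι p.1 * (p.2 : G) = g := by
  obtain ⟨H, hfi, ⟨hfree⟩⟩ := hvf
  have : Group.FG H := inferInstance
  let e : FreeGroup (IsFreeGroup.Generators H) ≃* H := (IsFreeGroup.toFreeGroup H).symm
  have hfg' : Group.FG (FreeGroup (IsFreeGroup.Generators H)) :=
    Group.fg_of_surjective (f := (IsFreeGroup.toFreeGroup H).toMonoidHom)
      (IsFreeGroup.toFreeGroup H).surjective
  obtain ⟨R, hR, h1⟩ := Subgroup.exists_isComplement_right H 1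
  refine ⟨_, finite_of_freeGroup_fg hfg', H.subtype.comp e.toMonoidHom, R,
    H.subtype_injective.comp e.injective, ?_, h1, ?_⟩
  · exact hR.finite_right_iff.2 hfi
  · intro g
    obtain ⟨⟨a, b⟩, h, hu⟩ := Function.bijective_iff_existsUnique _ |>.1 hR g
    refine ⟨⟨e.symm a, b⟩, by simpa using h, ?_⟩
    rintro ⟨c, d⟩ hcd
    have := hu ⟨e c, d⟩ (by simpa using hcd)
    simp only [Prod.mk.injEq] at this ⊢
    rw [← this.1]
    simp [this.2]

theorem finite_presentation (G : Type u) [Group G] (hfg : Group.FG G) (hvf : VirtuallyFree G) :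
    ∃ (σ : Type u) (_ : Finite σ) (s : σ → G) (rel : Set (FreeGroup σ)),
      rel.Finite ∧ Subgroup.closure (Set.range s) = ⊤ ∧ (∀ r ∈ rel, FreeGroup.lift s r = 1) ∧
      ∀ x : σ → G, (∀ r ∈ rel, FreeGroup.lift x r = 1) → ∃ φ : G →* G, ∀ i, φ (s i) = x i := by
  obtain ⟨β, hβ, ι, R, hι, hRf, h1R, hdec⟩ := exists_setup G hfg hvf
  have : Finite R := hRf
  choose D hD hDu using hdec
  let s : β ⊕ R → G := Sum.elim (fun b => ι (FreeGroup.of b)) (fun r => (r : G))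
  have hsl : ∀ f : FreeGroup β, FreeGroup.lift s (FreeGroup.map Sum.inl f) = ι f := by
    intro f
    induction f using FreeGroup.induction_on with
    | of i => simp [s]
    | C1 => simp
    | mul x y hx hy => simp [hx, hy]
    | inv_of x hx => simp [s]
  let one' : R := ⟨1, h1R⟩
  let q : R × (β ⊕ R) → FreeGroup (β ⊕ R) := fun p =>
    FreeGroup.of (Sum.inr p.1) * FreeGroup.of p.2 *
      (FreeGroup.map Sum.inl (D (p.1 * s p.2)).1 * FreeGroup.of (Sum.inr (D (p.1 * s p.2)).2))⁻¹
  have hclo : Subgroup.closure (Set.range s) = ⊤ := by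
    rw [eq_top_iff]
    intro g _
    rw [← hD g]
    refine Subgroup.mul_mem _ ?_ (Subgroup.subset_closure ⟨Sum.inr (D g).2, rfl⟩)
    rw [← hsl]
    have := FreeGroup.range_lift_eq_closure (f := s)
    rw [← this]
    exact ⟨_, rfl⟩
  refine ⟨β ⊕ R, inferInstance, s, Set.range q ∪ {FreeGroup.of (Sum.inr one')},
    (Set.finite_range q).union (Set.finite_singleton _), hclo, ?_, ?_⟩
  · rintro r (⟨p, rfl⟩ | rfl)
    · simp only [q, map_mul, map_inv, hsl, FreeGroup.lift_apply_of]
      rw [mul_inv_eq_one]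
      exact (hD _).symm
    · simp [s, one']
  · intro x hx
    let φ : G → G := fun g => FreeGroup.lift (fun b => x (Sum.inl b)) (D g).1 * x (Sum.inr (D g).2)
    have hxl : ∀ f : FreeGroup β, FreeGroup.lift x (FreeGroup.map Sum.inl f) =
        FreeGroup.lift (fun b => x (Sum.inl b)) f := by
      intro f
      induction f using FreeGroup.induction_on with
      | of i => simp
      | C1 => simp
      | mul x y hx hy => simp [hx, hy]
      | inv_of x hx => simp
    have hD' : ∀ (f : FreeGroup β) (r : R), D (ι f * (r : G)) = (f, r) := fun f r => (hDu _ (f, r) rfl).symm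
    have h1 : φ 1 = 1 := by
      have : D 1 = (1, one') := by
        have := hD' 1 one'
        simpa [one'] using this
      have h2 := hx _ (Or.inr rfl)
      simp only [φ, this]
      simpa using h2
    have hmul : ∀ g c, φ (g * s c) = φ g * x c := by
      intro g c
      have h2 := hx _ (Or.inl ⟨((D g).2, c), rfl⟩)
      simp only [q, map_mul, map_inv, hxl, FreeGroup.lift_apply_of] at h2
      rw [mul_inv_eq_one] at h2
      have h3 : g * s c = ι ((D g).1 * (D ((D g).2 * s c)).1) * ((D ((D g).2 * s c)).2 : G) := by
        rw [map_mul, mul_assoc, hD, ← mul_assoc, hD]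
      have h4 : D (g * s c) = ((D g).1 * (D ((D g).2 * s c)).1, (D ((D g).2 * s c)).2) := by
        conv_lhs => rw [h3]
        exact hD' _ _
      simp only [φ, h4, map_mul, mul_assoc]
      rw [h2]
    have hφs : ∀ c, φ (s c) = x c := fun c => by
      have := hmul 1 c
      rwa [one_mul, h1, one_mul] at this
    have hmm : ∀ h g, φ (g * h) = φ g * φ h := by
      intro h
      have hh : h ∈ Subgroup.closure (Set.range s) := by rw [hclo]; trivial
      induction hh using Subgroup.closure_induction with
      | mem y hy =>
        obtain ⟨c, rfl⟩ := hy
        intro g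
        rw [hmul, hφs]
      | one => intro g; rw [mul_one, h1, mul_one]
      | mul y z _ _ hy hz =>
        intro g
        rw [← mul_assoc, hz, hy, hz y, mul_assoc]
      | inv y _ hy =>
        have e1 : φ y⁻¹ = (φ y)⁻¹ := by
          have := hy y⁻¹
          rw [inv_mul_cancel, h1] at this
          exact eq_inv_of_mul_eq_one_left this.symm
        intro g
        have := hy (g * y⁻¹)
        rw [inv_mul_cancel_right] at this
        rw [this, e1, mul_inv_cancel_right]
    exact ⟨⟨⟨φ, h1⟩, fun g h => hmm h g⟩, hφs⟩

end PrimeProof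

namespace PrimeProof
universe u v w

section Cuts
variable {V : Type u}

/-- the set of edges with exactly one end in `C` -/
def bd (Eg : Set (V × V)) (C : Set V) : Set (V × V) := {e | e ∈ Eg ∧ ¬ (e.1 ∈ C ↔ e.2 ∈ C)}

/-- connectedness of a vertex set -/
def Conn (Eg : Set (V × V)) (C : Set V) : Prop :=
  ∀ A ⊆ C, A.Nonempty → (C \ A).Nonempty →
    ∃ e ∈ Eg, (e.1 ∈ A ∧ e.2 ∈ C \ A) ∨ (e.2 ∈ A ∧ e.1 ∈ C \ A)

/-- two subsets are nested -/
def Nested (A B : Set V) : Prop := A ⊆ B ∨ A ⊆ Bᶜ ∨ Aᶜ ⊆ B ∨ Aᶜ ⊆ Bᶜ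

theorem cc {α : Type*} (A : Set α) : Aᶜᶜ = A := compl_compl A

theorem bd_compl (Eg : Set (V × V)) (C : Set V) : bd Eg Cᶜ = bd Eg C := by
  ext e; simp [bd, not_iff_not]

theorem Nested.symm {A B : Set V} (h : Nested A B) : Nested B A := by
  rcases h with h | h | h | h
  · exact Or.inr (Or.inr (Or.inr (Set.compl_subset_compl.2 h)))
  · exact Or.inr (Or.inl (Set.subset_compl_comm.1 h))
  · exact Or.inr (Or.inr (Or.inl (Set.compl_subset_comm.1 h)))
  · exact Or.inl (Set.compl_subset_compl.1 h)

theorem Nested.compl {A B : Set V} (h : Nested A B) : Nested Aᶜ B := by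
  have e : Aᶜᶜ = A := compl_compl A
  unfold Nested at *
  rw [e]
  tauto

theorem nested_compl_left {A B : Set V} : Nested Aᶜ B ↔ Nested A B :=
  ⟨fun h => by simpa using h.compl, Nested.compl⟩

theorem nested_compl_right {A B : Set V} : Nested A Bᶜ ↔ Nested A B :=
  ⟨fun h => (nested_compl_left.1 h.symm).symm, fun h => h.symm.compl.symm⟩

theorem nested_comm {A B : Set V} : Nested A B ↔ Nested B A := ⟨Nested.symm, Nested.symm⟩

theorem exists_bd {Eg : Set (V × V)} (hc : Conn Eg Set.univ) {C : Set V} (h1 : C.Nonempty)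
    (h2 : Cᶜ.Nonempty) : (bd Eg C).Nonempty := by
  obtain ⟨e, he, h⟩ := hc C (Set.subset_univ _) h1 (by rwa [← Set.compl_eq_univ_sdiff])
  refine ⟨e, he, ?_⟩
  simp only [Set.mem_sdiff, Set.mem_univ, true_and] at h
  tauto

/-- the tight cuts separating `a` and `b` -/
def sepSet (Eg : Set (V × V)) (k : ℕ) (a b : V) : Set (Set V) :=
  {C | Conn Eg C ∧ Conn Eg Cᶜ ∧ (bd Eg C).Finite ∧ (bd Eg C).ncard ≤ k ∧ a ∈ C ∧ b ∉ C}

theorem sepSet_finite (k : ℕ) : ∀ (Eg : Set (V × V)), Conn Eg Set.univ → ∀ a b : V,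
    (sepSet Eg k a b).Finite := by
  induction k with
  | zero =>
    intro Eg hc a b
    convert Set.finite_empty
    ext C
    simp only [sepSet, Set.mem_ofPred_eq, Set.mem_empty_iff_false, iff_false]
    rintro ⟨h1, h2, h3, h4, h5, h6⟩
    have := exists_bd hc ⟨a, h5⟩ ⟨b, h6⟩
    rw [← Set.ncard_pos h3] at this
    omega
  | succ k ih =>
    intro Eg hc
    have edge : ∀ a b, ((a, b) ∈ Eg ∨ (b, a) ∈ Eg) → (sepSet Eg (k+1) a b).Finite := by
      intro a b hab
      obtain ⟨e, heE, he⟩ : ∃ e ∈ Eg, (e = (a, b) ∨ e = (b, a)) := by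
        rcases hab with h | h
        · exact ⟨_, h, Or.inl rfl⟩
        · exact ⟨_, h, Or.inr rfl⟩
      have hcross : ∀ C : Set V, a ∈ C → b ∉ C → ¬ (e.1 ∈ C ↔ e.2 ∈ C) := by
        rintro C ha hb
        rcases he with rfl | rfl <;> simp [ha, hb]
      by_cases hc' : Conn (Eg \ {e}) Set.univ
      · refine (ih _ hc' a b).subset ?_
        rintro C ⟨h1, h2, h3, h4, h5, h6⟩
        have hC := hcross C h5 h6
        have hb : bd (Eg \ {e}) C = bd Eg C \ {e} := by
          ext f; simp only [bd, Set.mem_sdiff, Set.mem_ofPred_eq]; tauto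
        have sub : ∀ B : Set V, ¬ (e.1 ∈ B ∧ e.2 ∈ B) → Conn Eg B → Conn (Eg \ {e}) B := by
          intro B hB hcB A hA hA1 hA2
          obtain ⟨f, hf, h⟩ := hcB A hA hA1 hA2
          refine ⟨f, ⟨hf, ?_⟩, h⟩
          rintro rfl
          rcases h with h | h
          · exact hB ⟨hA h.1, h.2.1⟩
          · exact hB ⟨h.2.1, hA h.1⟩
        refine ⟨sub _ (by tauto) h1, sub _ (by simp only [Set.mem_compl_iff]; tauto) h2, ?_, ?_,
          h5, h6⟩
        · rw [hb]; exact h3.subset Set.sdiff_subset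
        · rw [hb]
          have hmem : e ∈ bd Eg C := ⟨heE, hC⟩
          rw [Set.ncard_sdiff_singleton_of_mem hmem]
          omega
      · unfold Conn at hc'
        push Not at hc'
        obtain ⟨A, -, hA1, hA2, hA3⟩ := hc'
        refine (Set.toFinite {A, Aᶜ}).subset ?_
        rintro C ⟨h1, h2, h3, h4, h5, h6⟩
        have hC := hcross C h5 h6
        have key : ∀ B : Set V, ¬ (e.1 ∈ B ∧ e.2 ∈ B) → Conn Eg B → B ⊆ A ∨ B ⊆ Aᶜ := by
          intro B hB hcB
          by_contra hcon
          push Not at hcon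
          obtain ⟨h7, h8⟩ := hcon
          rw [Set.not_subset] at h7 h8
          obtain ⟨x, hx, hxA⟩ := h7
          obtain ⟨y, hy, hyA⟩ := h8
          obtain ⟨f, hf, h⟩ := hcB (B ∩ A) Set.inter_subset_left ⟨y, hy, by simpa using hyA⟩
            ⟨x, hx, by simp [hxA]⟩
          have hfe : f ≠ e := by
            rintro rfl
            rcases h with h | h
            · exact hB ⟨h.1.1, h.2.1⟩
            · exact hB ⟨h.2.1, h.1.1⟩
          have := hA3 f ⟨hf, hfe⟩
          simp only [Set.mem_sdiff, Set.mem_univ, true_and, Set.mem_inter_iff] at this h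
          tauto
        have k1 := key C (by tauto) h1
        have k2 := key Cᶜ (by simp only [Set.mem_compl_iff]; tauto) h2
        have nC : a ∈ C := h5
        have nC' : b ∈ Cᶜ := h6
        simp only [Set.mem_insert_iff, Set.mem_singleton_iff]
        rcases k1 with k1 | k1 <;> rcases k2 with k2 | k2
        · obtain ⟨z, -, hz⟩ := hA2
          exact absurd (by by_cases hzC : z ∈ C; exacts [k1 hzC, k2 hzC]) hz
        · left; exact k1.antisymm (Set.compl_subset_compl.1 k2)
        · right; exact k1.antisymm (Set.compl_subset_comm.1 k2)
        · obtain ⟨z, hz⟩ := hA1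
          exact absurd hz (by by_cases hzC : z ∈ C; exacts [k1 hzC, k2 hzC])
    intro a b
    by_contra hb
    obtain ⟨e, he, h⟩ := hc {c | (sepSet Eg (k+1) a c).Finite} (Set.subset_univ _)
      ⟨a, by
        have : sepSet Eg (k+1) a a = ∅ := by
          ext C; simp only [sepSet, Set.mem_ofPred_eq, Set.mem_empty_iff_false, iff_false]; tauto
        simp [this]⟩
      ⟨b, by simpa using hb⟩
    have tri : ∀ c d, ((c, d) ∈ Eg ∨ (d, c) ∈ Eg) → (sepSet Eg (k+1) a c).Finite →
        (sepSet Eg (k+1) a d).Finite := by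
      intro c d hcd h1
      refine (h1.union (edge c d hcd)).subset ?_
      rintro C ⟨h1, h2, h3, h4, h5, h6⟩
      by_cases hcC : c ∈ C
      · exact Or.inr ⟨h1, h2, h3, h4, hcC, h6⟩
      · exact Or.inl ⟨h1, h2, h3, h4, h5, hcC⟩
    rcases h with h | h
    · exact h.2.2 (tri _ _ (Or.inl he) h.1)
    · exact h.2.2 (tri _ _ (Or.inr he) h.1)

theorem bd_submod (Eg : Set (V × V)) {C D : Set V} (hC : (bd Eg C).Finite) (hD : (bd Eg D).Finite) :
    (bd Eg (C ∩ D)).Finite ∧ (bd Eg (Cᶜ ∩ Dᶜ)).Finite ∧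
    (bd Eg (C ∩ D)).ncard + (bd Eg (Cᶜ ∩ Dᶜ)).ncard ≤ (bd Eg C).ncard + (bd Eg D).ncard := by
  have s1 : bd Eg (C ∩ D) ∪ bd Eg (Cᶜ ∩ Dᶜ) ⊆ bd Eg C ∪ bd Eg D := by
    intro e
    simp only [bd, Set.mem_union, Set.mem_ofPred_eq, Set.mem_inter_iff, Set.mem_compl_iff]
    tauto
  have s2 : bd Eg (C ∩ D) ∩ bd Eg (Cᶜ ∩ Dᶜ) ⊆ bd Eg C ∩ bd Eg D := by
    intro e
    simp only [bd, Set.mem_ofPred_eq, Set.mem_inter_iff, Set.mem_compl_iff]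
    tauto
  have f := (hC.union hD).subset s1
  have f1 := f.subset Set.subset_union_left
  have f2 := f.subset Set.subset_union_right
  refine ⟨f1, f2, ?_⟩
  rw [← Set.ncard_union_add_ncard_inter _ _ f1 f2, ← Set.ncard_union_add_ncard_inter _ _ hC hD]
  exact add_le_add (Set.ncard_le_ncard s1 (hC.union hD)) (Set.ncard_le_ncard s2 (hC.inter_of_left _))

/-- an end: a consistent choice of side for every cut -/
structure IsEnd (Eg : Set (V × V)) (p : Set V → Prop) : Prop where
  compl : ∀ A, (bd Eg A).Finite → (p Aᶜ ↔ ¬ p A)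
  inter : ∀ A B, (bd Eg A).Finite → (bd Eg B).Finite → (p (A ∩ B) ↔ p A ∧ p B)

abbrev Pair (V : Type u) := (Set V → Prop) × (Set V → Prop)

def Splits (w : Pair V) (C : Set V) : Prop := ¬ (w.1 C ↔ w.2 C)

def IsMinCut (Eg : Set (V × V)) (w : Pair V) (C : Set V) : Prop :=
  (bd Eg C).Finite ∧ Splits w C ∧
    ∀ D, (bd Eg D).Finite → Splits w D → (bd Eg C).ncard ≤ (bd Eg D).ncard

def AllMin (Eg : Set (V × V)) (Om : Set (Pair V)) : Set (Set V) := {C | ∃ w ∈ Om, IsMinCut Eg w C}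

def Crossers (Eg : Set (V × V)) (Om : Set (Pair V)) (C : Set V) : Set (Set V) :=
  {X | X ∈ AllMin Eg Om ∧ ¬ Nested X C}

def IsOpt (Eg : Set (V × V)) (Om : Set (Pair V)) (w : Pair V) (C : Set V) : Prop :=
  IsMinCut Eg w C ∧ ∀ D, IsMinCut Eg w D → (Crossers Eg Om C).ncard ≤ (Crossers Eg Om D).ncard

def OptSet (Eg : Set (V × V)) (Om : Set (Pair V)) : Set (Set V) := {C | ∃ w ∈ Om, IsOpt Eg Om w C}

structure Good (Eg : Set (V × V)) (Om : Set (Pair V)) (k : ℕ) : Prop where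
  conn : Conn Eg Set.univ
  isEnd : ∀ w ∈ Om, IsEnd Eg w.1 ∧ IsEnd Eg w.2
  cut : ∀ w ∈ Om, ∃ C, (bd Eg C).Finite ∧ Splits w C ∧ (bd Eg C).ncard ≤ k

variable {Eg : Set (V × V)} {Om : Set (Pair V)} {k : ℕ}

theorem Good.splits_compl (hg : Good Eg Om k) {w : Pair V} (hw : w ∈ Om) {C : Set V}
    (hC : (bd Eg C).Finite) : Splits w Cᶜ ↔ Splits w C := by
  unfold Splits
  rw [(hg.isEnd w hw).1.compl C hC, (hg.isEnd w hw).2.compl C hC]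
  tauto

theorem Good.isMinCut_compl (hg : Good Eg Om k) {w : Pair V} (hw : w ∈ Om) {C : Set V}
    (hC : IsMinCut Eg w C) : IsMinCut Eg w Cᶜ := by
  refine ⟨by rw [bd_compl]; exact hC.1, (hg.splits_compl hw hC.1).2 hC.2.1, ?_⟩
  rw [bd_compl]; exact hC.2.2

theorem crossers_compl (C : Set V) : Crossers Eg Om Cᶜ = Crossers Eg Om C := by
  ext X; simp [Crossers, nested_compl_right]

theorem Good.isOpt_compl (hg : Good Eg Om k) {w : Pair V} (hw : w ∈ Om) {C : Set V}
    (hC : IsOpt Eg Om w C) : IsOpt Eg Om w Cᶜ :=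
  ⟨hg.isMinCut_compl hw hC.1, by rw [crossers_compl]; exact hC.2⟩

theorem IsEnd.not_empty {p : Set V → Prop} (h : IsEnd Eg p) : ¬ p ∅ := by
  have he : (bd Eg ∅).Finite := by simp [bd]
  have h1 := h.compl ∅ he
  have h2 := h.inter ∅ ∅ᶜ he (by rw [bd_compl]; exact he)
  rw [Set.empty_inter] at h2
  tauto

theorem Good.splits_nonempty (hg : Good Eg Om k) {w : Pair V} (hw : w ∈ Om) {C : Set V}
    (hs : Splits w C) : C.Nonempty := by
  rw [Set.nonempty_iff_ne_empty]
  rintro rfl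
  have h1 := (hg.isEnd w hw).1.not_empty
  have h2 := (hg.isEnd w hw).2.not_empty
  unfold Splits at hs
  tauto

theorem Good.minCut_ncard_le (hg : Good Eg Om k) {w : Pair V} (hw : w ∈ Om) {C : Set V}
    (hC : IsMinCut Eg w C) : (bd Eg C).ncard ≤ k := by
  obtain ⟨D, h1, h2, h3⟩ := hg.cut w hw
  exact (hC.2.2 D h1 h2).trans h3

theorem Good.minCut_conn (hg : Good Eg Om k) {w : Pair V} (hw : w ∈ Om) {C : Set V}
    (hC : IsMinCut Eg w C) : Conn Eg C := by
  intro A hAC hA hCA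
  by_contra hcon
  push Not at hcon
  have hCc : (Cᶜ).Nonempty := hg.splits_nonempty hw (hg.isMinCut_compl hw hC).2.1
  have hun : bd Eg A ∪ bd Eg (C \ A) ⊆ bd Eg C := by
    rintro e (⟨he, h⟩ | ⟨he, h⟩) <;> refine ⟨he, ?_⟩ <;> have h3 := hcon e he <;>
      have h1 := @hAC e.1 <;> have h2 := @hAC e.2 <;>
      simp only [Set.mem_sdiff] at * <;> tauto
  have hdisj : Disjoint (bd Eg A) (bd Eg (C \ A)) := by
    rw [Set.disjoint_left]
    rintro e ⟨he, h⟩ ⟨-, h'⟩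
    have h3 := hcon e he
    have h1 := @hAC e.1
    have h2 := @hAC e.2
    simp only [Set.mem_sdiff] at *
    tauto
  have fA : (bd Eg A).Finite := hC.1.subset (Set.subset_union_left.trans hun)
  have fB : (bd Eg (C \ A)).Finite := hC.1.subset (Set.subset_union_right.trans hun)
  have hcard : (bd Eg A).ncard + (bd Eg (C \ A)).ncard ≤ (bd Eg C).ncard := by
    rw [← Set.ncard_union_eq hdisj fA fB]
    exact Set.ncard_le_ncard hun hC.1
  have pA : 0 < (bd Eg A).ncard := (Set.ncard_pos fA).2 (exists_bd hg.conn hA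
    (hCc.mono (Set.compl_subset_compl.2 hAC)))
  have pB : 0 < (bd Eg (C \ A)).ncard := (Set.ncard_pos fB).2 (exists_bd hg.conn hCA
    (hCc.mono (Set.compl_subset_compl.2 Set.sdiff_subset)))
  have hs : Splits w A ∨ Splits w (C \ A) := by
    obtain ⟨i1, i2⟩ := hg.isEnd w hw
    have fAc : (bd Eg Aᶜ).Finite := by rw [bd_compl]; exact fA
    have a1 := i1.inter A C fA hC.1
    have a2 := i2.inter A C fA hC.1
    have b1 := i1.inter C Aᶜ hC.1 fAc
    have b2 := i2.inter C Aᶜ hC.1 fAc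
    rw [i1.compl A fA] at b1
    rw [i2.compl A fA] at b2
    rw [Set.inter_eq_self_of_subset_left hAC] at a1 a2
    rw [← Set.sdiff_eq] at b1 b2
    have h := hC.2.1
    unfold Splits at *
    tauto
  rcases hs with hs | hs
  · have := hC.2.2 _ fA hs; omega
  · have := hC.2.2 _ fB hs; omega

theorem Good.crossers_finite (hg : Good Eg Om k) {C : Set V} (hC : (bd Eg C).Finite) :
    (Crossers Eg Om C).Finite := by
  have hB : (Prod.fst '' bd Eg C ∪ Prod.snd '' bd Eg C).Finite := (hC.image _).union (hC.image _)
  set B := Prod.fst '' bd Eg C ∪ Prod.snd '' bd Eg C with hBdef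
  refine (Set.Finite.biUnion hB fun a _ => Set.Finite.biUnion hB fun b _ =>
    sepSet_finite k Eg hg.conn a b).subset ?_
  rintro X ⟨⟨w, hw, hX⟩, hn⟩
  have c1 := hg.minCut_conn hw hX
  have c2 := hg.minCut_conn hw (hg.isMinCut_compl hw hX)
  have key : ∀ Y : Set V, Conn Eg Y → B ∩ Y = ∅ → Nested Y C := by
    intro Y hY hBY
    by_contra hcon
    have h1 : ¬ Y ⊆ C := fun h => hcon (Or.inl h)
    have h2 : ¬ Y ⊆ Cᶜ := fun h => hcon (Or.inr (Or.inl h))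
    rw [Set.not_subset] at h1 h2
    obtain ⟨x, hx, hxC⟩ := h1
    obtain ⟨y, hy, hyC⟩ := h2
    obtain ⟨e, he, h⟩ := hY (Y ∩ C) Set.inter_subset_left ⟨y, hy, by simpa using hyC⟩
      ⟨x, hx, by simp [hxC]⟩
    have heb : e ∈ bd Eg C := by
      refine ⟨he, ?_⟩
      simp only [Set.mem_sdiff, Set.mem_inter_iff] at h
      tauto
    have : e.1 ∈ B ∩ Y := by
      refine ⟨Or.inl ⟨e, heb, rfl⟩, ?_⟩
      rcases h with h | h
      · exact h.1.1
      · exact h.2.1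
    rw [hBY] at this
    exact this
  have h1 : (B ∩ X).Nonempty := by
    rw [Set.nonempty_iff_ne_empty]; exact fun h => hn (key X c1 h)
  have h2 : (B ∩ Xᶜ).Nonempty := by
    rw [Set.nonempty_iff_ne_empty]; exact fun h => hn (nested_compl_left.1 (key Xᶜ c2 h))
  obtain ⟨a, haB, haX⟩ := h1
  obtain ⟨b, hbB, hbX⟩ := h2
  simp only [Set.mem_iUnion]
  exact ⟨a, haB, b, hbB, c1, c2, hX.1, hg.minCut_ncard_le hw hX, haX, hbX⟩

theorem nested_corner {X C D : Set V} (hn : ¬ Nested C D) (h1 : Nested X C) (h2 : Nested X D) : Nested X (C ∩ D) := by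
  unfold Nested at *
  simp only [Set.subset_def, Set.mem_compl_iff, Set.mem_inter_iff] at *
  grind

theorem nested_corner_or {X C D : Set V} (h1 : Nested X C) :
    Nested X (C ∩ D) ∨ Nested X (Cᶜ ∩ Dᶜ) := by
  unfold Nested at *
  simp only [Set.subset_def, Set.mem_compl_iff, Set.mem_inter_iff] at *
  grind

theorem Good.corner_lt (hg : Good Eg Om k) {C D : Set V} (hC : C ∈ AllMin Eg Om)
    (hD : D ∈ AllMin Eg Om) (hn : ¬ Nested C D) :
    (Crossers Eg Om (C ∩ D)).ncard + (Crossers Eg Om (Cᶜ ∩ Dᶜ)).ncard <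
      (Crossers Eg Om C).ncard + (Crossers Eg Om D).ncard := by
  have fC : (Crossers Eg Om C).Finite := by
    obtain ⟨w, hw, h⟩ := hC; exact hg.crossers_finite h.1
  have fD : (Crossers Eg Om D).Finite := by
    obtain ⟨w, hw, h⟩ := hD; exact hg.crossers_finite h.1
  have s1 : Crossers Eg Om (C ∩ D) ∪ Crossers Eg Om (Cᶜ ∩ Dᶜ) ⊆
      (Crossers Eg Om C ∪ Crossers Eg Om D) \ {C} := by
    rintro X hX
    refine ⟨?_, ?_⟩
    · rcases hX with ⟨hX, h⟩ | ⟨hX, h⟩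
      · by_contra hcon
        simp only [Crossers, Set.mem_union, Set.mem_ofPred_eq, hX, true_and, not_or, not_not] at hcon
        exact h (nested_corner hn hcon.1 hcon.2)
      · by_contra hcon
        simp only [Crossers, Set.mem_union, Set.mem_ofPred_eq, hX, true_and, not_or, not_not] at hcon
        exact h (nested_corner
          (fun hc => hn (nested_compl_left.1 (nested_compl_right.1 hc)))
          (nested_compl_right.2 hcon.1) (nested_compl_right.2 hcon.2))
    · rintro rfl
      rcases hX with ⟨hX, h⟩ | ⟨hX, h⟩
      · exact h (Or.inr (Or.inr (Or.inr (Set.compl_subset_compl.2 Set.inter_subset_left))))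
      · exact h (Or.inr (Or.inl (Set.subset_compl_comm.1 Set.inter_subset_left)))
  have s2 : Crossers Eg Om (C ∩ D) ∩ Crossers Eg Om (Cᶜ ∩ Dᶜ) ⊆
      Crossers Eg Om C ∩ Crossers Eg Om D := by
    rintro X ⟨⟨hX, h⟩, ⟨-, h'⟩⟩
    refine ⟨⟨hX, fun hc => ?_⟩, ⟨hX, fun hc => ?_⟩⟩
    · rcases nested_corner_or (D := D) hc with h1 | h1
      · exact h h1
      · exact h' h1
    · rcases nested_corner_or (D := C) hc with h1 | h1
      · exact h (by rwa [Set.inter_comm])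
      · exact h' (by rwa [Set.inter_comm])
  have f := ((fC.union fD).subset Set.sdiff_subset).subset s1
  rw [← Set.ncard_union_add_ncard_inter _ _ (f.subset Set.subset_union_left)
    (f.subset Set.subset_union_right), ← Set.ncard_union_add_ncard_inter _ _ fC fD]
  have hmem : C ∈ Crossers Eg Om C ∪ Crossers Eg Om D := Or.inr ⟨hC, hn⟩
  have l1 := Set.ncard_le_ncard s1 ((fC.union fD).subset Set.sdiff_subset)
  have l2 := Set.ncard_le_ncard s2 (fC.inter_of_left _)
  have l3 := Set.ncard_sdiff_singleton_lt_of_mem hmem (fC.union fD)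
  omega

/-- the case where the corners `C ∩ D` and `Cᶜ ∩ Dᶜ` split the pairs crosswise -/
theorem Good.nested_aux (hg : Good Eg Om k) {a b : Pair V} (ha : a ∈ Om) (hb : b ∈ Om)
    {C D : Set V} (hC : IsOpt Eg Om a C) (hD : IsOpt Eg Om b D)
    (h : (Splits a (C ∩ D) ∧ Splits b (Cᶜ ∩ Dᶜ)) ∨ (Splits b (C ∩ D) ∧ Splits a (Cᶜ ∩ Dᶜ)) ∨
      (Splits a (C ∩ D) ∧ Splits a (Cᶜ ∩ Dᶜ) ∧ Splits a D ∧ Splits b C)) :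
    Nested C D := by
  by_contra hn
  have lt := hg.corner_lt ⟨a, ha, hC.1⟩ ⟨b, hb, hD.1⟩ hn
  obtain ⟨f1, f2, hsub⟩ := bd_submod Eg hC.1.1 hD.1.1
  rcases h with ⟨h1, h2⟩ | ⟨h1, h2⟩ | ⟨h1, h2, h3, h4⟩
  · have l1 := hC.1.2.2 _ f1 h1
    have l2 := hD.1.2.2 _ f2 h2
    have m1 : IsMinCut Eg a (C ∩ D) := ⟨f1, h1, fun X hX hs => by
      have := hC.1.2.2 X hX hs; omega⟩
    have m2 : IsMinCut Eg b (Cᶜ ∩ Dᶜ) := ⟨f2, h2, fun X hX hs => by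
      have := hD.1.2.2 X hX hs; omega⟩
    have := hC.2 _ m1
    have := hD.2 _ m2
    omega
  · have l1 := hD.1.2.2 _ f1 h1
    have l2 := hC.1.2.2 _ f2 h2
    have m1 : IsMinCut Eg b (C ∩ D) := ⟨f1, h1, fun X hX hs => by
      have := hD.1.2.2 X hX hs; omega⟩
    have m2 : IsMinCut Eg a (Cᶜ ∩ Dᶜ) := ⟨f2, h2, fun X hX hs => by
      have := hC.1.2.2 X hX hs; omega⟩
    have := hD.2 _ m1
    have := hC.2 _ m2
    omega
  · have l1 := hC.1.2.2 _ f1 h1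
    have l2 := hC.1.2.2 _ f2 h2
    have l3 := hC.1.2.2 _ hD.1.1 h3
    have l4 := hD.1.2.2 _ hC.1.1 h4
    have m1 : IsMinCut Eg a (C ∩ D) := ⟨f1, h1, fun X hX hs => by
      have := hC.1.2.2 X hX hs; omega⟩
    have m2 : IsMinCut Eg a (Cᶜ ∩ Dᶜ) := ⟨f2, h2, fun X hX hs => by
      have := hC.1.2.2 X hX hs; omega⟩
    have m3 : IsMinCut Eg b C := ⟨hC.1.1, h4, fun X hX hs => by
      have := hD.1.2.2 X hX hs; omega⟩
    have := hC.2 _ m1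
    have := hC.2 _ m2
    have := hD.2 _ m3
    omega

theorem Good.nested_opt (hg : Good Eg Om k) {a b : Pair V} (ha : a ∈ Om) (hb : b ∈ Om)
    {C D : Set V} (hC : IsOpt Eg Om a C) (hD : IsOpt Eg Om b D) : Nested C D := by
  obtain ⟨i1, i2⟩ := hg.isEnd a ha
  obtain ⟨j1, j2⟩ := hg.isEnd b hb
  have fC := hC.1.1
  have fD := hD.1.1
  have fC' : (bd Eg Cᶜ).Finite := by rw [bd_compl]; exact fC
  have fD' : (bd Eg Dᶜ).Finite := by rw [bd_compl]; exact fD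
  have hsC := hC.1.2.1
  have hsD := hD.1.2.1
  have corner : ∀ {w : Pair V}, w ∈ Om →
     (w.1 (C ∩ D) ↔ w.1 C ∧ w.1 D) ∧ (w.1 (C ∩ Dᶜ) ↔ w.1 C ∧ ¬ w.1 D) ∧
     (w.1 (Cᶜ ∩ D) ↔ ¬ w.1 C ∧ w.1 D) ∧ (w.1 (Cᶜ ∩ Dᶜ) ↔ ¬ w.1 C ∧ ¬ w.1 D) ∧
     (w.2 (C ∩ D) ↔ w.2 C ∧ w.2 D) ∧ (w.2 (C ∩ Dᶜ) ↔ w.2 C ∧ ¬ w.2 D) ∧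
     (w.2 (Cᶜ ∩ D) ↔ ¬ w.2 C ∧ w.2 D) ∧ (w.2 (Cᶜ ∩ Dᶜ) ↔ ¬ w.2 C ∧ ¬ w.2 D) := by
    intro w hw
    obtain ⟨i1, i2⟩ := hg.isEnd w hw
    rw [i1.inter C D fC fD, i1.inter C Dᶜ fC fD', i1.inter Cᶜ D fC' fD, i1.inter Cᶜ Dᶜ fC' fD',
      i2.inter C D fC fD, i2.inter C Dᶜ fC fD', i2.inter Cᶜ D fC' fD, i2.inter Cᶜ Dᶜ fC' fD',
      i1.compl C fC, i1.compl D fD, i2.compl C fC, i2.compl D fD]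
    tauto
  obtain ⟨p1, p2, p3, p4, p5, p6, p7, p8⟩ := corner ha
  obtain ⟨q1, q2, q3, q4, q5, q6, q7, q8⟩ := corner hb
  have hC' := hg.isOpt_compl ha hC
  have hD' := hg.isOpt_compl hb hD
  have big :
    ((Splits a (C ∩ D) ∧ Splits b (Cᶜ ∩ Dᶜ)) ∨ (Splits b (C ∩ D) ∧ Splits a (Cᶜ ∩ Dᶜ)) ∨
      (Splits a (C ∩ D) ∧ Splits a (Cᶜ ∩ Dᶜ) ∧ Splits a D ∧ Splits b C)) ∨
    ((Splits a (C ∩ Dᶜ) ∧ Splits b (Cᶜ ∩ D)) ∨ (Splits b (C ∩ Dᶜ) ∧ Splits a (Cᶜ ∩ D)) ∨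
      (Splits a (C ∩ Dᶜ) ∧ Splits a (Cᶜ ∩ D) ∧ Splits a D ∧ Splits b C)) := by
    unfold Splits at *
    simp only [p1, p2, p3, p4, p5, p6, p7, p8, q1, q2, q3, q4, q5, q6, q7, q8]
    clear p1 p2 p3 p4 p5 p6 p7 p8 q1 q2 q3 q4 q5 q6 q7 q8 corner
    by_cases a1 : a.1 C <;> by_cases a2 : a.2 C <;> by_cases a3 : a.1 D <;> by_cases a4 : a.2 D <;>
    by_cases b1 : b.1 C <;> by_cases b2 : b.2 C <;> by_cases b3 : b.1 D <;> by_cases b4 : b.2 D <;>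
    simp_all
  rcases big with h | h
  · exact hg.nested_aux ha hb hC hD h
  · refine nested_compl_right.1 (hg.nested_aux ha hb hC hD' ?_)
    rw [cc, hg.splits_compl ha fD]
    exact h

theorem Good.exists_opt (hg : Good Eg Om k) {w : Pair V} (hw : w ∈ Om) : ∃ C, IsOpt Eg Om w C := by
  obtain ⟨C0, h1, h2, -⟩ := hg.cut w hw
  obtain ⟨C, hC⟩ : ∃ C, IsMinCut Eg w C := by
    obtain ⟨C, ⟨hC1, hC2⟩, hC3⟩ := exists_minimalFor_of_wellFoundedLT
      (fun C => (bd Eg C).Finite ∧ Splits w C) (fun C => (bd Eg C).ncard) ⟨C0, h1, h2⟩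
    refine ⟨C, hC1, hC2, fun D h3 h4 => ?_⟩
    by_contra hlt
    exact hlt (hC3 ⟨h3, h4⟩ (not_le.1 hlt).le)
  obtain ⟨D, hD1, hD3⟩ := exists_minimalFor_of_wellFoundedLT
      (fun C => IsMinCut Eg w C) (fun C => (Crossers Eg Om C).ncard) ⟨C, hC⟩
  refine ⟨D, hD1, fun X hX => ?_⟩
  by_contra hlt
  exact hlt (hD3 hX (not_le.1 hlt).le)

theorem Good.opt_sep_finite (hg : Good Eg Om k) (x y : V) :
    {C | C ∈ OptSet Eg Om ∧ x ∈ C ∧ y ∉ C}.Finite := by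
  refine (sepSet_finite k Eg hg.conn x y).subset ?_
  rintro C ⟨⟨w, hw, hC⟩, h1, h2⟩
  exact ⟨hg.minCut_conn hw hC.1, hg.minCut_conn hw (hg.isMinCut_compl hw hC.1), hC.1.1,
    hg.minCut_ncard_le hw hC.1, h1, h2⟩

end Cuts
end PrimeProof

namespace PrimeProof
universe u v w
open scoped Pointwise

section FreeCuts
variable {β : Type u} [DecidableEq β]

/-- the inverse of `f` ends with the letter `a` -/
def PL (a : β × Bool) (f : FreeGroup β) : Prop := (f⁻¹).toWord.getLast? = some a

theorem short_finite [Finite β] : {f : FreeGroup β | (f⁻¹).toWord.length ≤ 1}.Finite := by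
  have h : (Set.range (fun o : Option (β × Bool) => (FreeGroup.mk o.toList)⁻¹)).Finite :=
    Set.finite_range _
  refine h.subset ?_
  intro f hf
  have hf : (f⁻¹).toWord.length ≤ 1 := hf
  rcases hL : (f⁻¹).toWord with _ | ⟨x, _ | ⟨y, l⟩⟩
  · refine ⟨none, ?_⟩
    have := FreeGroup.mk_toWord (x := f⁻¹)
    rw [hL] at this
    simp only [Option.toList_none, this, inv_inv]
  · refine ⟨some x, ?_⟩
    have := FreeGroup.mk_toWord (x := f⁻¹)
    rw [hL] at this
    simp only [Option.toList_some, this, inv_inv]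
  · rw [hL] at hf; simp at hf

theorem PL_finite_of [Finite β] (a : β × Bool) (b : β) :
    {f : FreeGroup β | ¬ (PL a f ↔ PL a (f * FreeGroup.of b))}.Finite := by
  refine short_finite.subset ?_
  intro f hf
  by_contra hlen
  have hlen : ¬ (f⁻¹).toWord.length ≤ 1 := hlen
  apply hf
  unfold PL
  have e : ((f * FreeGroup.of b)⁻¹).toWord = FreeGroup.reduce ((b, false) :: (f⁻¹).toWord) := by
    rw [mul_inv_rev, FreeGroup.toWord_mul, FreeGroup.toWord_inv, FreeGroup.toWord_of]
    rfl
  rw [e, FreeGroup.reduce.cons, FreeGroup.reduce_toWord]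
  rcases hL : (f⁻¹).toWord with _ | ⟨x, _ | ⟨y, l⟩⟩
  · simp [hL] at hlen
  · simp [hL] at hlen
  · simp only
    split_ifs
    · simp [List.getLast?_cons_cons]
    · simp [List.getLast?_cons_cons]

theorem transl_finite {F : Type v} [Group F] (P : F → Prop) (S : Set F)
    (hS : ∀ s ∈ S, {f : F | ¬ (P f ↔ P (f * s))}.Finite) (c : F) (hc : c ∈ Subgroup.closure S) :
    {f : F | ¬ (P f ↔ P (f * c))}.Finite := by
  induction hc using Subgroup.closure_induction with
  | mem x hx => exact hS x hx
  | one => simp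
  | mul x y _ _ hx hy =>
    refine (hx.union (hy.image fun f => f * x⁻¹)).subset ?_
    intro f hf
    by_cases h : P f ↔ P (f * x)
    · right
      refine ⟨f * x, ?_, by simp⟩
      simp only [Set.mem_ofPred_eq] at hf ⊢
      rw [mul_assoc]
      tauto
    · left; exact h
  | inv x _ hx =>
    refine (hx.image fun f => f * x).subset ?_
    intro f hf
    refine ⟨f * x⁻¹, ?_, by simp⟩
    simp only [Set.mem_ofPred_eq] at hf ⊢
    rw [inv_mul_cancel_right]
    tauto

theorem PL_finite [Finite β] (a : β × Bool) (c : FreeGroup β) :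
    {f : FreeGroup β | ¬ (PL a f ↔ PL a (f * c))}.Finite := by
  refine transl_finite (PL a) (Set.range FreeGroup.of) ?_ c ?_
  · rintro s ⟨b, rfl⟩; exact PL_finite_of a b
  · rw [FreeGroup.closure_range_of]; trivial

theorem PL_pow (w : FreeGroup β) (hw : FreeGroup.IsCyclicallyReduced w.toWord) (h1 : w ≠ 1) :
    ∃ a, ∀ n : ℕ, 1 ≤ n → PL a (w ^ n) ∧ ¬ PL a ((w⁻¹) ^ n) := by
  have hpow : ∀ n : ℕ, (w ^ n).toWord = (List.replicate n w.toWord).flatten := by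
    intro n
    rw [FreeGroup.toWord_pow]
    exact (hw.flatten_replicate n).isReduced.reduce_eq
  rcases hL : w.toWord with _ | ⟨x, l⟩
  · exact absurd (FreeGroup.toWord_eq_nil_iff.1 hL) h1
  · refine ⟨(x.1, !x.2), fun n hn => ⟨?_, ?_⟩⟩
    · unfold PL
      rw [FreeGroup.toWord_inv, hpow]
      simp only [FreeGroup.invRev, List.getLast?_reverse, List.head?_map]
      rw [List.head?_flatten_replicate (by omega), hL]
      rfl
    · unfold PL
      rw [← inv_pow, inv_inv, hpow, List.getLast?_flatten_replicate (by omega)]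
      intro h
      have := hw.2 _ h x (by rw [hL]; rfl) rfl
      simp at this

theorem exists_cyc (f : FreeGroup β) (hf : f ≠ 1) : ∃ u w : FreeGroup β,
    f = u * w * u⁻¹ ∧ w ≠ 1 ∧ FreeGroup.IsCyclicallyReduced w.toWord := by
  have h := FreeGroup.reduceCyclically.conj_conjugator_reduceCyclically f.toWord
  have hc := FreeGroup.reduceCyclically.isCyclicallyReduced (FreeGroup.isReduced_toWord (x := f))
  have e : f = FreeGroup.mk (FreeGroup.reduceCyclically.conjugator f.toWord) *
      FreeGroup.mk (FreeGroup.reduceCyclically f.toWord) *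
      (FreeGroup.mk (FreeGroup.reduceCyclically.conjugator f.toWord))⁻¹ := by
    conv_lhs => rw [← FreeGroup.mk_toWord (x := f), ← h]
    rw [FreeGroup.inv_mk, FreeGroup.mul_mk, FreeGroup.mul_mk]
  refine ⟨_, _, e, ?_, ?_⟩
  · intro h1
    rw [h1, mul_one, mul_inv_cancel] at e
    exact hf e
  · rw [FreeGroup.toWord_mk, hc.isReduced.reduce_eq]
    exact hc

end FreeCuts
end PrimeProof

namespace PrimeProof
universe u v w
open scoped Pointwise

section Cayley
variable {G : Type u} [Group G]

theorem smul_compl (g : G) (A : Set G) : g • Aᶜ = (g • A)ᶜ := Set.smul_set_compl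

theorem smul_sub {g : G} {A B : Set G} : g • A ⊆ g • B ↔ A ⊆ B := by
  constructor
  · intro h x hx
    have := h (Set.smul_mem_smul_set (a := g) hx)
    rwa [Set.smul_mem_smul_set_iff] at this
  · intro h; exact Set.smul_set_mono h

theorem smul_ssub {g : G} {A B : Set G} : g • A ⊂ g • B ↔ A ⊂ B := by
  rw [ssubset_iff_subset_not_subset, ssubset_iff_subset_not_subset, smul_sub, smul_sub]

theorem smul_mem {g x : G} {A : Set G} : x ∈ g • A ↔ g⁻¹ * x ∈ A := by
  rw [Set.mem_smul_set_iff_inv_smul_mem, smul_eq_mul]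

theorem nested_smul (g : G) {A B : Set G} : Nested (g • A) (g • B) ↔ Nested A B := by
  unfold Nested
  rw [← smul_compl, ← smul_compl, smul_sub, smul_sub, smul_sub, smul_sub]

/-- Cayley graph -/
def cay (S : Set G) : Set (G × G) := {e | ∃ s ∈ S, e.2 = e.1 * s}

theorem cay_conn (S : Set G) (hS : Subgroup.closure S = ⊤) : Conn (cay S) Set.univ := by
  intro A _ hA hA2
  by_contra hcon
  push Not at hcon
  obtain ⟨a, ha⟩ := hA
  obtain ⟨b, -, hb⟩ := hA2
  have key : ∀ c : G, ∀ x, x ∈ A ↔ x * c ∈ A := by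
    intro c
    have hc : c ∈ Subgroup.closure S := by rw [hS]; trivial
    induction hc using Subgroup.closure_induction with
    | mem s hs =>
      intro x
      have := hcon (x, x * s) ⟨s, hs, rfl⟩
      simp only [Set.mem_sdiff, Set.mem_univ, true_and] at this
      tauto
    | one => simp
    | mul c d _ _ hc hd => intro x; rw [hc x, hd (x * c), mul_assoc]
    | inv c _ hc => intro x; rw [hc (x * c⁻¹), inv_mul_cancel_right]
  apply hb
  have := (key (a⁻¹ * b) a).1 ha
  rwa [mul_inv_cancel_left] at this

theorem bd_smul (S : Set G) (g : G) (C : Set G) :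
    bd (cay S) (g • C) = (fun e : G × G => (g * e.1, g * e.2)) '' bd (cay S) C := by
  ext ⟨a, b⟩
  constructor
  · rintro ⟨⟨s, hs, h1⟩, h2⟩
    refine ⟨(g⁻¹ * a, g⁻¹ * b), ⟨⟨s, hs, ?_⟩, ?_⟩, by simp⟩
    · simp only at h1 ⊢; rw [h1, mul_assoc]
    · rw [smul_mem, smul_mem] at h2; exact h2
  · rintro ⟨⟨x, y⟩, ⟨⟨s, hs, h1⟩, h2⟩, h3⟩
    simp only [Prod.mk.injEq] at h3
    obtain ⟨rfl, rfl⟩ := h3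
    refine ⟨⟨s, hs, ?_⟩, ?_⟩
    · simp only at h1 ⊢; rw [h1, mul_assoc]
    · rw [smul_mem, smul_mem]; simpa using h2

theorem pairmul_inj (g : G) : Function.Injective (fun e : G × G => (g * e.1, g * e.2)) := by
  rintro ⟨a, b⟩ ⟨c, d⟩ h
  simpa using h

theorem bd_smul_ncard (S : Set G) (g : G) (C : Set G) :
    (bd (cay S) (g • C)).ncard = (bd (cay S) C).ncard := by
  rw [bd_smul, Set.ncard_image_of_injective _ (pairmul_inj g)]

theorem bd_smul_finite (S : Set G) (g : G) {C : Set G} (h : (bd (cay S) C).Finite) :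
    (bd (cay S) (g • C)).Finite := by
  rw [bd_smul]; exact h.image _

/-- translate of a pair -/
def tr (g : G) (w : Pair G) : Pair G := (fun A => w.1 (g⁻¹ • A), fun A => w.2 (g⁻¹ • A))

theorem tr_tr (g : G) (w : Pair G) : tr g⁻¹ (tr g w) = w := by
  unfold tr
  simp only [inv_inv, inv_smul_smul]

variable {S : Set G} {Om : Set (Pair G)}

theorem tr_min (g : G) {w : Pair G} {C : Set G} (h : IsMinCut (cay S) w C) :
    IsMinCut (cay S) (tr g w) (g • C) := by
  refine ⟨bd_smul_finite S g h.1, ?_, ?_⟩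
  · have := h.2.1
    unfold Splits tr at *
    simpa only [inv_smul_smul] using this
  · intro D h1 h2
    rw [bd_smul_ncard, ← bd_smul_ncard S g⁻¹ D]
    exact h.2.2 _ (bd_smul_finite S g⁻¹ h1) h2

theorem tr_min' (g : G) {w : Pair G} {C : Set G} (h : IsMinCut (cay S) (tr g w) C) :
    IsMinCut (cay S) w (g⁻¹ • C) := by
  have := tr_min g⁻¹ h
  rwa [tr_tr] at this

theorem allMin_smul (hO : ∀ g, ∀ w ∈ Om, tr g w ∈ Om) (g : G) {C : Set G}
    (h : C ∈ AllMin (cay S) Om) : g • C ∈ AllMin (cay S) Om := by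
  obtain ⟨w, hw, h⟩ := h
  exact ⟨tr g w, hO g w hw, tr_min g h⟩

theorem crossers_smul (hO : ∀ g, ∀ w ∈ Om, tr g w ∈ Om) (g : G) (C : Set G) :
    Crossers (cay S) Om (g • C) = (fun X => g • X) '' Crossers (cay S) Om C := by
  ext X
  constructor
  · rintro ⟨h1, h2⟩
    refine ⟨g⁻¹ • X, ⟨allMin_smul hO _ h1, ?_⟩, by simp⟩
    rw [← nested_smul g, smul_inv_smul]; exact h2
  · rintro ⟨Y, ⟨h1, h2⟩, rfl⟩
    exact ⟨allMin_smul hO _ h1, by rw [nested_smul]; exact h2⟩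

theorem crossers_ncard (hO : ∀ g, ∀ w ∈ Om, tr g w ∈ Om) (g : G) (C : Set G) :
    (Crossers (cay S) Om (g • C)).ncard = (Crossers (cay S) Om C).ncard := by
  rw [crossers_smul hO, Set.ncard_image_of_injective _ (MulAction.injective g)]

theorem optSet_smul (hO : ∀ g, ∀ w ∈ Om, tr g w ∈ Om) (g : G) {C : Set G}
    (h : C ∈ OptSet (cay S) Om) : g • C ∈ OptSet (cay S) Om := by
  obtain ⟨w, hw, h1, h2⟩ := h
  refine ⟨tr g w, hO g w hw, tr_min g h1, fun D hD => ?_⟩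
  rw [crossers_ncard hO, ← crossers_ncard hO g⁻¹ D]
  exact h2 _ (tr_min' g hD)

/-- an end of a cyclic subgroup -/
def pe (x w : G) (A : Set G) : Prop := ∀ᶠ n : ℕ in Filter.atTop, x * w ^ n ∈ A

theorem cut_finite (hS : Subgroup.closure S = ⊤) {A : Set G}
    (hA : (bd (cay S) A).Finite) (c : G) : {y : G | ¬ (y ∈ A ↔ y * c ∈ A)}.Finite := by
  refine transl_finite (fun y => y ∈ A) S ?_ c (by rw [hS]; trivial)
  intro s hs
  refine (hA.image Prod.fst).subset ?_
  intro y hy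
  exact ⟨(y, y * s), ⟨⟨s, hs, rfl⟩, hy⟩, rfl⟩

theorem pe_or (hS : Subgroup.closure S = ⊤) {A : Set G}
    (hA : (bd (cay S) A).Finite) (x w : G) (hw : ¬ IsOfFinOrder w) : pe x w A ∨ pe x w Aᶜ := by
  have hinj : Function.Injective (fun n : ℕ => x * w ^ n) :=
    (mul_right_injective x).comp (injective_pow_iff_not_isOfFinOrder.2 hw)
  have hf := (cut_finite hS hA w).preimage (hinj.injOn)
  obtain ⟨N, hN⟩ := hf.bddAbove
  have hstep : ∀ n, N < n → (x * w ^ n ∈ A ↔ x * w ^ (n + 1) ∈ A) := by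
    intro n hn
    by_contra h
    have : n ≤ N := hN (by
      simp only [Set.mem_preimage, Set.mem_ofPred_eq]
      rw [mul_assoc, ← pow_succ]; exact h)
    omega
  have hc : ∀ n, N < n → (x * w ^ n ∈ A ↔ x * w ^ (N + 1) ∈ A) := by
    intro n hn
    induction n, hn using Nat.le_induction with
    | base => rfl
    | succ n hn ih => rw [← hstep n hn, ih]
  by_cases h : x * w ^ (N + 1) ∈ A
  · left
    exact Filter.eventually_atTop.2 ⟨N + 1, fun n hn => (hc n hn).2 h⟩
  · right
    exact Filter.eventually_atTop.2 ⟨N + 1, fun n hn h' => h ((hc n hn).1 h')⟩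

theorem pe_not_both {x w : G} {A : Set G} (h1 : pe x w A) (h2 : pe x w Aᶜ) : False := by
  obtain ⟨n, hn, hn'⟩ := (h1.and h2).exists
  exact hn' hn

theorem pe_isEnd (hS : Subgroup.closure S = ⊤) (x w : G) (hw : ¬ IsOfFinOrder w) :
    IsEnd (cay S) (pe x w) := by
  constructor
  · intro A hA
    constructor
    · exact fun h1 h2 => pe_not_both h2 h1
    · intro h
      exact (pe_or hS hA x w hw).resolve_left h
  · intro A B _ _
    exact Filter.eventually_and

theorem pe_smul (g x w : G) (A : Set G) : pe x w (g • A) ↔ pe (g⁻¹ * x) w A := by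
  unfold pe
  refine Filter.eventually_congr (Filter.Eventually.of_forall fun n => ?_)
  rw [smul_mem, mul_assoc]

theorem pe_shift (x w : G) (A : Set G) : pe (x * w) w A ↔ pe x w A := by
  unfold pe
  simp only [Filter.eventually_atTop]
  constructor
  · rintro ⟨N, hN⟩
    refine ⟨N + 1, fun n hn => ?_⟩
    have := hN (n - 1) (by omega)
    rw [mul_assoc, ← pow_succ'] at this
    rwa [show n - 1 + 1 = n by omega] at this
  · rintro ⟨N, hN⟩
    refine ⟨N, fun n hn => ?_⟩
    rw [mul_assoc, ← pow_succ']
    exact hN _ (by omega)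

theorem pe_h (x w : G) (A : Set G) : pe x w ((x * w * x⁻¹) • A) ↔ pe x w A := by
  rw [pe_smul, ← pe_shift]
  simp [mul_assoc]

theorem pe_h' (x w : G) (A : Set G) : pe x w⁻¹ ((x * w * x⁻¹) • A) ↔ pe x w⁻¹ A := by
  rw [pe_smul, ← pe_shift x]
  simp [mul_assoc]

theorem pe_stab {x w : G} {A : Set G} (h : (x * w * x⁻¹) • A = A) : pe x w A ↔ x ∈ A := by
  have key : ∀ n : ℕ, x * w ^ n ∈ A ↔ x ∈ A := by
    intro n
    induction n with
    | zero => simp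
    | succ n ih =>
      rw [← ih]
      conv_lhs => rw [← h, smul_mem]
      simp [mul_assoc, pow_succ']
  unfold pe
  simp only [key, Filter.eventually_const]

theorem pe_stab' {x w : G} {A : Set G} (h : (x * w * x⁻¹) • A = A) : pe x w⁻¹ A ↔ x ∈ A := by
  apply pe_stab
  conv_lhs => rw [← h]
  rw [smul_smul]
  simp [mul_assoc]

/-- A nested invariant family of cuts with the finiteness property -/
structure TreeSet (E : Set (Set G)) : Prop where
  inv : ∀ (g : G), ∀ C ∈ E, g • C ∈ E
  compl : ∀ C ∈ E, Cᶜ ∈ E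
  ne : ∀ C ∈ E, C.Nonempty
  nested : ∀ C ∈ E, ∀ D ∈ E, Nested C D
  fin : ∀ x y : G, {C | C ∈ E ∧ x ∈ C ∧ y ∉ C}.Finite

theorem hyp_of_split {E : Set (Set G)} (hE : TreeSet E) {x w : G} {C : Set G} (hC : C ∈ E)
    (h1 : pe x w C) (h2 : pe x w⁻¹ Cᶜ) :
    (x * w * x⁻¹) • C ⊂ C ∨ (x * w * x⁻¹) • Cᶜ ⊂ Cᶜ := by
  have hne : (x * w * x⁻¹) • C ≠ C := by
    intro h
    have a1 := (pe_stab h).1 h1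
    have h' : (x * w * x⁻¹) • Cᶜ = Cᶜ := by rw [smul_compl, h]
    exact (pe_stab' h').1 h2 a1
  rcases hE.nested _ (hE.inv (x * w * x⁻¹) C hC) _ hC with h | h | h | h
  · left; exact h.ssubset_of_ne hne
  · exfalso
    exact pe_not_both h1 (((pe_h x w C).2 h1).mono fun n hn => h hn)
  · exfalso
    rw [← smul_compl] at h
    have := ((pe_h' x w Cᶜ).2 h2).mono fun n hn => h hn
    exact pe_not_both this h2
  · right
    rw [smul_compl]
    refine h.ssubset_of_ne fun h' => hne ?_
    exact compl_injective h'

theorem exists_treeSet (G : Type u) [Group G] (hfg : Group.FG G) (hvf : VirtuallyFree G) :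
    ∃ E : Set (Set G), TreeSet E ∧
      (∀ y : G, ¬ IsOfFinOrder y → ∃ C ∈ E, ∃ n : ℕ, 1 ≤ n ∧ y ^ n • C ⊂ C) ∧
      (∀ C ∈ E, ∃ g : G, g • C ⊂ C) ∧
      (∀ H : Subgroup G, (H : Set G).Infinite → ∃ y ∈ H, ¬ IsOfFinOrder y) := by
  classical
  obtain ⟨β, hβ, ι, R, hι, hR, hR1, hdec⟩ := exists_setup G hfg hvf
  choose D hD hDu using hdec
  have hDu' : ∀ (f : FreeGroup β) (r : R), D (ι f * r) = (f, r) := fun f r =>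
    (hDu _ (f, r) rfl).symm
  obtain ⟨S, hS, hSf⟩ := Group.fg_iff.1 hfg
  have hio : ∀ f : FreeGroup β, f ≠ 1 → ¬ IsOfFinOrder (ι f) := by
    intro f hf h
    rw [hι.isOfFinOrder_iff] at h
    exact hf ((isOfFinOrder_iff_eq_one _).1 h)
  -- the basic cuts
  let B : β × Bool → Set G := fun a => {g | PL a (D g).1}
  have hB : ∀ a, (bd (cay S) (B a)).Finite := by
    intro a
    have : (⋃ r ∈ R, ⋃ s ∈ S, (fun f => (ι f * r, ι f * r * s)) ''
        {f | ¬ (PL a f ↔ PL a (f * (D (r * s)).1))}).Finite :=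
      hR.biUnion fun r _ => hSf.biUnion fun s _ => (PL_finite a _).image _
    refine this.subset ?_
    rintro ⟨g, g'⟩ ⟨⟨s, hs, h1⟩, h2⟩
    simp only at h1
    subst h1
    simp only [Set.mem_iUnion]
    refine ⟨(D g).2, (D g).2.2, s, hs, (D g).1, ?_, ?_⟩
    · have e : D (g * s) = ((D g).1 * (D ((D g).2 * s)).1, (D ((D g).2 * s)).2) := by
        rw [← hDu']
        congr 1
        rw [map_mul, mul_assoc, hD, ← mul_assoc, hD]
      have h3 : ¬ (PL a (D g).1 ↔ PL a (D (g * s)).1) := h2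
      rw [e] at h3
      exact h3
    · simp only [hD]
  obtain ⟨k, hk⟩ := Finite.exists_le (fun a => (bd (cay S) (B a)).ncard)
  let Om : Set (Pair G) := {ω | ∃ (x : G) (f : FreeGroup β), f ≠ 1 ∧
    FreeGroup.IsCyclicallyReduced f.toWord ∧ ω = (pe x (ι f), pe x (ι f)⁻¹)}
  have hOm : ∀ g, ∀ w ∈ Om, tr g w ∈ Om := by
    rintro g w ⟨x, f, hf, hf2, rfl⟩
    refine ⟨g * x, f, hf, hf2, ?_⟩
    unfold tr
    simp only [pe_smul, inv_inv]
  have hgood : Good (cay S) Om k := by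
    refine ⟨cay_conn S hS, ?_, ?_⟩
    · rintro w ⟨x, f, hf, hf2, rfl⟩
      exact ⟨pe_isEnd hS _ _ (hio f hf), pe_isEnd hS _ _ (by rw [isOfFinOrder_inv_iff]; exact hio f hf)⟩
    · rintro w ⟨x, f, hf, hf2, rfl⟩
      obtain ⟨a, ha⟩ := PL_pow f hf2 hf
      have hD1 : ∀ f, D (ι f) = (f, ⟨1, hR1⟩) := by
        intro f
        rw [← hDu']; simp
      refine ⟨x • B a, bd_smul_finite S x (hB a), ?_, by rw [bd_smul_ncard]; exact hk a⟩
      have h1 : pe x (ι f) (x • B a) := by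
        refine Filter.eventually_atTop.2 ⟨1, fun n hn => ?_⟩
        rw [smul_mem, inv_mul_cancel_left]
        change PL a (D (ι f ^ n)).1
        rw [← map_pow, hD1]
        exact (ha n hn).1
      have h2 : pe x (ι f)⁻¹ (x • B a)ᶜ := by
        refine Filter.eventually_atTop.2 ⟨1, fun n hn => ?_⟩
        rw [← smul_compl, smul_mem, inv_mul_cancel_left]
        change ¬ PL a (D ((ι f)⁻¹ ^ n)).1
        rw [← map_inv, ← map_pow, hD1]
        exact (ha n hn).2
      intro h3
      exact pe_not_both (h3.1 h1) h2
  have hE : TreeSet (OptSet (cay S) Om) := by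
    refine ⟨fun g C hC => optSet_smul hOm g hC, ?_, ?_, ?_, hgood.opt_sep_finite⟩
    · rintro C ⟨w, hw, hC⟩
      exact ⟨w, hw, hgood.isOpt_compl hw hC⟩
    · rintro C ⟨w, hw, hC⟩
      exact hgood.splits_nonempty hw hC.1.2.1
    · rintro C ⟨w, hw, hC⟩ C' ⟨w', hw', hC'⟩
      exact hgood.nested_opt hw hw' hC hC'
  have hsplit : ∀ (x : G) (f : FreeGroup β), f ≠ 1 → FreeGroup.IsCyclicallyReduced f.toWord →
      ∀ C, IsOpt (cay S) Om (pe x (ι f), pe x (ι f)⁻¹) C →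
      (x * ι f * x⁻¹) • C ⊂ C ∨ (x * ι f * x⁻¹) • Cᶜ ⊂ Cᶜ := by
    intro x f hf hf2 C hC
    have hw : (pe x (ι f), pe x (ι f)⁻¹) ∈ Om := ⟨x, f, hf, hf2, rfl⟩
    have hCE : C ∈ OptSet (cay S) Om := ⟨_, hw, hC⟩
    have hs := hC.1.2.1
    have hend := hgood.isEnd _ hw
    have c1 := hend.1.compl C hC.1.1
    have c2 := hend.2.compl C hC.1.1
    unfold Splits at hs
    simp only at hs c1 c2
    by_cases h1 : pe x (ι f) C
    · have h2 : pe x (ι f)⁻¹ Cᶜ := by tauto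
      exact hyp_of_split hE hCE h1 h2
    · have h2 : pe x (ι f)⁻¹ Cᶜᶜ := by rw [cc]; tauto
      have := hyp_of_split hE (hE.compl C hCE) (c1.2 h1) h2
      rw [cc] at this
      exact this.symm
  refine ⟨_, hE, ?_, ?_, ?_⟩
  · intro y hy
    obtain ⟨i, j, hij, hr⟩ : ∃ i j : ℕ, i < j ∧ (D (y ^ i)).2 = (D (y ^ j)).2 := by
      have : Finite R := hR
      obtain ⟨i, j, hij, h⟩ := Finite.exists_ne_map_eq_of_infinite (fun i : ℕ => (D (y ^ i)).2)
      rcases lt_or_gt_of_ne hij with h' | h'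
      · exact ⟨i, j, h', h⟩
      · exact ⟨j, i, h', h.symm⟩
    have e : y ^ (j - i) = ι ((D (y ^ j)).1 * (D (y ^ i)).1⁻¹) := by
      have e1 := hD (y ^ i)
      have e2 := hD (y ^ j)
      rw [map_mul, map_inv, pow_sub _ hij.le]
      have e1' : ι (D (y ^ i)).1 = y ^ i * ((D (y ^ i)).2 : G)⁻¹ := by rw [eq_mul_inv_iff_mul_eq, e1]
      have e2' : ι (D (y ^ j)).1 = y ^ j * ((D (y ^ j)).2 : G)⁻¹ := by rw [eq_mul_inv_iff_mul_eq, e2]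
      rw [e1', e2', hr]
      group
    set f0 := (D (y ^ j)).1 * (D (y ^ i)).1⁻¹ with hf0
    have hf0 : f0 ≠ 1 := by
      intro h
      rw [h, map_one] at e
      exact hy (isOfFinOrder_iff_pow_eq_one.2 ⟨j - i, by omega, e⟩)
    obtain ⟨a, w, h1, h2, h3⟩ := exists_cyc f0 hf0
    have hw : (pe (ι a) (ι w), pe (ι a) (ι w)⁻¹) ∈ Om := ⟨_, w, h2, h3, rfl⟩
    obtain ⟨C, hC⟩ := hgood.exists_opt hw
    have e' : ι a * ι w * (ι a)⁻¹ = y ^ (j - i) := by rw [e, h1]; simp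
    have := hsplit (ι a) w h2 h3 C hC
    rw [e'] at this
    rcases this with h | h
    · exact ⟨C, ⟨_, hw, hC⟩, j - i, by omega, h⟩
    · exact ⟨Cᶜ, hE.compl C ⟨_, hw, hC⟩, j - i, by omega, h⟩
  · rintro C ⟨w, ⟨x, f, hf, hf2, rfl⟩, hC⟩
    rcases hsplit x f hf hf2 C hC with h | h
    · exact ⟨_, h⟩
    · refine ⟨(x * ι f * x⁻¹)⁻¹, ?_⟩
      rw [← smul_ssub (g := x * ι f * x⁻¹), smul_inv_smul]
      rw [smul_compl] at h
      exact compl_lt_compl_iff_lt.1 h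
  · intro H hH
    have : Finite R := hR
    have hinf : Infinite H := hH.to_subtype
    obtain ⟨a, b, hab, h⟩ := Finite.exists_ne_map_eq_of_infinite (fun i : H => (D (i : G)).2)
    refine ⟨a * (b : G)⁻¹, H.mul_mem a.2 (H.inv_mem b.2), ?_⟩
    have e : (a : G) * (b : G)⁻¹ = ι ((D (a : G)).1 * (D (b : G)).1⁻¹) := by
      have e1 := hD (a : G)
      have e2 := hD (b : G)
      conv_lhs => rw [← e1, ← e2, h]
      rw [map_mul, map_inv]
      group
    rw [e]
    apply hio
    intro h1
    rw [h1, map_one, mul_inv_eq_one] at e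
    exact hab (Subtype.ext e)

end Cayley
end PrimeProof

namespace PrimeProof
universe u v w
open scoped Pointwise
set_option linter.unusedSectionVars false

section Tree
variable {G : Type u} [Group G] {E : Set (Set G)}

theorem smul_mem_v {g : G} {v : Set (Set G)} {D : Set G} : D ∈ g • v ↔ g⁻¹ • D ∈ v :=
  Set.mem_smul_set_iff_inv_smul_mem

/-- the terminal vertex of an edge -/
def tv (E : Set (Set G)) (C : Set G) : Set (Set G) := {D | D ∈ E ∧ (C ⊆ D ∨ Cᶜ ⊂ D)}

structure IsVert (E : Set (Set G)) (v : Set (Set G)) : Prop where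
  sub : v ⊆ E
  xor : ∀ D ∈ E, (Dᶜ ∈ v ↔ D ∉ v)
  up : ∀ D ∈ v, ∀ X ∈ E, D ⊆ X → X ∈ v

theorem IsVert.eq_of_subset {v w : Set (Set G)} (hv : IsVert E v) (hw : IsVert E w) (h : v ⊆ w) :
    v = w := by
  refine h.antisymm fun D hD => ?_
  by_contra hn
  have := (hv.xor D (hw.sub hD)).2 hn
  exact (hw.xor D (hw.sub hD)).1 (h this) hD

theorem TreeSet.compl_mem_iff (hE : TreeSet E) {C : Set G} : Cᶜ ∈ E ↔ C ∈ E :=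
  ⟨fun h => by have := hE.compl _ h; rwa [cc] at this, hE.compl C⟩

theorem TreeSet.smul_mem_iff (hE : TreeSet E) {g : G} {C : Set G} : g • C ∈ E ↔ C ∈ E :=
  ⟨fun h => by have := hE.inv g⁻¹ _ h; rwa [inv_smul_smul] at this, hE.inv g C⟩

theorem TreeSet.not_sub_compl (hE : TreeSet E) {C : Set G} (hC : C ∈ E) : ¬ C ⊆ Cᶜ := by
  intro h
  obtain ⟨x, hx⟩ := hE.ne C hC
  exact h hx hx

theorem TreeSet.not_compl_sub (hE : TreeSet E) {C : Set G} (hC : C ∈ E) : ¬ Cᶜ ⊆ C := by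
  intro h
  refine hE.not_sub_compl (hE.compl C hC) ?_
  rwa [cc]

theorem compl_ss {A B : Set G} : Aᶜ ⊂ Bᶜ ↔ B ⊂ A := compl_lt_compl_iff_lt
theorem compl_ss' {A B : Set G} : Aᶜ ⊂ B ↔ Bᶜ ⊂ A := by
  rw [← compl_ss, cc]

theorem compl_s' {A B : Set G} : Aᶜ ⊆ B ↔ Bᶜ ⊆ A := Set.compl_subset_comm

theorem tv_isVert (hE : TreeSet E) {C : Set G} (hC : C ∈ E) : IsVert E (tv E C) := by
  refine ⟨fun D hD => hD.1, fun D hD => ⟨?_, ?_⟩, ?_⟩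
  · rintro ⟨-, h1⟩ ⟨-, h2⟩
    rcases h1 with h1 | h1 <;> rcases h2 with h2 | h2
    · obtain ⟨x, hx⟩ := hE.ne C hC
      exact h1 hx (h2 hx)
    · exact (compl_ss'.1 h2).2 h1
    · exact (compl_ss.1 h1).2 h2
    · obtain ⟨x, hx⟩ := hE.ne Cᶜ (hE.compl C hC)
      exact h1.subset hx (h2.subset hx)
  · intro h
    refine ⟨hE.compl D hD, ?_⟩
    have h1 : ¬ C ⊆ D := fun h' => h ⟨hD, Or.inl h'⟩
    have h2 : ¬ Cᶜ ⊂ D := fun h' => h ⟨hD, Or.inr h'⟩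
    rcases hE.nested C hC D hD with h3 | h3 | h3 | h3
    · exact absurd h3 h1
    · exact Or.inl h3
    · left
      have : D = Cᶜ := by
        by_contra hne
        exact h2 (h3.ssubset_of_ne (Ne.symm hne))
      rw [this, cc]
    · right
      refine h3.ssubset_of_ne fun h' => h1 ?_
      rw [compl_injective h']
  · rintro D ⟨h1, h2⟩ X hX hDX
    refine ⟨hX, ?_⟩
    rcases h2 with h2 | h2
    · exact Or.inl (h2.trans hDX)
    · exact Or.inr (h2.trans_subset hDX)

theorem mem_tv {C : Set G} (hC : C ∈ E) : C ∈ tv E C := ⟨hC, Or.inl subset_rfl⟩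

theorem compl_not_mem_tv (hE : TreeSet E) {C : Set G} (hC : C ∈ E) : Cᶜ ∉ tv E C := by
  rw [(tv_isVert hE hC).xor C hC, not_not]
  exact mem_tv hC

theorem not_mem_tv_compl (hE : TreeSet E) {C : Set G} (hC : C ∈ E) : C ∉ tv E Cᶜ := by
  have := compl_not_mem_tv hE (hE.compl C hC)
  rwa [cc] at this

theorem tv_smul (hE : TreeSet E) (g : G) (C : Set G) : g • tv E C = tv E (g • C) := by
  ext D
  rw [smul_mem_v]
  unfold tv
  simp only [Set.mem_ofPred_eq]
  rw [hE.smul_mem_iff, ← smul_sub (g := g), ← smul_ssub (g := g), smul_inv_smul, smul_compl]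

theorem IsVert.smul (hE : TreeSet E) {v : Set (Set G)} (hv : IsVert E v) (g : G) :
    IsVert E (g • v) := by
  refine ⟨fun D hD => ?_, fun D hD => ?_, fun D hD X hX hDX => ?_⟩
  · rw [smul_mem_v] at hD; exact hE.smul_mem_iff.1 (hv.sub hD)
  · rw [smul_mem_v, smul_mem_v, smul_compl]; exact hv.xor _ (hE.inv _ _ hD)
  · rw [smul_mem_v] at hD ⊢
    exact hv.up _ hD _ (hE.inv _ _ hX) (smul_sub.2 hDX)

theorem tv_cover (hE : TreeSet E) {C D : Set G} (hC : C ∈ E) (hD : D ∈ E) (h : D ⊂ C)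
    (hcov : ∀ X ∈ E, D ⊂ X → X ⊂ C → False) : tv E C = tv E Dᶜ := by
  refine (tv_isVert hE hC).eq_of_subset (tv_isVert hE (hE.compl D hD)) ?_
  rintro X ⟨hX, hX2⟩
  refine ⟨hX, ?_⟩
  rw [cc]
  rcases hX2 with h1 | h1
  · exact Or.inr (h.trans_subset h1)
  · rcases hE.nested X hX D hD with h2 | h2 | h2 | h2
    · exact absurd ((h1.subset.trans h2).trans h.subset) (hE.not_compl_sub hC)
    · left
      by_contra hne
      have a1 : D ⊂ Xᶜ := by
        refine (Set.subset_compl_comm.1 h2).ssubset_of_ne ?_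
        rintro rfl
        rw [cc] at hne
        exact hne subset_rfl
      exact hcov Xᶜ (hE.compl X hX) a1 (compl_ss'.1 h1)
    · exact Or.inl (compl_s'.1 h2)
    · right
      refine (Set.compl_subset_compl.1 h2).ssubset_of_ne ?_
      rintro rfl
      exact hE.not_compl_sub hC (h1.trans h).subset

theorem tv_eq (hE : TreeSet E) {C D : Set G} (hC : C ∈ E) (hD : D ∈ E) (h : tv E C = tv E Dᶜ) :
    D = Cᶜ ∨ D ⊂ C := by
  have h1 : D ∉ tv E C := by rw [h]; exact not_mem_tv_compl hE hD
  have h2 : C ∈ tv E Dᶜ := by rw [← h]; exact mem_tv hC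
  rcases h2.2 with h3 | h3
  · left
    by_contra hne
    exact h1 ⟨hD, Or.inr ((compl_s'.1 h3).ssubset_of_ne (Ne.symm hne))⟩
  · right; rwa [cc] at h3

theorem mem_tv_compl_of_ssubset {C D : Set G} (hD : D ∈ E) (h : C ⊂ D) : D ∈ tv E Cᶜ :=
  ⟨hD, Or.inr (by rwa [cc])⟩

/-- paths in the tree -/
def IsPath (E : Set (Set G)) : Set (Set G) → List (Set G) → Set (Set G) → Prop
  | v, [], w => v = w
  | v, C :: L, w => C ∈ E ∧ v = tv E Cᶜ ∧ IsPath E (tv E C) L w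

def val (P : Set G → G) (L : List (Set G)) : G := (L.map P).prod

@[simp] theorem val_nil (P : Set G → G) : val P [] = 1 := rfl
@[simp] theorem val_cons (P : Set G → G) (C : Set G) (L : List (Set G)) :
    val P (C :: L) = P C * val P L := by simp [val]

theorem val_append (P : Set G → G) (L M : List (Set G)) : val P (L ++ M) = val P L * val P M := by
  simp [val]

theorem IsPath.append {v w x : Set (Set G)} {L M : List (Set G)} (h : IsPath E v L w)
    (h' : IsPath E w M x) : IsPath E v (L ++ M) x := by
  induction L generalizing v with
  | nil => have : v = w := h; subst this; exact h'
  | cons C L ih => exact ⟨h.1, h.2.1, ih h.2.2⟩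

theorem IsPath.smul (hE : TreeSet E) {v w : Set (Set G)} {L : List (Set G)} (h : IsPath E v L w)
    (g : G) : IsPath E (g • v) (L.map (g • ·)) (g • w) := by
  induction L generalizing v with
  | nil => have : v = w := h; subst this; rfl
  | cons C L ih =>
    refine ⟨hE.inv g C h.1, ?_, ?_⟩
    · rw [h.2.1, tv_smul hE, smul_compl]
    · have := ih h.2.2
      rwa [tv_smul hE] at this

theorem IsPath.rev (hE : TreeSet E) {v w : Set (Set G)} {L : List (Set G)} (h : IsPath E v L w) :
    IsPath E w (L.map compl).reverse v := by
  induction L generalizing v with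
  | nil => have : v = w := h; subst this; rfl
  | cons C L ih =>
    rw [List.map_cons, List.reverse_cons]
    refine (ih h.2.2).append ⟨hE.compl C h.1, ?_, ?_⟩
    · rw [cc]
    · exact h.2.1.symm

theorem val_rev {P : Set G → G} (hP : ∀ D ∈ E, P Dᶜ = (P D)⁻¹) {v w : Set (Set G)}
    {L : List (Set G)} (h : IsPath E v L w) : val P (L.map compl).reverse = (val P L)⁻¹ := by
  induction L generalizing v with
  | nil => simp
  | cons C L ih =>
    rw [List.map_cons, List.reverse_cons, val_append, ih h.2.2]
    simp [hP C h.1]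

theorem val_smul {P : Set G → G} (hP : ∀ g, ∀ D ∈ E, P (g • D) = g * P D * g⁻¹) {v w : Set (Set G)}
    {L : List (Set G)} (h : IsPath E v L w) (g : G) :
    val P (L.map (g • ·)) = g * val P L * g⁻¹ := by
  induction L generalizing v with
  | nil => simp
  | cons C L ih =>
    rw [List.map_cons, val_cons, val_cons, ih h.2.2, hP g C h.1]
    group

/-- reduced paths -/
def Red (L : List (Set G)) : Prop := L.IsChain (fun C D => D ⊂ C)

theorem IsPath.reduce (hE : TreeSet E) {v w : Set (Set G)} {L : List (Set G)} (h : IsPath E v L w) :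
    ∃ M, IsPath E v M w ∧ Red M ∧
      ∀ P : Set G → G, (∀ D ∈ E, P Dᶜ = (P D)⁻¹) → val P M = val P L := by
  induction L generalizing v with
  | nil => exact ⟨[], h, List.IsChain.nil, fun _ _ => rfl⟩
  | cons C L ih =>
    obtain ⟨M, h1, h2, h3⟩ := ih h.2.2
    rcases M with _ | ⟨D, M⟩
    · refine ⟨[C], ⟨h.1, h.2.1, h1⟩, List.IsChain.singleton _, fun P hP => ?_⟩
      rw [val_cons, val_cons, h3 P hP]
    · rcases tv_eq hE h.1 h1.1 h1.2.1 with hD | hD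
      · subst hD
        refine ⟨M, ?_, h2.tail, fun P hP => ?_⟩
        · rw [h.2.1]; exact h1.2.2
        · rw [val_cons, ← h3 P hP, val_cons, hP C h.1]; simp
      · refine ⟨C :: D :: M, ⟨h.1, h.2.1, h1⟩, List.IsChain.cons_cons hD h2, fun P hP => ?_⟩
        rw [val_cons, h3 P hP, val_cons]

theorem IsPath.end_isVert (hE : TreeSet E) {v w : Set (Set G)} {L : List (Set G)}
    (h : IsPath E v L w) (hv : IsVert E v) : IsVert E w := by
  induction L generalizing v with
  | nil => have : v = w := h; subst this; exact hv
  | cons C L ih => exact ih h.2.2 (tv_isVert hE h.1)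

theorem IsPath.mem_end (hE : TreeSet E) {v w : Set (Set G)} {C : Set G} {L : List (Set G)}
    (h : IsPath E v (C :: L) w) (hr : Red (C :: L)) : C ∈ w := by
  induction L generalizing v C with
  | nil =>
    have : tv E C = w := h.2.2
    subst this; exact mem_tv h.1
  | cons D L ih =>
    have h1 : D ∈ w := ih h.2.2 hr.tail
    have h2 : D ⊂ C := (List.isChain_cons_cons.1 hr).1
    refine (h.end_isVert hE ?_).up D h1 C h.1 h2.subset
    rw [h.2.1]; exact tv_isVert hE (hE.compl C h.1)

theorem IsPath.not_mem_start (hE : TreeSet E) {v w : Set (Set G)} {C : Set G} {L : List (Set G)}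
    (h : IsPath E v (C :: L) w) : C ∉ v := by
  rw [h.2.1]; exact not_mem_tv_compl hE h.1

theorem IsPath.val_closed (hE : TreeSet E) {P : Set G → G} (hP : ∀ D ∈ E, P Dᶜ = (P D)⁻¹)
    {v : Set (Set G)} {L : List (Set G)} (h : IsPath E v L v) : val P L = 1 := by
  obtain ⟨M, h1, h2, h3⟩ := h.reduce hE
  rw [← h3 P hP]
  rcases M with _ | ⟨C, M⟩
  · rfl
  · exact absurd (h1.mem_end hE h2) (h1.not_mem_start hE)

theorem IsPath.val_eq (hE : TreeSet E) {P : Set G → G} (hP : ∀ D ∈ E, P Dᶜ = (P D)⁻¹)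
    {v w : Set (Set G)} {L M : List (Set G)} (h : IsPath E v L w) (h' : IsPath E v M w) :
    val P L = val P M := by
  have := (h.append (h'.rev hE)).val_closed hE hP
  rw [val_append, val_rev hP h', mul_inv_eq_one] at this
  exact this

/-- connectivity -/
def Reach (E : Set (Set G)) (v w : Set (Set G)) : Prop := ∃ L, IsPath E v L w

theorem Reach.trans {v w x : Set (Set G)} (h : Reach E v w) (h' : Reach E w x) : Reach E v x := by
  obtain ⟨L, h⟩ := h
  obtain ⟨M, h'⟩ := h'
  exact ⟨_, h.append h'⟩

theorem Reach.symm (hE : TreeSet E) {v w : Set (Set G)} (h : Reach E v w) : Reach E w v := by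
  obtain ⟨L, h⟩ := h
  exact ⟨_, h.rev hE⟩

theorem Reach.smul (hE : TreeSet E) {v w : Set (Set G)} (h : Reach E v w) (g : G) :
    Reach E (g • v) (g • w) := by
  obtain ⟨L, h⟩ := h
  exact ⟨_, h.smul hE g⟩

theorem reach_compl (hE : TreeSet E) {C : Set G} (hC : C ∈ E) : Reach E (tv E C) (tv E Cᶜ) :=
  ⟨[Cᶜ], hE.compl C hC, by rw [cc], rfl⟩

theorem TreeSet.interval_finite (hE : TreeSet E) {C D : Set G} (hC : C ∈ E) (hD : D ∈ E) :
    {X | X ∈ E ∧ D ⊆ X ∧ X ⊆ C}.Finite := by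
  obtain ⟨x, hx⟩ := hE.ne D hD
  obtain ⟨y, hy⟩ := hE.ne Cᶜ (hE.compl C hC)
  exact (hE.fin x y).subset fun X hX => ⟨hX.1, hX.2.1 hx, fun h => hy (hX.2.2 h)⟩

theorem exists_cover (hE : TreeSet E) {C D : Set G} (hC : C ∈ E) (hD : D ∈ E) (h : D ⊂ C) :
    ∃ X ∈ E, D ⊆ X ∧ X ⊂ C ∧ ∀ Y ∈ E, X ⊂ Y → Y ⊂ C → False := by
  have hf : {X | X ∈ E ∧ D ⊆ X ∧ X ⊂ C}.Finite :=
    (hE.interval_finite hC hD).subset fun X hX => ⟨hX.1, hX.2.1, hX.2.2.subset⟩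
  obtain ⟨X, hX, hmax⟩ := hf.exists_maximal ⟨D, hD, subset_rfl, h⟩
  refine ⟨X, hX.1, hX.2.1, hX.2.2, fun Y hY h1 h2 => ?_⟩
  exact h1.2 (hmax ⟨hY, hX.2.1.trans h1.subset, h2⟩ h1.subset)

theorem reach_sub (hE : TreeSet E) {D : Set G} (hD : D ∈ E) : ∀ (n : ℕ) (C : Set G), C ∈ E →
    D ⊆ C → {X | X ∈ E ∧ D ⊆ X ∧ X ⊆ C}.ncard ≤ n → Reach E (tv E C) (tv E D) := by
  intro n
  induction n with
  | zero =>
    intro C hC h hn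
    have : {X | X ∈ E ∧ D ⊆ X ∧ X ⊆ C} = ∅ := by
      rw [← Set.ncard_eq_zero (hE.interval_finite hC hD)]; omega
    exact absurd (show C ∈ {X | X ∈ E ∧ D ⊆ X ∧ X ⊆ C} from ⟨hC, h, subset_rfl⟩)
      (by rw [this]; exact Set.notMem_empty _)
  | succ n ih =>
    intro C hC h hn
    by_cases he : D = C
    · subst he; exact ⟨[], rfl⟩
    · obtain ⟨X, hX, h1, h2, h3⟩ := exists_cover hE hC hD (h.ssubset_of_ne he)
      have hr := ih X hX h1 (by
        have : {Y | Y ∈ E ∧ D ⊆ Y ∧ Y ⊆ X}.ncard < {X | X ∈ E ∧ D ⊆ X ∧ X ⊆ C}.ncard := by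
          refine Set.ncard_lt_ncard ?_ (hE.interval_finite hC hD)
          refine ⟨fun Y hY => ⟨hY.1, hY.2.1, hY.2.2.trans h2.subset⟩, fun hsub => ?_⟩
          exact h2.2 (hsub (show C ∈ _ from ⟨hC, h, subset_rfl⟩)).2.2
        omega)
      obtain ⟨L, hL⟩ := hr
      exact ⟨X :: L, hX, tv_cover hE hC hX h2 h3, hL⟩

theorem reach_tv (hE : TreeSet E) {C D : Set G} (hC : C ∈ E) (hD : D ∈ E) :
    Reach E (tv E C) (tv E D) := by
  have hCc := hE.compl C hC
  have hDc := hE.compl D hD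
  rcases hE.nested C hC D hD with h | h | h | h
  · exact (reach_sub hE hC _ D hD h le_rfl).symm hE
  · exact ((reach_compl hE hD).trans (reach_sub hE hC _ Dᶜ hDc h le_rfl)).symm hE
  · exact (reach_compl hE hC).trans ((reach_sub hE hCc _ D hD h le_rfl).symm hE)
  · exact (reach_compl hE hC).trans
      ((((reach_compl hE hD).trans (reach_sub hE hCc _ Dᶜ hDc h le_rfl))).symm hE)

/-- the endomorphism attached to a cocycle -/
theorem exists_endo (hE : TreeSet E) (P : Set G → G)
    (hP1 : ∀ g, ∀ D ∈ E, P (g • D) = g * P D * g⁻¹) (hP2 : ∀ D ∈ E, P Dᶜ = (P D)⁻¹)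
    (v : Set (Set G)) (hv : ∀ g : G, Reach E v (g • v)) :
    ∃ φ : G →* G, ∀ g L, IsPath E v L (g • v) → φ g = val P L * g := by
  choose L hL using hv
  refine ⟨MonoidHom.mk' (fun g => val P (L g) * g) ?_, ?_⟩
  · intro g h
    have h1 := (hL g).append ((hL h).smul hE g)
    rw [smul_smul] at h1
    rw [(hL (g * h)).val_eq hE hP2 h1, val_append, val_smul hP1 (hL h)]
    group
  · intro g M hM
    change val P (L g) * g = _
    rw [(hL g).val_eq hE hP2 hM]

/-- the orbit of an edge -/
def orb (C : Set G) : Set (Set G) := {D | ∃ g : G, D = g • C ∨ D = g • Cᶜ}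

theorem mem_orb (C : Set G) : C ∈ orb C := ⟨1, Or.inl (by simp)⟩

theorem orb_sub (hE : TreeSet E) {C : Set G} (hC : C ∈ E) : orb C ⊆ E := by
  rintro D ⟨g, rfl | rfl⟩
  · exact hE.inv _ _ hC
  · exact hE.inv _ _ (hE.compl _ hC)

theorem orb_treeSet (hE : TreeSet E) {C : Set G} (hC : C ∈ E) : TreeSet (orb C) := by
  have hs := orb_sub hE hC
  refine ⟨?_, ?_, fun D hD => hE.ne D (hs hD), fun D hD X hX => hE.nested D (hs hD) X (hs hX),
    fun x y => (hE.fin x y).subset fun D hD => ⟨hs hD.1, hD.2⟩⟩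
  · rintro h D ⟨g, rfl | rfl⟩
    · exact ⟨h * g, Or.inl (smul_smul _ _ _)⟩
    · exact ⟨h * g, Or.inr (smul_smul _ _ _)⟩
  · rintro D ⟨g, rfl | rfl⟩
    · exact ⟨g, Or.inr (by rw [smul_compl])⟩
    · exact ⟨g, Or.inl (by rw [smul_compl, cc])⟩

/-- the centralizer of the stabilizer of an edge -/
def ZC (C : Set G) : Subgroup G := Subgroup.centralizer (MulAction.stabilizer G C : Set G)

theorem mem_ZC {C : Set G} {z : G} : z ∈ ZC C ↔ ∀ k : G, k • C = C → k * z = z * k :=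
  Subgroup.mem_centralizer_iff

theorem exists_P (C : Set G) (z : G) (hz : z ∈ ZC C)
    (ha : ∀ g : G, g • C = Cᶜ → g * z * g⁻¹ = z⁻¹) :
    ∃ P : Set G → G, (∀ g, ∀ D ∈ orb C, P (g • D) = g * P D * g⁻¹) ∧
      (∀ D ∈ orb C, P Dᶜ = (P D)⁻¹) ∧ (∀ g : G, P (g • C) = g * z * g⁻¹) ∧
      (∀ g : G, P (g • Cᶜ) = g * z⁻¹ * g⁻¹) := by
  rw [mem_ZC] at hz
  have e1 : ∀ g h : G, g • C = h • C → g * z * g⁻¹ = h * z * h⁻¹ := by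
    intro g h hgh
    have := hz (h⁻¹ * g) (by rw [mul_smul, hgh, inv_smul_smul])
    calc g * z * g⁻¹ = h * ((h⁻¹ * g) * z) * g⁻¹ := by group
      _ = h * z * h⁻¹ := by rw [this]; group
  have e2 : ∀ g h : G, g • C = h • Cᶜ → g * z * g⁻¹ = h * z⁻¹ * h⁻¹ := by
    intro g h hgh
    have := ha (h⁻¹ * g) (by rw [mul_smul, hgh, inv_smul_smul])
    rw [← this]; group
  have key : ∀ D : Set G, ∃ p : G, (∀ g : G, D = g • C → p = g * z * g⁻¹) ∧
      (∀ g : G, D = g • Cᶜ → p = g * z⁻¹ * g⁻¹) := by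
    intro D
    by_cases h1 : ∃ g : G, D = g • C
    · obtain ⟨g, rfl⟩ := h1
      exact ⟨g * z * g⁻¹, fun h hh => e1 g h hh, fun h hh => e2 g h hh⟩
    · by_cases h2 : ∃ g : G, D = g • Cᶜ
      · obtain ⟨g, rfl⟩ := h2
        refine ⟨g * z⁻¹ * g⁻¹, fun h hh => absurd ⟨h, hh⟩ h1, fun h hh => ?_⟩
        rw [smul_compl, smul_compl] at hh
        have := e1 g h (compl_injective hh)
        have h3 := congrArg (fun x => x⁻¹) this
        simpa [mul_assoc] using h3
      · exact ⟨1, fun g hg => absurd ⟨g, hg⟩ h1, fun g hg => absurd ⟨g, hg⟩ h2⟩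
  choose P hP1 hP2 using key
  refine ⟨P, ?_, ?_, fun g => hP1 _ g rfl, fun g => hP2 _ g rfl⟩
  · rintro g D ⟨h, rfl | rfl⟩
    · rw [hP1 _ h rfl, hP1 _ (g * h) (smul_smul _ _ _)]; group
    · rw [hP2 _ h rfl, hP2 _ (g * h) (smul_smul _ _ _)]; group
  · rintro D ⟨h, rfl | rfl⟩
    · rw [hP1 _ h rfl, hP2 _ h (by rw [smul_compl])]; group
    · rw [hP2 _ h rfl, hP1 _ h (by rw [smul_compl, cc])]; group

end Tree
end PrimeProof

namespace PrimeProof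
universe u v w
open scoped Pointwise
set_option linter.unusedSectionVars false

section LemmaI
variable {G : Type u} [Group G] {E : Set (Set G)}

theorem inv_smul_compl {g : G} {C : Set G} (h : g • C = Cᶜ) : g⁻¹ • C = Cᶜ := by
  rw [inv_smul_eq_iff, smul_compl, h, cc]

theorem smul_compl_eq {g : G} {C : Set G} (h : g • C = Cᶜ) : g • Cᶜ = C := by
  rw [smul_compl, h, cc]

theorem ZC_conj {g : G} {C : Set G} (h : g • C = Cᶜ) {z : G} (hz : z ∈ ZC C) :
    g * z * g⁻¹ ∈ ZC C := by
  rw [mem_ZC] at hz ⊢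
  intro k hk
  have h1 : (g⁻¹ * k * g) • C = C := by
    rw [mul_smul, mul_smul, h, smul_compl, hk, smul_compl, inv_smul_compl h, cc]
  have := hz _ h1
  calc k * (g * z * g⁻¹) = g * ((g⁻¹ * k * g) * z) * g⁻¹ := by group
    _ = _ := by rw [this]; group

/-- antisymmetrised central elements are admissible -/
theorem admissible_of {g0 : G} {C : Set G} (h0 : g0 • C = Cᶜ) {p : G} (hp : p ∈ ZC C) :
    ∀ g : G, g • C = Cᶜ →
      g * (p * (g0 * p⁻¹ * g0⁻¹)) * g⁻¹ = (p * (g0 * p⁻¹ * g0⁻¹))⁻¹ := by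
  intro g hg
  have hZ : p * (g0 * p⁻¹ * g0⁻¹) ∈ ZC C := (ZC C).mul_mem hp (ZC_conj h0 ((ZC C).inv_mem hp))
  have h1 : (g0⁻¹ * g) • C = C := by rw [mul_smul, hg, smul_compl, inv_smul_compl h0, cc]
  have h2 : (g0 * g0) • C = C := by rw [mul_smul, h0, smul_compl_eq h0]
  have e1 := mem_ZC.1 hZ _ h1
  have e2 := mem_ZC.1 hp _ h2
  have e3 : g * (p * (g0 * p⁻¹ * g0⁻¹)) * g⁻¹ = g0 * (p * (g0 * p⁻¹ * g0⁻¹)) * g0⁻¹ := by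
    calc g * (p * (g0 * p⁻¹ * g0⁻¹)) * g⁻¹
        = g0 * ((g0⁻¹ * g) * (p * (g0 * p⁻¹ * g0⁻¹))) * g⁻¹ := by group
      _ = _ := by rw [e1]; group
  rw [e3]
  calc g0 * (p * (g0 * p⁻¹ * g0⁻¹)) * g0⁻¹ = g0 * p * g0 * p⁻¹ * (g0 * g0)⁻¹ := by group
    _ = g0 * p * g0 * ((g0 * g0) * p)⁻¹ := by group
    _ = g0 * p * g0 * (p * (g0 * g0))⁻¹ := by rw [e2]
    _ = (p * (g0 * p⁻¹ * g0⁻¹))⁻¹ := by group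

theorem lemmaI_aux (hco : CoHopfian G) (hE : TreeSet E) {C : Set G} (hC : C ∈ E) {p : G}
    (hp : p ∈ ZC C) (hpC : p • C ⊂ C) (ha : ∀ g : G, g • C = Cᶜ → g * p * g⁻¹ = p⁻¹) :
    False := by
  have hO := orb_treeSet hE hC
  have hCO := mem_orb C
  obtain ⟨P, hP1, hP2, hP3, hP4⟩ := exists_P C p hp ha
  set u := tv (orb C) Cᶜ with hu
  have hPC : P C = p := by have := hP3 1; simpa using this
  have huV : IsVert (orb C) u := tv_isVert hO (hO.compl C hCO)
  have hreach : ∀ g : G, Reach (orb C) u (g • u) := by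
    intro g
    rw [hu, tv_smul hO]
    exact reach_tv hO (hO.compl C hCO) (hO.inv g _ (hO.compl C hCO))
  obtain ⟨φ, hφ⟩ := exists_endo hO P hP1 hP2 u hreach
  have hpC' : C ⊂ p⁻¹ • C := by
    rw [← smul_ssub (g := p), smul_inv_smul]; exact hpC
  have hPD : ∀ D ∈ orb C, P D • D ⊆ D := by
    rintro D ⟨g, rfl | rfl⟩
    · rw [hP3, smul_smul, inv_mul_cancel_right, mul_smul, smul_sub]; exact hpC.subset
    · rw [hP4, smul_smul, inv_mul_cancel_right, mul_smul, smul_sub, smul_compl]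
      exact Set.compl_subset_compl.2 hpC'.subset
  -- the key claim
  have key : ∀ (L : List (Set G)) (D : Set G) (v w : Set (Set G)), IsPath (orb C) v (D :: L) w →
      Red (D :: L) → D ∈ val P (D :: L) • w := by
    intro L
    induction L with
    | nil =>
      intro D v w h hr
      have hw : tv (orb C) D = w := h.2.2
      subst hw
      have hV := (tv_isVert hO h.1).smul hO (val P [D])
      refine hV.up (P D • D) ?_ D h.1 (hPD D h.1)
      rw [val_cons, val_nil, mul_one]
      exact Set.smul_mem_smul_set (mem_tv h.1)
    | cons D' L ih =>
      intro D v w h hr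
      have h1 : D' ∈ val P (D' :: L) • w := ih D' _ w h.2.2 hr.tail
      have h2 : D' ⊂ D := (List.isChain_cons_cons.1 hr).1
      have hwV : IsVert (orb C) w := h.2.2.end_isVert hO (tv_isVert hO h.1)
      have h3 : D ∈ val P (D' :: L) • w := (hwV.smul hO _).up _ h1 _ h.1 h2.subset
      refine (hwV.smul hO _).up (P D • D) ?_ D h.1 (hPD D h.1)
      rw [val_cons, mul_smul]
      exact Set.smul_mem_smul_set h3
  have key2 : ∀ (g : G) (D : Set G) (L : List (Set G)), IsPath (orb C) u (D :: L) (g • u) →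
      Red (D :: L) → D ∈ φ g • u ∧ D ∉ u := by
    intro g D L h hr
    refine ⟨?_, h.not_mem_start hO⟩
    rw [hφ g _ h, mul_smul]
    exact key L D u _ h hr
  have hred : ∀ g : G, ∃ L, IsPath (orb C) u L (g • u) ∧ Red L := by
    intro g
    obtain ⟨L, hL⟩ := hreach g
    obtain ⟨M, h1, h2, -⟩ := hL.reduce hO
    exact ⟨M, h1, h2⟩
  have hinj : Function.Injective φ := by
    rw [injective_iff_map_eq_one]
    intro g hg
    obtain ⟨L, h1, h2⟩ := hred g
    rcases L with _ | ⟨D, L⟩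
    · have := hφ g _ h1
      rw [hg] at this
      simpa using this.symm
    · obtain ⟨h3, h4⟩ := key2 g D L h1 h2
      rw [hg, one_smul] at h3
      exact absurd h3 h4
  obtain ⟨g, hg⟩ := hco φ hinj p
  have hCu : C ∉ u := not_mem_tv_compl hO hCO
  have hCpu : C ∈ p • u := by
    rw [smul_mem_v]
    exact mem_tv_compl_of_ssubset (hO.inv _ _ hCO) hpC'
  obtain ⟨L, h1, h2⟩ := hred g
  rcases L with _ | ⟨D, L⟩
  · have h3 := hφ g _ h1
    have h4 : u = g • u := h1
    rw [hg, val_nil, one_mul] at h3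
    rw [h3, ← h4] at hCpu
    exact hCu hCpu
  · obtain ⟨h3, h4⟩ := key2 g D L h1 h2
    rw [hg] at h3
    have hDC : D = C := by
      rcases tv_eq hO (hO.compl C hCO) h1.1 h1.2.1 with h5 | h5
      · rwa [cc] at h5
      · exfalso
        have hV := huV.smul hO p
        have : Dᶜ ∈ p • u := hV.up C hCpu _ (hO.compl D h1.1) (Set.subset_compl_comm.1 h5.subset)
        exact (hV.xor D h1.1).1 this h3
    subst hDC
    have h5 := hφ g _ h1
    rw [hg, val_cons, hPC, mul_assoc, eq_comm, mul_eq_left] at h5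
    rcases L with _ | ⟨D', L⟩
    · rw [val_nil, one_mul] at h5
      have := h1.mem_end hO h2
      rw [h5, one_smul] at this
      exact hCu this
    · have h6 := key L D' _ _ h1.2.2 h2.tail
      rw [smul_smul, h5, one_smul] at h6
      exact hCu (huV.up _ h6 _ hCO (List.isChain_cons_cons.1 h2).1.subset)

theorem lemmaI (hco : CoHopfian G) (hE : TreeSet E) {C : Set G} (hC : C ∈ E) {p : G}
    (hp : p ∈ ZC C) (hpC : p • C ⊂ C) : False := by
  by_cases h : ∃ g0 : G, g0 • C = Cᶜ
  · obtain ⟨g0, h0⟩ := h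
    refine lemmaI_aux hco hE hC (p := p * (g0 * p⁻¹ * g0⁻¹))
      ((ZC C).mul_mem hp (ZC_conj h0 ((ZC C).inv_mem hp))) ?_ (admissible_of h0 hp)
    have h1 : p⁻¹ • Cᶜ ⊂ Cᶜ := by
      rw [smul_compl, compl_ss, ← smul_ssub (g := p), smul_inv_smul]; exact hpC
    have h2 : (g0 * p⁻¹ * g0⁻¹) • C ⊂ C := by
      rw [mul_smul, mul_smul, inv_smul_compl h0]
      conv_rhs => rw [← smul_compl_eq h0]
      exact smul_ssub.2 h1
    rw [mul_smul]
    exact (smul_ssub.2 h2).trans hpC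
  · push Not at h
    exact lemmaI_aux hco hE hC hp hpC fun g hg => absurd hg (h g)

end LemmaI
end PrimeProof

namespace PrimeProof
universe u v w
open scoped Pointwise
set_option linter.unusedSectionVars false

section LemmaII
variable {G : Type u} [Group G] {E : Set (Set G)}

structure Ctx (E : Set (Set G)) : Prop where
  co : CoHopfian G
  tree : TreeSet E
  hyp : ∀ y : G, ¬ IsOfFinOrder y → ∃ C ∈ E, ∃ n : ℕ, 1 ≤ n ∧ y ^ n • C ⊂ C
  move : ∀ C ∈ E, ∃ g : G, g • C ⊂ C
  inf : ∀ H : Subgroup G, (H : Set G).Infinite → ∃ y ∈ H, ¬ IsOfFinOrder y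

/-- a vertex all of whose members meet a fixed finite set -/
def Anch (v : Set (Set G)) : Prop := ∃ F : Set G, F.Finite ∧ ∀ D ∈ v, (D ∩ F).Nonempty

theorem tv_anch {E : Set (Set G)} (hE : TreeSet E) {C : Set G} (hC : C ∈ E) : Anch (tv E C) := by
  obtain ⟨x, hx⟩ := hE.ne C hC
  obtain ⟨y, hy⟩ := hE.ne Cᶜ (hE.compl C hC)
  refine ⟨{x, y}, Set.toFinite _, ?_⟩
  rintro D ⟨-, h | h⟩
  · exact ⟨x, h hx, by simp⟩
  · exact ⟨y, h.subset hy, by simp⟩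

theorem anch_finite {E : Set (Set G)} (hE : TreeSet E) {v : Set (Set G)} (hv : v ⊆ E) (ha : Anch v)
    (y : G) : {D | D ∈ v ∧ y ∉ D}.Finite := by
  obtain ⟨F, hF, h⟩ := ha
  refine (hF.biUnion fun x _ => hE.fin x y).subset ?_
  rintro D ⟨h1, h2⟩
  obtain ⟨x, hx, hxF⟩ := h D h1
  simp only [Set.mem_iUnion]
  exact ⟨x, hxF, hv h1, hx, h2⟩

theorem pow_smul_sub {a : G} {C : Set G} (h : a • C ⊂ C) (n : ℕ) : a ^ n • C ⊆ C := by
  induction n with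
  | zero => simp
  | succ n ih =>
    rw [pow_succ, mul_smul]
    exact (smul_sub.2 h.subset).trans ih

theorem pow_smul_ssub {a : G} {C : Set G} (h : a • C ⊂ C) {i j : ℕ} (hij : i < j) :
    a ^ j • C ⊂ a ^ i • C := by
  obtain ⟨k, rfl⟩ := Nat.exists_eq_add_of_lt hij
  rw [add_assoc, pow_add, mul_smul, smul_ssub, pow_succ', mul_smul]
  exact (smul_sub.2 (pow_smul_sub h k)).trans_ssubset h

theorem pow_smul_inj {a : G} {C : Set G} (h : a • C ⊂ C) :
    Function.Injective (fun n : ℕ => a ^ n • C) := by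
  intro i j hij
  rcases lt_trichotomy i j with h1 | h1 | h1
  · exact absurd hij.symm (pow_smul_ssub h h1).ne
  · exact h1
  · exact absurd hij (pow_smul_ssub h h1).ne

theorem no_fix_aux {E : Set (Set G)} (hE : TreeSet E) {v : Set (Set G)} (hv : v ⊆ E) (ha : Anch v)
    {a : G} (hav : a • v = v) {C : Set G} (hC : C ∈ v) (h : a • C ⊂ C) : False := by
  obtain ⟨y, hy⟩ := hE.ne Cᶜ (hE.compl C (hv hC))
  have h1 : ∀ n : ℕ, a ^ n • C ∈ v := by
    intro n
    induction n with
    | zero => simpa using hC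
    | succ n ih =>
      rw [pow_succ', mul_smul, ← hav]
      exact Set.smul_mem_smul_set ih
  have := Set.infinite_range_of_injective (pow_smul_inj h)
  refine this ((anch_finite hE hv ha y).subset ?_)
  rintro _ ⟨n, rfl⟩
  exact ⟨h1 n, fun h2 => hy (pow_smul_sub h n h2)⟩

theorem inv_compl_ss {a : G} {C : Set G} (h : a • C ⊂ C) : a⁻¹ • Cᶜ ⊂ Cᶜ := by
  rw [smul_compl, compl_ss, ← smul_ssub (g := a), smul_inv_smul]; exact h

theorem Ctx.no_fix (hX : Ctx E) {v : Set (Set G)} (hv : IsVert E v) (ha : Anch v) {y : G}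
    (hyv : y • v = v) : IsOfFinOrder y := by
  by_contra hy
  obtain ⟨C, hC, n, -, h⟩ := hX.hyp y hy
  have hn : y ^ n • v = v := by
    have : y ^ n ∈ MulAction.stabilizer G v := Subgroup.pow_mem _ hyv n
    exact this
  by_cases hCv : C ∈ v
  · exact no_fix_aux hX.tree hv.sub ha hn hCv h
  · refine no_fix_aux hX.tree hv.sub ha (a := (y ^ n)⁻¹) ?_ ((hv.xor C hC).2 hCv) (inv_compl_ss h)
    rw [inv_smul_eq_iff, hn]

theorem Ctx.stab_vert_finite (hX : Ctx E) {v : Set (Set G)} (hv : IsVert E v) (ha : Anch v) :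
    (MulAction.stabilizer G v : Set G).Finite := by
  by_contra h
  obtain ⟨y, h1, h2⟩ := hX.inf _ h
  exact h2 (hX.no_fix hv ha h1)

theorem Ctx.stab_fin (hX : Ctx E) {C : Set G} (hC : C ∈ E) {y : G} (hy : y • C = C) :
    IsOfFinOrder y := by
  refine hX.no_fix (tv_isVert hX.tree hC) (tv_anch hX.tree hC) ?_
  rw [tv_smul hX.tree, hy]

theorem Ctx.stab_finite (hX : Ctx E) {C : Set G} (hC : C ∈ E) :
    (MulAction.stabilizer G C : Set G).Finite := by
  by_contra h
  obtain ⟨y, h1, h2⟩ := hX.inf _ h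
  exact h2 (hX.stab_fin hC h1)

theorem Ctx.inv_fin (hX : Ctx E) {C : Set G} (hC : C ∈ E) {y : G} (hy : y • C = Cᶜ) :
    IsOfFinOrder y := by
  have : IsOfFinOrder (y ^ 2) := hX.stab_fin hC (by rw [pow_two, mul_smul, hy, smul_compl_eq hy])
  exact (isOfFinOrder_pow.1 this).resolve_right (by norm_num)

theorem Ctx.stab_pair_finite (hX : Ctx E) {C : Set G} (hC : C ∈ E) :
    {y : G | y • C = C ∨ y • C = Cᶜ}.Finite := by
  have h1 : {y : G | y • C = C}.Finite := hX.stab_finite hC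
  have h2 : {y : G | y • C = Cᶜ}.Finite := by
    by_cases h : ∃ g : G, g • C = Cᶜ
    · obtain ⟨g, hg⟩ := h
      refine (h1.image (fun k => g * k)).subset ?_
      intro y hy
      refine ⟨g⁻¹ * y, ?_, by simp⟩
      have hy : y • C = Cᶜ := hy
      change (g⁻¹ * y) • C = C
      rw [mul_smul, hy, smul_compl, inv_smul_compl hg, cc]
    · convert Set.finite_empty
      ext y
      simp only [Set.mem_ofPred_eq, Set.mem_empty_iff_false, iff_false]
      exact fun hy => h ⟨y, hy⟩
  exact (h1.union h2).subset fun y hy => hy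

theorem ZC_compl (C : Set G) : ZC Cᶜ = ZC C := by
  ext z
  rw [mem_ZC, mem_ZC]
  simp only [smul_compl, compl_inj_iff]

/-- a central element never moves an edge to a comparable one -/
theorem Ctx.no_move (hX : Ctx E) {C : Set G} (hC : C ∈ E) {z : G} (hz : z ∈ ZC C)
    (hio : ¬ IsOfFinOrder z) : z • C ⊆ Cᶜ ∨ Cᶜ ⊆ z • C := by
  have hne : z • C ≠ C := fun h => hio (hX.stab_fin hC h)
  rcases hX.tree.nested _ (hX.tree.inv z C hC) _ hC with h | h | h | h
  · exact (lemmaI hX.co hX.tree hC hz (h.ssubset_of_ne hne)).elim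
  · exact Or.inl h
  · exact Or.inr (compl_s'.1 h)
  · exfalso
    refine lemmaI hX.co hX.tree hC ((ZC C).inv_mem hz) (p := z⁻¹) ?_
    rw [← smul_ssub (g := z), smul_inv_smul]
    exact (Set.compl_subset_compl.1 h).ssubset_of_ne hne.symm

theorem Ctx.no_move' (hX : Ctx E) {C : Set G} (hC : C ∈ E) {z : G} (hz : z ∈ ZC C) :
    z • C = C ∨ z • C ⊆ Cᶜ ∨ Cᶜ ⊆ z • C := by
  by_cases hne : z • C = C
  · exact Or.inl hne
  rcases hX.tree.nested _ (hX.tree.inv z C hC) _ hC with h | h | h | h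
  · exact (lemmaI hX.co hX.tree hC hz (h.ssubset_of_ne hne)).elim
  · exact Or.inr (Or.inl h)
  · exact Or.inr (Or.inr (compl_s'.1 h))
  · exfalso
    refine lemmaI hX.co hX.tree hC ((ZC C).inv_mem hz) (p := z⁻¹) ?_
    rw [← smul_ssub (g := z), smul_inv_smul]
    exact (Set.compl_subset_compl.1 h).ssubset_of_ne (Ne.symm hne)

theorem zpow_not_fin {z : G} (hio : ¬ IsOfFinOrder z) {n : ℕ} (hn : n ≠ 0) :
    ¬ IsOfFinOrder (z ^ n) := by
  rw [isOfFinOrder_pow]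
  tauto

theorem Ctx.no_inv (hX : Ctx E) {C : Set G} (hC : C ∈ E) {z : G} (hz : z ∈ ZC C)
    (hio : ¬ IsOfFinOrder z) (g : G) : g • C ≠ Cᶜ := by
  intro hg
  have hgi := inv_smul_compl hg
  have hgc := smul_compl_eq hg
  let zh : ℕ → G := fun n => z ^ n * (g * (z ^ n)⁻¹ * g⁻¹)
  have hzh : ∀ n, zh n • C = C ∨ zh n • C = Cᶜ := by
    intro n
    have hzn : z ^ n ∈ ZC C := (ZC C).pow_mem hz n
    have hZ : zh n ∈ ZC C := (ZC C).mul_mem hzn (ZC_conj hg ((ZC C).inv_mem hzn))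
    have had : g * zh n * g⁻¹ = (zh n)⁻¹ := admissible_of hg hzn g hg
    have e1 : (zh n)⁻¹ • Cᶜ = g • (zh n • C) := by
      rw [← had, mul_smul, mul_smul, smul_compl g⁻¹, hgi, cc]
    rcases hX.no_move' hC hZ with h | h | h
    · exact Or.inl h
    · right
      have a1 : C ⊆ (zh n)⁻¹ • Cᶜ := by
        rw [← smul_sub (g := zh n), smul_inv_smul]; exact h
      have a2 : g • (zh n • C) ⊆ C := by
        have := smul_sub (g := g).2 h
        rwa [hgc] at this
      rw [← e1] at a2
      have a3 := a2.antisymm a1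
      have a4 : Cᶜ = zh n • C := by rw [← a3, smul_inv_smul, a3]
      exact a4.symm
    · right
      have a1 : (zh n)⁻¹ • Cᶜ ⊆ C := by
        rw [← smul_sub (g := zh n), smul_inv_smul]; exact h
      have a2 : C ⊆ g • (zh n • C) := by
        conv_lhs => rw [← hgc]
        exact smul_sub.2 h
      rw [← e1] at a2
      have a3 := a1.antisymm a2
      have a4 : Cᶜ = zh n • C := by rw [← a3, smul_inv_smul, a3]
      exact a4.symm
  have hfin := hX.stab_pair_finite hC
  obtain ⟨i, j, hij, he⟩ : ∃ i j : ℕ, i < j ∧ zh i = zh j := by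
    have : ¬ Function.Injective zh := by
      intro hinj
      exact Set.infinite_range_of_injective hinj (hfin.subset (by rintro _ ⟨n, rfl⟩; exact hzh n))
    unfold Function.Injective at this
    push Not at this
    obtain ⟨i, j, h1, h2⟩ := this
    rcases lt_or_gt_of_ne h2 with h | h
    · exact ⟨i, j, h, h1⟩
    · exact ⟨j, i, h, h1.symm⟩
  obtain ⟨k, rfl⟩ := Nat.exists_eq_add_of_lt hij
  set m := k + 1 with hm
  have hy : z ^ m * g = g * z ^ m := by
    have he' : z ^ i * (g * (z ^ i)⁻¹ * g⁻¹) = z ^ (i + m) * (g * (z ^ (i + m))⁻¹ * g⁻¹) := he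
    rw [pow_add, mul_inv_rev, mul_assoc (z ^ i), mul_right_inj] at he'
    have hab : z ^ i * z ^ m = z ^ m * z ^ i := by rw [← pow_add, ← pow_add, add_comm]
    generalize z ^ i = a at *
    generalize z ^ m = b at *
    calc b * g = (b * (g * (b⁻¹ * a⁻¹) * g⁻¹)) * (g * (a * b)) := by group
      _ = (g * a⁻¹ * g⁻¹) * (g * (a * b)) := by rw [he']
      _ = g * b := by group
  have hio' : ¬ IsOfFinOrder (z ^ m) := zpow_not_fin hio (by omega)
  have hyC : z ^ m • Cᶜ = g • (z ^ m • C) := by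
    rw [smul_smul, ← hy, mul_smul, hg]
  rw [smul_compl] at hyC
  rcases hX.no_move hC ((ZC C).pow_mem hz m) hio' with h | h
  · have h1 := smul_sub (g := g).2 h
    rw [← hyC, hgc, compl_s'] at h1
    exact hio' (hX.inv_fin hC (h.antisymm h1))
  · have h1 := smul_sub (g := g).2 h
    rw [← hyC, hgc, Set.subset_compl_comm] at h1
    exact hio' (hX.inv_fin hC (h1.antisymm h))

end LemmaII
end PrimeProof

namespace PrimeProof
universe u v w
open scoped Pointwise
set_option linter.unusedSectionVars false

section LemmaII2
variable {G : Type u} [Group G] {E : Set (Set G)}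

theorem stab_smul_ncard (g : G) (C : Set G) :
    (MulAction.stabilizer G (g • C) : Set G).ncard = (MulAction.stabilizer G C : Set G).ncard := by
  have : (MulAction.stabilizer G (g • C) : Set G) =
      (fun k => g * k * g⁻¹) '' (MulAction.stabilizer G C : Set G) := by
    ext k
    simp only [SetLike.mem_coe, MulAction.mem_stabilizer_iff, Set.mem_image]
    constructor
    · intro h
      refine ⟨g⁻¹ * k * g, ?_, by group⟩
      rw [mul_smul, mul_smul, h, inv_smul_smul]
    · rintro ⟨k', h, rfl⟩
      rw [smul_smul, inv_mul_cancel_right, mul_smul, h]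
  rw [this, Set.ncard_image_of_injective]
  intro a b h
  simpa using h

theorem stab_compl (C : Set G) : MulAction.stabilizer G Cᶜ = MulAction.stabilizer G C := by
  ext k
  simp only [MulAction.mem_stabilizer_iff, smul_compl, compl_inj_iff]

theorem orb_stab_ncard {C D : Set G} (h : D ∈ orb C) :
    (MulAction.stabilizer G D : Set G).ncard = (MulAction.stabilizer G C : Set G).ncard := by
  obtain ⟨g, rfl | rfl⟩ := h
  · exact stab_smul_ncard g C
  · rw [stab_smul_ncard, stab_compl]

theorem orb_eq {C D : Set G} (h : D ∈ orb C) : orb D = orb C := by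
  have key : ∀ {C D : Set G}, D ∈ orb C → orb D ⊆ orb C := by
    rintro C D ⟨g, rfl | rfl⟩ X ⟨h, rfl | rfl⟩
    · exact ⟨h * g, Or.inl (smul_smul _ _ _)⟩
    · exact ⟨h * g, Or.inr (by rw [← smul_compl, smul_smul])⟩
    · exact ⟨h * g, Or.inr (smul_smul _ _ _)⟩
    · exact ⟨h * g, Or.inl (by rw [← smul_compl, cc, smul_smul])⟩
  refine (key h).antisymm (key ?_)
  obtain ⟨g, rfl | rfl⟩ := h
  · exact ⟨g⁻¹, Or.inl (by rw [inv_smul_smul])⟩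
  · exact ⟨g⁻¹, Or.inr (by rw [← smul_compl, cc, inv_smul_smul])⟩

/-- the interval used in the minimisation -/
def intv (C D : Set G) (z : G) : Set (Set G) := {X | X ∈ orb C ∧ z • D ⊂ X ∧ X ⊂ Dᶜ}

theorem Ctx.exists_adjacent (hX : Ctx E) {C : Set G} (hC : C ∈ E) {z : G} (hz : z ∈ ZC C)
    (hio : ¬ IsOfFinOrder z) : ∃ D ∈ orb C, z ∈ ZC D ∧ z • tv (orb D) Dᶜ = tv (orb D) Dᶜ := by
  have hO := orb_treeSet hX.tree hC
  have hsub := orb_sub hX.tree hC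
  obtain ⟨D0, hD0⟩ : ∃ D, D ∈ orb C ∧ z ∈ ZC D ∧ z • D ⊆ Dᶜ := by
    rcases hX.no_move hC hz hio with h | h
    · exact ⟨C, mem_orb C, hz, h⟩
    · refine ⟨Cᶜ, hO.compl C (mem_orb C), by rw [ZC_compl]; exact hz, ?_⟩
      rw [smul_compl]; exact Set.compl_subset_compl.2 h
  obtain ⟨D, ⟨hD, hzD, hdis⟩, hmin⟩ := exists_minimalFor_of_wellFoundedLT
    (fun D => D ∈ orb C ∧ z ∈ ZC D ∧ z • D ⊆ Dᶜ) (fun D => (intv C D z).ncard) ⟨D0, hD0⟩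
  have hDE := hsub hD
  have hss : z • D ⊂ Dᶜ := hdis.ssubset_of_ne (hX.no_inv hDE hzD hio z)
  have hDc := hO.compl D hD
  have hzDO := hO.inv z D hD
  obtain ⟨X, hXO, h1, h2, h3⟩ := exists_cover hO hDc hzDO hss
  refine ⟨D, hD, hzD, ?_⟩
  rw [orb_eq hD]
  by_cases hXz : X = z • D
  · subst hXz
    rw [tv_smul hO, smul_compl]
    exact (tv_cover hO hDc hXO h2 h3).symm
  exfalso
  have h1' : z • D ⊂ X := h1.ssubset_of_ne (Ne.symm hXz)
  have hfix : ∀ k : G, k • D = D → ¬ X ⊂ k • X := by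
    intro k hk hlt
    refine h3 _ (hO.inv k X hXO) hlt ?_
    have := smul_ssub (g := k).2 h2
    rwa [smul_compl, hk] at this
  have hKX : ∀ k : G, k • D = D → k • X = X := by
    intro k hk
    have hkz : z • D ⊆ k • X := by
      have := smul_sub (g := k).2 h1
      rwa [smul_smul, mem_ZC.1 hzD k hk, mul_smul, hk] at this
    have hkD : k • X ⊂ Dᶜ := by
      have := smul_ssub (g := k).2 h2
      rwa [smul_compl, hk] at this
    obtain ⟨a, ha⟩ := hO.ne _ hzDO
    obtain ⟨b, hb⟩ := hO.ne _ hD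
    by_contra hne
    rcases hO.nested _ (hO.inv k X hXO) _ hXO with h | h | h | h
    · have hk' : k⁻¹ • D = D := by rw [inv_smul_eq_iff, hk]
      refine hfix k⁻¹ hk' ?_
      rw [← smul_ssub (g := k), smul_inv_smul]
      exact h.ssubset_of_ne hne
    · exact h (hkz ha) (h1 ha)
    · have : b ∈ X := h (fun hbk => hkD.subset hbk hb)
      exact h2.subset this hb
    · exact hfix k hk ((Set.compl_subset_compl.1 h).ssubset_of_ne (Ne.symm hne))
  have hKeq : (MulAction.stabilizer G D : Set G) = MulAction.stabilizer G X := by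
    refine Set.eq_of_subset_of_ncard_le (fun k hk => hKX k hk) ?_ (hX.stab_finite (hsub hXO))
    rw [orb_stab_ncard hD, orb_stab_ncard hXO]
  have hzX : z ∈ ZC X := by
    unfold ZC; rw [← hKeq]; exact hzD
  have hXE := hsub hXO
  have hXc := hO.compl X hXO
  have hDX : D ⊂ Xᶜ := by rw [← compl_ss, cc]; exact h2
  rcases hX.no_move hXE hzX hio with h | h
  · -- z X disjoint from X
    have b1 : D ⊂ z⁻¹ • X := by rw [← smul_ssub (g := z), smul_inv_smul]; exact h1'
    have b2 : X ⊆ (z⁻¹ • X)ᶜ := by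
      rw [← smul_sub (g := z), ← smul_compl, smul_inv_smul]; exact h
    have b3 : (z⁻¹ • X)ᶜ ⊂ Dᶜ := compl_ss.2 b1
    by_cases hb : X = (z⁻¹ • X)ᶜ
    · refine hX.no_inv hXE ((ZC X).inv_mem hzX) (by rwa [isOfFinOrder_inv_iff]) z⁻¹ ?_
      conv_rhs => rw [hb]
      rw [cc]
    · exact h3 _ (hO.compl _ (hO.inv _ _ hXO)) (b2.ssubset_of_ne hb) b3
  · have hcand : Xᶜ ∈ orb C ∧ z ∈ ZC Xᶜ ∧ z • Xᶜ ⊆ Xᶜᶜ := by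
      refine ⟨hXc, by rw [ZC_compl]; exact hzX, ?_⟩
      rw [smul_compl]; exact Set.compl_subset_compl.2 h
    have hfin : (intv C D z).Finite :=
      (hO.interval_finite hDc hzDO).subset fun Y hY => ⟨hY.1, hY.2.1.subset, hY.2.2.subset⟩
    have hlt : (intv C Xᶜ z).ncard < (intv C D z).ncard := by
      refine Set.ncard_lt_ncard ⟨?_, ?_⟩ hfin
      · rintro Y ⟨c1, c2, c3⟩
        refine ⟨c1, (smul_ssub.2 hDX).trans c2, ?_⟩
        rw [cc] at c3
        exact c3.trans h2
      · intro hs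
        have := hs (show X ∈ intv C D z from ⟨hXO, h1', h2⟩)
        have c3 := this.2.2
        rw [cc] at c3
        exact c3.ne rfl
    have := hmin hcand hlt.le
    exact absurd this (not_le.2 hlt)

/-- an edge towards `w`, fixed by everything fixing both ends -/
theorem fix_edge (hE : TreeSet E) {v w : Set (Set G)} (hv : IsVert E v) (h : Reach E v w)
    (hne : v ≠ w) : ∃ D ∈ E, v = tv E Dᶜ ∧ D ∈ w ∧
      ∀ a : G, a • v = v → a • w = w → a • D = D := by
  obtain ⟨L, hL⟩ := h
  obtain ⟨M, h1, h2, -⟩ := hL.reduce hE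
  rcases M with _ | ⟨D, M⟩
  · exact absurd h1 hne
  · have hDw := h1.mem_end hE h2
    have hw := h1.end_isVert hE hv
    refine ⟨D, h1.1, h1.2.1, hDw, fun a hav haw => ?_⟩
    have haD : a • D ∈ E := hE.inv a D h1.1
    have haDw : a • D ∈ w := by rw [← haw]; exact Set.smul_mem_smul_set hDw
    have e : tv E Dᶜ = tv E (a • D)ᶜ := by
      rw [← smul_compl, ← tv_smul hE, ← h1.2.1, hav]
    rcases tv_eq hE (hE.compl D h1.1) haD e with h3 | h3
    · rwa [cc] at h3
    · exfalso
      have := hw.up D hDw _ (hE.compl _ haD) (Set.subset_compl_comm.1 h3.subset)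
      exact (hw.xor _ haD).1 this haDw

end LemmaII2
end PrimeProof

namespace PrimeProof
universe u v w
open scoped Pointwise
set_option linter.unusedSectionVars false

section Twist
variable {G : Type u} [Group G] {E : Set (Set G)}

/-- Dehn twist along the edge `C` by an element fixing the origin of `C` -/
theorem exists_twist {C : Set G} (hO : TreeSet (orb C)) {y : G} (hy : y ∈ ZC C)
    (hyu : y • tv (orb C) Cᶜ = tv (orb C) Cᶜ) (hinv : ∀ g : G, g • C ≠ Cᶜ) :
    ∃ φ : G →* G, Function.Injective φ ∧
      (∀ a : G, a • tv (orb C) Cᶜ = tv (orb C) Cᶜ → φ a = a) ∧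
      (∀ b : G, b • tv (orb C) C = tv (orb C) C → φ b = y * b * y⁻¹) := by
  have hCO := mem_orb C
  obtain ⟨P, hP1, hP2, hP3, hP4⟩ := exists_P C y hy fun g hg => absurd hg (hinv g)
  set u := tv (orb C) Cᶜ with hu
  have hPC : P C = y := by have := hP3 1; simpa using this
  have huV : IsVert (orb C) u := tv_isVert hO (hO.compl C hCO)
  have hreach : ∀ g : G, Reach (orb C) u (g • u) := by
    intro g
    rw [hu, tv_smul hO]
    exact reach_tv hO (hO.compl C hCO) (hO.inv g _ (hO.compl C hCO))
  obtain ⟨φ, hφ⟩ := exists_endo hO P hP1 hP2 u hreach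
  have hinv' : ∀ g h : G, g • C ≠ h • Cᶜ := by
    intro g h e
    refine hinv (h⁻¹ * g) ?_
    rw [mul_smul, e, inv_smul_smul]
  have hyi : y⁻¹ • u = u := by rw [inv_smul_eq_iff, hyu]
  have key : ∀ (L : List (Set G)) (D : Set G) (v w : Set (Set G)), IsPath (orb C) v (D :: L) w →
      Red (D :: L) → ∃ X ∈ orb C, X ∈ val P (D :: L) • w ∧ tv (orb C) Dᶜ = tv (orb C) Xᶜ ∧
        ((∃ h : G, D = h • C ∧ X = (h * y) • C) ∨ (∃ h : G, D = h • Cᶜ ∧ X = D)) := by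
    have plus : ∀ h : G, tv (orb C) (h • C)ᶜ = tv (orb C) ((h * y) • C)ᶜ := by
      intro h
      rw [← smul_compl, ← smul_compl, ← tv_smul hO, ← tv_smul hO, ← hu, mul_smul, hyu]
    intro L
    induction L with
    | nil =>
      intro D v w h hr
      have hw : tv (orb C) D = w := h.2.2
      subst hw
      obtain ⟨h', rfl | rfl⟩ := id h.1
      · refine ⟨(h' * y) • C, hO.inv _ _ hCO, ?_, plus h', Or.inl ⟨h', rfl, rfl⟩⟩
        rw [val_cons, val_nil, mul_one, hP3]
        have : (h' * y) • C = (h' * y * h'⁻¹) • (h' • C) := by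
          rw [smul_smul, inv_mul_cancel_right]
        rw [this]
        exact Set.smul_mem_smul_set (mem_tv h.1)
      · refine ⟨h' • Cᶜ, h.1, ?_, rfl, Or.inr ⟨h', rfl, rfl⟩⟩
        rw [val_cons, val_nil, mul_one, hP4]
        have : (h' * y⁻¹ * h'⁻¹) • tv (orb C) (h' • Cᶜ) = tv (orb C) (h' • Cᶜ) := by
          rw [← tv_smul hO, smul_smul, inv_mul_cancel_right, mul_smul, ← hu, hyi]
        rw [this]
        exact mem_tv h.1
    | cons D' L ih =>
      intro D v w h hr
      obtain ⟨X, hX1, hX2, hX3, hX4⟩ := ih D' _ w h.2.2 hr.tail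
      have h2 : D' ⊂ D := (List.isChain_cons_cons.1 hr).1
      have hwV : IsVert (orb C) w := h.2.2.end_isVert hO (tv_isVert hO h.1)
      have hWV := hwV.smul hO (val P (D' :: L))
      have htv : tv (orb C) D = tv (orb C) Xᶜ := by rw [← hX3]; exact h.2.2.2.1
      have hDO := h.1
      obtain ⟨h', rfl | rfl⟩ := id h.1
      · refine ⟨(h' * y) • C, hO.inv _ _ hCO, ?_, plus h', Or.inl ⟨h', rfl, rfl⟩⟩
        have hin : h' • C ∈ val P (D' :: L) • w := by
          rcases tv_eq hO hDO hX1 htv with e | e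
          · exfalso
            rcases hX4 with ⟨k, -, rfl⟩ | ⟨k, -, rfl⟩
            · rw [← smul_compl] at e
              exact hinv' _ _ e
            · rw [e] at h2
              exact hO.not_compl_sub hDO h2.subset
          · exact hWV.up X hX2 _ hDO e.subset
        have : (h' * y) • C = (h' * y * h'⁻¹) • (h' • C) := by
          rw [smul_smul, inv_mul_cancel_right]
        rw [val_cons, mul_smul, hP3, this]
        exact Set.smul_mem_smul_set hin
      · refine ⟨h' • Cᶜ, hDO, ?_, rfl, Or.inr ⟨h', rfl, rfl⟩⟩
        have hYO : (h' * y) • Cᶜ ∈ orb C := hO.inv _ _ (hO.compl C hCO)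
        have hin : (h' * y) • Cᶜ ∈ val P (D' :: L) • w := by
          have htY : tv (orb C) ((h' * y) • Cᶜ) = tv (orb C) Xᶜ := by
            rw [← htv, ← tv_smul hO, ← tv_smul hO, ← hu, mul_smul, hyu]
          rcases tv_eq hO hYO hX1 htY with e | e
          · exfalso
            rw [← smul_compl, cc] at e
            rcases hX4 with ⟨k, rfl, hk⟩ | ⟨k, hk, hk'⟩
            · rw [e] at hk
              have h5 : (y⁻¹ * (h'⁻¹ * k) * y) • C = C := by
                rw [mul_assoc, mul_smul, mul_assoc, mul_smul, ← hk, mul_smul, inv_smul_smul,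
                  inv_smul_smul]
              have h6 := mem_ZC.1 hy _ h5
              have h7 : h'⁻¹ * k = y⁻¹ * (h'⁻¹ * k) * y := by
                calc h'⁻¹ * k = y * (y⁻¹ * (h'⁻¹ * k) * y) * y⁻¹ := by group
                  _ = y⁻¹ * (h'⁻¹ * k) * y := by rw [← h6, mul_inv_cancel_right]
              rw [← h7, mul_smul, inv_smul_eq_iff] at h5
              rw [h5] at h2
              have := hO.not_sub_compl (hO.inv h' C hCO)
              rw [← smul_compl] at this
              exact this h2.subset
            · rw [hk', hk] at e
              exact hinv' _ _ e.symm
          · exact hWV.up X hX2 _ hYO e.subset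
        have : h' • Cᶜ = (h' * y⁻¹ * h'⁻¹) • ((h' * y) • Cᶜ) := by
          rw [smul_smul]; congr 1; group
        rw [val_cons, mul_smul, hP4, this]
        exact Set.smul_mem_smul_set hin
  have hred : ∀ g : G, ∃ L, IsPath (orb C) u L (g • u) ∧ Red L := by
    intro g
    obtain ⟨L, hL⟩ := hreach g
    obtain ⟨M, h1, h2, -⟩ := hL.reduce hO
    exact ⟨M, h1, h2⟩
  refine ⟨φ, ?_, ?_, ?_⟩
  · rw [injective_iff_map_eq_one]
    intro g hg
    obtain ⟨L, h1, h2⟩ := hred g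
    rcases L with _ | ⟨D, L⟩
    · have := hφ g _ h1
      rw [hg] at this
      simpa using this.symm
    · exfalso
      obtain ⟨X, hX1, hX2, hX3, -⟩ := key L D u _ h1 h2
      rw [smul_smul, ← hφ g _ h1, hg, one_smul, h1.2.1, hX3] at hX2
      exact not_mem_tv_compl hO hX1 hX2
  · intro a ha
    have := hφ a [] ha.symm
    simpa using this
  · intro b hb
    have hp : IsPath (orb C) u [C, b • Cᶜ] (b • u) := by
      refine ⟨hCO, rfl, hO.inv _ _ (hO.compl C hCO), ?_, ?_⟩
      · rw [← smul_compl, cc, ← tv_smul hO, hb]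
      · show tv (orb C) (b • Cᶜ) = b • u
        rw [hu, tv_smul hO]
    rw [hφ b _ hp, val_cons, val_cons, val_nil, hPC, hP4]
    group

end Twist
end PrimeProof

namespace PrimeProof
universe u v w
open scoped Pointwise
set_option linter.unusedSectionVars false

section LemmaII3
variable {G : Type u} [Group G] {E : Set (Set G)}

theorem Ctx.axis_mem (hX : Ctx E) {C : Set G} (hC : C ∈ E) {t : G} {C' : Set G} (hC' : C' ∈ E)
    (ht : t • C' ⊂ C') (htf : ¬ IsOfFinOrder t)
    (htu : t • tv (orb C) Cᶜ = tv (orb C) Cᶜ) {D : Set G} (hD : D ∈ orb C) (hs : C' ⊆ D) :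
    D ∈ tv (orb C) Cᶜ := by
  have hO := orb_treeSet hX.tree hC
  have hCc := hO.compl C (mem_orb C)
  set u := tv (orb C) Cᶜ with hu
  have huV : IsVert (orb C) u := tv_isVert hO hCc
  by_contra hDu
  obtain ⟨x, hx⟩ := hX.tree.ne C' hC'
  have hfin := anch_finite hO huV.sub (tv_anch hO hCc) x
  have hpu : ∀ i : ℕ, t ^ i • u = u := by
    intro i
    induction i with
    | zero => simp
    | succ i ih => rw [pow_succ, mul_smul, htu, ih]
  have hmem : ∀ i : ℕ, ((t ^ i)⁻¹ • D)ᶜ ∈ {D | D ∈ u ∧ x ∉ D} := by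
    intro i
    constructor
    · rw [huV.xor _ (hO.inv _ _ hD), ← smul_mem_v, hpu]
      exact hDu
    · intro hn
      apply hn
      rw [smul_mem, inv_inv]
      apply hs
      exact pow_smul_sub ht i (by rw [smul_mem, inv_mul_cancel_left]; exact hx)
  refine Set.infinite_of_injective_forall_mem (f := fun i : ℕ => ((t ^ i)⁻¹ • D)ᶜ) ?_ hmem hfin
  intro i j hij
  have hij : (t ^ i)⁻¹ • D = (t ^ j)⁻¹ • D := compl_injective hij
  have h1 : (t ^ j * (t ^ i)⁻¹) • D = D := by rw [mul_smul, hij, smul_inv_smul]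
  have h2 := hX.stab_fin (orb_sub hX.tree hC hD) h1
  by_contra hne
  apply htf
  have h3 : t ^ j * (t ^ i)⁻¹ = t ^ ((j : ℤ) - i) := by
    rw [zpow_sub, zpow_natCast, zpow_natCast]
  rw [h3] at h2
  rw [isOfFinOrder_iff_zpow_eq_one] at h2 ⊢
  obtain ⟨n, hn, h⟩ := h2
  refine ⟨(j - i) * n, mul_ne_zero (by omega) hn, by rw [zpow_mul]; exact h⟩

theorem Ctx.final (hX : Ctx E) {C : Set G} (hC : C ∈ E) {g : G} (hg : ¬ IsOfFinOrder g)
    (hgu : g • tv (orb C) Cᶜ = tv (orb C) Cᶜ)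
    (hcen : ∀ a : G, a • tv (orb C) Cᶜ = tv (orb C) Cᶜ → a * g = g * a) : False := by
  have hO := orb_treeSet hX.tree hC
  have hsub := orb_sub hX.tree hC
  have hCc := hO.compl C (mem_orb C)
  obtain ⟨C', hC', n, hn, hlt⟩ := hX.hyp g hg
  have hC'c := hX.tree.compl C' hC'
  have hpf : ¬ IsOfFinOrder (g ^ n) := zpow_not_fin hg (by omega)
  have hpu : g ^ n • tv (orb C) Cᶜ = tv (orb C) Cᶜ := by
    clear hlt hpf hn
    induction n with
    | zero => simp
    | succ i ih => rw [pow_succ, mul_smul, hgu, ih]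
  set u := tv (orb C) Cᶜ with hu
  have huV : IsVert (orb C) u := tv_isVert hO hCc
  have k1 : ∀ D ∈ orb C, C' ⊆ D → D ∈ u := fun D hD hs =>
    hX.axis_mem hC hC' hlt hpf hpu hD hs
  have k2 : ∀ D ∈ orb C, C'ᶜ ⊆ D → D ∈ u := fun D hD hs =>
    hX.axis_mem hC hC'c (inv_compl_ss hlt) (by rwa [isOfFinOrder_inv_iff])
      (by rw [inv_smul_eq_iff, hpu]) hD hs
  have hueq : ∀ D, D ∈ u ↔ D ∈ orb C ∧ (C' ⊆ D ∨ C'ᶜ ⊆ D) := by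
    intro D
    constructor
    · intro hD
      have hDO := huV.sub hD
      have hn : Dᶜ ∉ u := fun h => (huV.xor D hDO).1 h hD
      refine ⟨hDO, ?_⟩
      rcases hX.tree.nested C' hC' D (hsub hDO) with h | h | h | h
      · exact Or.inl h
      · exact absurd (k1 _ (hO.compl D hDO) h) hn
      · exact Or.inr h
      · exact absurd (k2 _ (hO.compl D hDO) h) hn
    · rintro ⟨h, h1 | h1⟩
      · exact k1 D h h1
      · exact k2 D h h1
  refine lemmaI hX.co hX.tree hC' (p := g ^ n) ?_ hlt
  rw [mem_ZC]
  intro a ha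
  have hau : a • u = u := by
    ext D
    rw [smul_mem_v, hueq, hueq, hO.smul_mem_iff]
    rw [← smul_sub (g := a) (A := C'), ← smul_sub (g := a) (A := C'ᶜ), smul_inv_smul, smul_compl,
      ha]
  have : Commute a g := hcen a hau
  exact this.pow_right n

theorem lemmaII (hX : Ctx E) (hout : OutFinite G) {C : Set G} (hC : C ∈ E) :
    (ZC C : Set G).Finite := by
  by_contra hinf
  obtain ⟨z, hz0, hio⟩ := hX.inf _ hinf
  obtain ⟨D, hD, hz, hzu⟩ := hX.exists_adjacent hC hz0 hio
  replace hC := orb_sub hX.tree hC hD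
  clear hD hz0 hinf
  clear C
  rename' D => C
  have hO := orb_treeSet hX.tree hC
  have hsub := orb_sub hX.tree hC
  have hCO := mem_orb C
  have hCc := hO.compl C hCO
  have hinv := hX.no_inv hC hz hio
  have hpu : ∀ n : ℕ, z ^ n • tv (orb C) Cᶜ = tv (orb C) Cᶜ := by
    intro i
    induction i with
    | zero => simp
    | succ i ih => rw [pow_succ, mul_smul, hzu, ih]
  have htw := fun n : ℕ => exists_twist hO ((ZC C).pow_mem hz n) (hpu n) hinv
  choose φ hφi hφA hφB using htw
  set u := tv (orb C) Cᶜ with hu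
  set w := tv (orb C) C with hw
  have huV : IsVert (orb C) u := tv_isVert hO hCc
  have hwV : IsVert (orb C) w := tv_isVert hO hCO
  let α : ℕ → MulAut G := fun n => MulEquiv.ofBijective (φ n) ⟨hφi n, hX.co _ (hφi n)⟩
  have : (MulAut.conj : G →* MulAut G).range.FiniteIndex := hout
  obtain ⟨j, k, hjk, hq⟩ : ∃ j k : ℕ, j < k ∧
      (α j : MulAut G ⧸ (MulAut.conj : G →* MulAut G).range) = α k := by
    obtain ⟨a, b, hne, h⟩ := Finite.exists_ne_map_eq_of_infinite
      (fun n : ℕ => (α n : MulAut G ⧸ (MulAut.conj : G →* MulAut G).range))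
    rcases lt_or_gt_of_ne hne with h1 | h1
    · exact ⟨a, b, h1, h⟩
    · exact ⟨b, a, h1, h.symm⟩
  rw [QuotientGroup.eq] at hq
  obtain ⟨g0, hg0⟩ := hq
  obtain ⟨g, hg⟩ : ∃ g : G, ∀ x, φ k x = g * φ j x * g⁻¹ := by
    refine ⟨φ j g0, fun x => ?_⟩
    have h1 : α j * MulAut.conj g0 = α k := by rw [hg0, mul_inv_cancel_left]
    have h2 : φ j (g0 * x * g0⁻¹) = φ k x := DFunLike.congr_fun h1 x
    rw [← h2, map_mul, map_mul, map_inv]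
  have hgA : ∀ a : G, a • u = u → a * g = g * a := by
    intro a ha
    have := hg a
    rw [hφA k a ha, hφA j a ha] at this
    rw [eq_mul_inv_iff_mul_eq] at this
    exact this
  have hgz : Commute g z := (hgA z hzu).symm
  set h : G := (z ^ k)⁻¹ * g * z ^ j with hh
  have hhB : ∀ b : G, b • w = w → b * h = h * b := by
    intro b hb
    have := hg b
    rw [hφB k b hb, hφB j b hb] at this
    calc b * h = (z ^ k)⁻¹ * (z ^ k * b * (z ^ k)⁻¹) * g * z ^ j := by rw [hh]; group
      _ = h * b := by rw [this, hh]; group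
  have hreach : ∀ X ∈ orb C, ∀ Y ∈ orb C, Reach (orb C) (tv (orb C) X) (tv (orb C) Y) :=
    fun X hX Y hY => reach_tv hO hX hY
  have hgu : g • u = u := by
    by_contra hne
    obtain ⟨D, hD, -, -, h3⟩ := fix_edge hO huV (w := g • u)
      (by rw [hu, tv_smul hO]; exact hreach _ hCc _ (hO.inv _ _ hCc)) (Ne.symm hne)
    refine hio (hX.stab_fin (hsub hD) (h3 z hzu ?_))
    rw [smul_smul, ← hgz.eq, mul_smul, hzu]
  have hhu : h • u = u := by
    rw [hh, mul_smul, mul_smul, hpu, hgu, inv_smul_eq_iff, hpu]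
  have hhw : h • w = w := by
    by_contra hne
    obtain ⟨D, hD, -, -, h3⟩ := fix_edge hO hwV (w := h • w)
      (by rw [hw, tv_smul hO]; exact hreach _ hCO _ (hO.inv _ _ hCO)) (Ne.symm hne)
    have hBD : ∀ b : G, b • w = w → b • D = D := by
      intro b hb
      refine h3 b hb ?_
      rw [smul_smul, hhB b hb, mul_smul, hb]
    have hKB : ∀ b : G, b • C = C → b • w = w := by
      intro b hb
      rw [hw, tv_smul hO, hb]
    have hKD : (MulAction.stabilizer G C : Set G) = MulAction.stabilizer G D := by
      refine Set.eq_of_subset_of_ncard_le (fun k hk => hBD k (hKB k hk)) ?_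
        (hX.stab_finite (hsub hD))
      rw [orb_stab_ncard hD]
    have hBK : ∀ b : G, b • w = w → b • C = C := by
      intro b hb
      have : b ∈ (MulAction.stabilizer G D : Set G) := hBD b hb
      rw [← hKD] at this
      exact this
    obtain ⟨g1, hg1⟩ := hX.move C hC
    obtain ⟨X, hXO, -, h5, h6⟩ := exists_cover hO hCO (hO.inv g1 C hCO) hg1
    have hcov := tv_cover hO hCO hXO h5 h6
    obtain ⟨h', rfl | rfl⟩ := id hXO
    · rw [← smul_compl, ← tv_smul hO, ← hu, ← hw] at hcov
      have h7 : (h' * z * h'⁻¹) • w = w := by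
        rw [hcov, smul_smul, inv_mul_cancel_right, mul_smul, hzu]
      have h8 := hX.stab_fin hC (hBK _ h7)
      rw [← MulAut.conj_apply] at h8
      exact hio ((Function.Injective.isOfFinOrder_iff (f := (MulAut.conj h').toMonoidHom)
        (MulAut.conj h').injective).1 h8)
    · rw [← smul_compl, cc, ← tv_smul hO, ← hw] at hcov
      have h7 := hBK h' hcov.symm
      rw [smul_compl, h7] at h5
      exact hO.not_compl_sub hCO h5.subset
  have hhf : IsOfFinOrder h := by
    have hne : u ≠ w := by
      intro e
      have h1 : C ∈ w := mem_tv hCO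
      rw [← e] at h1
      exact not_mem_tv_compl hO hCO h1
    obtain ⟨D, hD, -, -, h3⟩ := fix_edge hO huV (hreach _ hCc _ hCO) hne
    exact hX.stab_fin (hsub hD) (h3 h hhu hhw)
  have hgio : ¬ IsOfFinOrder g := by
    intro hgf
    have hc : Commute h g := by
      rw [hh]
      exact (((hgz.symm.pow_left k).inv_left).mul_left (Commute.refl g)).mul_left
        (hgz.symm.pow_left j)
    have h1 : IsOfFinOrder (h⁻¹ * g) := hc.inv_left.isOfFinOrder_mul hhf.inv hgf
    have h2 : h⁻¹ * g = z ^ (k - j) := by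
      rw [inv_mul_eq_iff_eq_mul, hh, mul_assoc, ← pow_add, Nat.add_sub_cancel' hjk.le, mul_assoc,
        (hgz.pow_right k).eq, inv_mul_cancel_left]
    rw [h2] at h1
    exact zpow_not_fin hio (by omega) h1
  exact hX.final hC hgio hgu hgA

end LemmaII3
end PrimeProof

namespace PrimeProof
universe u v w
open scoped Pointwise
set_option linter.unusedSectionVars false

section FixedPoint
variable {G : Type u} [Group G] {E : Set (Set G)}

theorem Anch.smul {v : Set (Set G)} (h : Anch v) (g : G) : Anch (g • v) := by
  obtain ⟨F, hF, h⟩ := h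
  refine ⟨g • F, hF.smul_set, fun D hD => ?_⟩
  rw [smul_mem_v] at hD
  obtain ⟨x, h1, h2⟩ := h _ hD
  rw [smul_mem, inv_inv] at h1
  exact ⟨g * x, h1, by rw [smul_mem, inv_mul_cancel_left]; exact h2⟩

theorem diff_finite (hE : TreeSet E) {v w : Set (Set G)} (hv : IsVert E v) (hw : IsVert E w)
    (ha : Anch v) (hb : Anch w) : {D | D ∈ v ∧ D ∉ w}.Finite := by
  obtain ⟨F, hF, h⟩ := ha
  obtain ⟨F', hF', h'⟩ := hb
  refine (hF.biUnion fun x _ => hF'.biUnion fun y _ => hE.fin x y).subset ?_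
  rintro D ⟨h1, h2⟩
  obtain ⟨x, hx, hxF⟩ := h D h1
  obtain ⟨y, hy, hyF⟩ := h' Dᶜ ((hw.xor D (hv.sub h1)).2 h2)
  simp only [Set.mem_iUnion]
  exact ⟨x, hxF, y, hyF, hv.sub h1, hx, hy⟩

theorem eq_tv_of_min (hE : TreeSet E) {v : Set (Set G)} (hv : IsVert E v) {D : Set G} (hD : D ∈ v)
    (hmin : ∀ X ∈ v, ¬ X ⊂ D) : v = tv E D := by
  have hDE := hv.sub hD
  refine ((tv_isVert hE hDE).eq_of_subset hv ?_).symm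
  rintro Y ⟨hY, h | h⟩
  · exact hv.up D hD Y hY h
  · by_contra hn
    refine hmin Yᶜ ((hv.xor Y hY).2 hn) ?_
    rw [← compl_ss, cc]; exact h

/-- the edges separating points of the orbit of `v` -/
def sepM (Q : Subgroup G) (v : Set (Set G)) : Set (Set G) :=
  {D | (∃ q ∈ Q, D ∈ q • v) ∧ ∃ q ∈ Q, D ∉ q • v}

theorem sepM_smul {Q : Subgroup G} {v : Set (Set G)} {D : Set G} (h : D ∈ sepM Q v) {q : G}
    (hq : q ∈ Q) : q • D ∈ sepM Q v := by
  obtain ⟨⟨a, ha, h1⟩, b, hb, h2⟩ := h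
  refine ⟨⟨q * a, Q.mul_mem hq ha, ?_⟩, q * b, Q.mul_mem hq hb, ?_⟩
  · rw [mul_smul]; exact Set.smul_mem_smul_set h1
  · rw [mul_smul, Set.smul_mem_smul_set_iff]; exact h2

theorem sepM_compl (hE : TreeSet E) {Q : Subgroup G} {v : Set (Set G)} (hv : IsVert E v)
    {D : Set G} (h : D ∈ sepM Q v) : Dᶜ ∈ sepM Q v := by
  obtain ⟨⟨a, ha, h1⟩, b, hb, h2⟩ := h
  have hD : D ∈ E := (hv.smul hE a).sub h1
  refine ⟨⟨b, hb, ((hv.smul hE b).xor D hD).2 h2⟩, a, ha, fun hn => ?_⟩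
  exact ((hv.smul hE a).xor D hD).1 hn h1

theorem sepM_finite (hE : TreeSet E) {Q : Subgroup G} (hQ : (Q : Set G).Finite)
    {v : Set (Set G)} (hv : IsVert E v) (ha : Anch v) : (sepM Q v).Finite := by
  refine (hQ.biUnion fun a _ => hQ.biUnion fun b _ => diff_finite hE (hv.smul hE a)
    (hv.smul hE b) (ha.smul a) (ha.smul b)).subset ?_
  rintro D ⟨⟨a, ha, h1⟩, b, hb, h2⟩
  simp only [Set.mem_iUnion]
  exact ⟨a, ha, b, hb, h1, h2⟩

theorem tv_flip {D X : Set G} (h1 : X ≠ D) (h2 : X ≠ Dᶜ) :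
    X ∈ tv E Dᶜ ↔ X ∈ tv E D := by
  unfold tv
  simp only [Set.mem_ofPred_eq, cc]
  constructor
  · rintro ⟨h, h3 | h3⟩
    · exact ⟨h, Or.inr (h3.ssubset_of_ne (Ne.symm h2))⟩
    · exact ⟨h, Or.inl h3.subset⟩
  · rintro ⟨h, h3 | h3⟩
    · exact ⟨h, Or.inr (h3.ssubset_of_ne (Ne.symm h1))⟩
    · exact ⟨h, Or.inl h3.subset⟩

theorem fix_aux (hE : TreeSet E) {Q : Subgroup G} (hQ : (Q : Set G).Finite) (n : ℕ) :
    ∀ v : Set (Set G), IsVert E v → Anch v → (sepM Q v).ncard ≤ n →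
    (∀ q ∈ Q, q • v = v) ∨ (∃ D ∈ E, ∀ q ∈ Q, q • tv E D = tv E D) ∨
      ∃ D ∈ E, ∀ q ∈ Q, q • D = D ∨ q • D = Dᶜ := by
  induction n with
  | zero =>
    intro v hv ha hn
    left
    have hem : sepM Q v = ∅ := by
      rw [← Set.ncard_eq_zero (sepM_finite hE hQ hv ha)]; omega
    intro q hq
    ext D
    by_contra hne
    have : D ∈ sepM Q v := by
      by_cases h : D ∈ v
      · exact ⟨⟨1, Q.one_mem, by simpa using h⟩, q, hq, by tauto⟩
      · exact ⟨⟨q, hq, by tauto⟩, 1, Q.one_mem, by simpa using h⟩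
    rw [hem] at this
    exact this
  | succ n ih =>
    intro v hv ha hn
    have hfin := sepM_finite hE hQ hv ha
    by_cases hem : sepM Q v = ∅
    · exact ih v hv ha (by rw [hem]; simp)
    obtain ⟨D0, hD0, hmin0⟩ := hfin.exists_minimal (Set.nonempty_iff_ne_empty.2 hem)
    have hmin0 : ∀ q ∈ Q, ∀ X ∈ sepM Q v, ¬ X ⊂ q • D0 := by
      intro q hq X hX hlt
      have h1 : q⁻¹ • X ⊂ D0 := by rw [← smul_ssub (g := q), smul_inv_smul]; exact hlt
      exact h1.not_subset (hmin0 (sepM_smul hX (Q.inv_mem hq)) h1.subset)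
    obtain ⟨⟨q0, hq0, hDv⟩, -⟩ := id hD0
    obtain ⟨D, hD, hDv, hmin⟩ : ∃ D ∈ sepM Q v, D ∈ v ∧ ∀ q ∈ Q, ∀ X ∈ sepM Q v, ¬ X ⊂ q • D := by
      refine ⟨q0⁻¹ • D0, sepM_smul hD0 (Q.inv_mem hq0), smul_mem_v.1 hDv, fun q hq X hX => ?_⟩
      rw [smul_smul]
      exact hmin0 _ (Q.mul_mem hq (Q.inv_mem hq0)) X hX
    have hDE := hv.sub hDv
    have hmin1 : ∀ X ∈ sepM Q v, ¬ X ⊂ D := by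
      have := hmin 1 Q.one_mem
      simpa using this
    have hveq : v = tv E D := by
      refine eq_tv_of_min hE hv hDv fun X hXv hlt => ?_
      refine hmin1 X ⟨⟨1, Q.one_mem, by simpa using hXv⟩, ?_⟩ hlt
      by_contra hall
      push Not at hall
      obtain ⟨b, hb, h2⟩ := hD.2
      exact h2 ((hv.smul hE b).up X (hall b hb) D hDE hlt.subset)
    by_cases hinv : ∃ q ∈ Q, q • D = Dᶜ
    · right; right
      obtain ⟨q, hq, hqD⟩ := hinv
      refine ⟨D, hDE, fun r hr => ?_⟩
      have hrD := sepM_smul hD hr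
      rcases hE.nested _ (hE.inv r D hDE) _ hDE with h | h | h | h
      · left
        by_contra hne
        exact hmin1 _ hrD (h.ssubset_of_ne hne)
      · right
        by_contra hne
        refine hmin q hq _ hrD ?_
        rw [hqD]; exact h.ssubset_of_ne hne
      · right
        by_contra hne
        refine hmin1 _ (sepM_compl hE hv hrD) (h.ssubset_of_ne fun e => hne ?_)
        rw [eq_comm, compl_eq_comm, e]
      · left
        by_contra hne
        exact hmin r hr _ hD ((Set.compl_subset_compl.1 h).ssubset_of_ne (Ne.symm hne))
    push Not at hinv
    have hDc := hE.compl D hDE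
    have hv' := tv_isVert hE hDc
    have hnot : ∀ q ∈ Q, D ∉ q • tv E Dᶜ := by
      intro q hq hn
      rw [smul_mem_v] at hn
      have hqM := sepM_smul hD (Q.inv_mem hq)
      rcases hn with ⟨-, h | h⟩
      · refine hmin1 _ (sepM_compl hE hv hqM) ((Set.compl_subset_comm.1 h).ssubset_of_ne ?_)
        intro e
        apply hinv _ (Q.inv_mem hq)
        rw [eq_comm, compl_eq_comm, e]
      · rw [cc] at h
        exact hmin _ (Q.inv_mem hq) D hD h
    have hnotc : ∀ q ∈ Q, q • D ∉ sepM Q (tv E Dᶜ) := by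
      rintro q hq h
      have := sepM_smul h (Q.inv_mem hq)
      rw [inv_smul_smul] at this
      obtain ⟨a, ha, h1⟩ := this.1
      exact hnot a ha h1
    have hlt : sepM Q (tv E Dᶜ) ⊂ sepM Q v := by
      refine ⟨?_, fun hs => ?_⟩
      · intro X hX
        have hne : ∀ q ∈ Q, q⁻¹ • X ≠ D ∧ q⁻¹ • X ≠ Dᶜ := by
          intro q hq
          constructor
          · intro e
            rw [inv_smul_eq_iff] at e
            rw [e] at hX
            exact hnotc q hq hX
          · intro e
            rw [inv_smul_eq_iff] at e
            rw [e] at hX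
            have := sepM_compl hE hv' hX
            rw [smul_compl, cc] at this
            exact hnotc q hq this
        have hiff : ∀ q ∈ Q, X ∈ q • tv E Dᶜ ↔ X ∈ q • v := by
          intro q hq
          rw [smul_mem_v, smul_mem_v, hveq, tv_flip (hne q hq).1 (hne q hq).2]
        obtain ⟨⟨a, ha, h1⟩, b, hb, h2⟩ := hX
        exact ⟨⟨a, ha, (hiff a ha).1 h1⟩, b, hb, fun h => h2 ((hiff b hb).2 h)⟩
      · obtain ⟨a, ha, h1⟩ := (hs hD).1
        exact hnot a ha h1
    have hcard := Set.ncard_lt_ncard hlt hfin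
    rcases ih _ hv' (tv_anch hE hDc) (by omega) with h | h
    · exact Or.inr (Or.inl ⟨Dᶜ, hDc, h⟩)
    · exact Or.inr h

/-- principal vertex -/
def ov (E : Set (Set G)) (x : G) : Set (Set G) := {D | D ∈ E ∧ x ∈ D}

theorem ov_isVert (hE : TreeSet E) (x : G) : IsVert E (ov E x) where
  sub := fun D h => h.1
  xor := fun D hD => ⟨fun h h' => h.2 h'.2, fun h => ⟨hE.compl D hD, fun h' => h ⟨hD, h'⟩⟩⟩
  up := fun D hD X hX h => ⟨hX, h hD.2⟩

theorem ov_anch (x : G) : Anch (ov E x) := ⟨{x}, Set.finite_singleton x, fun D h => ⟨x, h.2, rfl⟩⟩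

theorem ov_smul (hE : TreeSet E) (g x : G) : g • ov E x = ov E (g * x) := by
  ext D
  rw [smul_mem_v]
  unfold ov
  simp only [Set.mem_ofPred_eq]
  rw [hE.smul_mem_iff, smul_mem, inv_inv]

theorem ov_reach (hE : TreeSet E) (x y : G) : Reach E (ov E x) (ov E y) := by
  by_cases hne : ov E x = ov E y
  · exact ⟨[], hne⟩
  have key : ∀ x y : G, ov E x ≠ ov E y → ∃ D ∈ E, ov E x = tv E D := by
    intro x y hne
    have hfin : {D | D ∈ ov E x ∧ D ∉ ov E y}.Finite :=
      diff_finite hE (ov_isVert hE x) (ov_isVert hE y) (ov_anch x) (ov_anch y)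
    have hnon : {D | D ∈ ov E x ∧ D ∉ ov E y}.Nonempty := by
      by_contra hem
      rw [Set.not_nonempty_iff_eq_empty] at hem
      refine hne ((ov_isVert hE x).eq_of_subset (ov_isVert hE y) fun D hD => ?_)
      by_contra hn
      have : D ∈ ({D | D ∈ ov E x ∧ D ∉ ov E y} : Set (Set G)) := ⟨hD, hn⟩
      rw [hem] at this
      exact this
    obtain ⟨D, hD, hmin⟩ := hfin.exists_minimal hnon
    refine ⟨D, hD.1.1, eq_tv_of_min hE (ov_isVert hE x) hD.1 fun X hX hlt => ?_⟩
    refine hlt.not_subset (hmin ⟨hX, fun h => hD.2 ?_⟩ hlt.subset)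
    exact (ov_isVert hE y).up X h D hD.1.1 hlt.subset
  obtain ⟨D, hD, h1⟩ := key x y hne
  obtain ⟨D', hD', h2⟩ := key y x (Ne.symm hne)
  rw [h1, h2]
  exact reach_tv hE hD hD'

theorem finite_orbits (hE : TreeSet E) (hfg : Group.FG G) :
    ∃ R ⊆ E, R.Finite ∧ ∀ D ∈ E, ∃ g : G, g • D ∈ R := by
  obtain ⟨S, hS⟩ := hfg.out
  refine ⟨{D | D ∈ E ∧ ∃ s ∈ S, ¬ (1 ∈ D ↔ s ∈ D)}, fun D h => h.1, ?_, ?_⟩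
  · refine (S.finite_toSet.biUnion fun s _ => (hE.fin 1 s).union (hE.fin s 1)).subset ?_
    rintro D ⟨hD, s, hs, h⟩
    simp only [Set.mem_iUnion]
    refine ⟨s, hs, ?_⟩
    by_cases h1 : (1 : G) ∈ D
    · exact Or.inl ⟨hD, h1, by tauto⟩
    · exact Or.inr ⟨hD, by tauto, h1⟩
  · intro D hD
    by_contra hno
    push Not at hno
    have h1 : ∀ s ∈ S, ∀ g : G, g ∈ D ↔ g * s ∈ D := by
      intro s hs g
      by_contra hn
      apply hno g⁻¹
      refine ⟨hE.inv _ _ hD, s, hs, ?_⟩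
      rw [smul_mem, smul_mem, inv_inv, mul_one]
      tauto
    have h2 : ∀ h : G, ∀ g : G, g ∈ D ↔ g * h ∈ D := by
      intro h
      have hh : h ∈ Subgroup.closure (S : Set G) := by rw [hS]; trivial
      induction hh using Subgroup.closure_induction with
      | mem x hx => exact h1 x hx
      | one => intro g; rw [mul_one]
      | mul x y _ _ hx hy => intro g; rw [hx g, hy (g * x), mul_assoc]
      | inv x _ hx => intro g; rw [hx (g * x⁻¹), inv_mul_cancel_right]
    obtain ⟨x, hx⟩ := hE.ne D hD
    obtain ⟨y, hy⟩ := hE.ne Dᶜ (hE.compl D hD)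
    apply hy
    have := (h2 (x⁻¹ * y) x).1 hx
    rwa [mul_inv_cancel_left] at this

/-- finite subgroups are conjugate into a finite set -/
theorem Ctx.finite_subgroups (hX : Ctx E) (hfg : Group.FG G) :
    ∃ B : Set G, B.Finite ∧ ∀ Q : Subgroup G, (Q : Set G).Finite →
      ∃ g : G, ∀ q ∈ Q, g * q * g⁻¹ ∈ B := by
  have hE := hX.tree
  obtain ⟨R, hRE, hR, hRo⟩ := finite_orbits hE hfg
  refine ⟨(MulAction.stabilizer G (ov E 1) : Set G) ∪
    (⋃ D ∈ R, (MulAction.stabilizer G (tv E D) : Set G)) ∪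
    (⋃ D ∈ R, {y : G | y • D = D ∨ y • D = Dᶜ}), ?_, ?_⟩
  · refine ((hX.stab_vert_finite (ov_isVert hE 1) (ov_anch 1)).union ?_).union ?_
    · exact hR.biUnion fun D hD =>
        hX.stab_vert_finite (tv_isVert hE (hRE hD)) (tv_anch hE (hRE hD))
    · exact hR.biUnion fun D hD => hX.stab_pair_finite (hRE hD)
  · intro Q hQ
    rcases fix_aux hE hQ _ _ (ov_isVert hE 1) (ov_anch 1) le_rfl with h | ⟨D, hD, h⟩ | ⟨D, hD, h⟩
    · refine ⟨1, fun q hq => Or.inl (Or.inl ?_)⟩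
      simpa using h q hq
    · obtain ⟨g, hg⟩ := hRo D hD
      refine ⟨g, fun q hq => Or.inl (Or.inr ?_)⟩
      simp only [Set.mem_iUnion]
      refine ⟨g • D, hg, ?_⟩
      show (g * q * g⁻¹) • _ = _
      rw [← tv_smul hE, smul_smul, inv_mul_cancel_right, mul_smul, h q hq]
    · obtain ⟨g, hg⟩ := hRo D hD
      refine ⟨g, fun q hq => Or.inr ?_⟩
      simp only [Set.mem_iUnion]
      refine ⟨g • D, hg, ?_⟩
      show (g * q * g⁻¹) • _ = _ ∨ (g * q * g⁻¹) • _ = _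
      rw [smul_smul, inv_mul_cancel_right, mul_smul, ← smul_compl]
      rcases h q hq with e | e
      · left; rw [e]
      · right; rw [e]

end FixedPoint
end PrimeProof

namespace PrimeProof
universe u v w
open scoped Pointwise
set_option linter.unusedSectionVars false

section LemmaV
variable {G : Type u} [Group G] {E : Set (Set G)}

/-- the centralizer of the image of `K` -/
def cenIm (φ : G →* G) (K : Set G) : Set G := {c | ∀ k ∈ K, c * φ k = φ k * c}

theorem core (Φ : Set (G →* G)) (K : Set G) (hK : K.Finite) (g : (G →* G) → G)
    (h1 : ∀ k ∈ K, ((fun φ : G →* G => φ k) '' Φ).Finite)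
    (h2 : ∀ k ∈ K, ((fun φ : G →* G => g φ * φ k * (g φ)⁻¹) '' Φ).Finite)
    (hc : ∀ φ ∈ Φ, (cenIm φ K).Finite) : (g '' Φ).Finite := by
  have := hK.to_subtype
  let F : (G →* G) → (K → G × G) := fun φ k => (φ k, g φ * φ k * (g φ)⁻¹)
  have hF : (F '' Φ).Finite := by
    refine (Set.Finite.pi fun k : K => (h1 k k.2).prod (h2 k k.2)).subset ?_
    rintro _ ⟨φ, hφ, rfl⟩ k -
    exact ⟨⟨φ, hφ, rfl⟩, ⟨φ, hφ, rfl⟩⟩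
  refine Set.Finite.subset (hF.biUnion (t := fun p => g '' {φ | φ ∈ Φ ∧ F φ = p}) ?_) ?_
  · rintro _ ⟨φ0, h0, rfl⟩
    refine ((hc φ0 h0).image fun c => g φ0 * c).subset ?_
    rintro _ ⟨φ, ⟨h, he⟩, rfl⟩
    refine ⟨(g φ0)⁻¹ * g φ, ?_, by simp⟩
    intro k hk
    have e := congrFun he ⟨k, hk⟩
    have e1 : φ k = φ0 k := congrArg Prod.fst e
    have e2 : g φ * φ k * (g φ)⁻¹ = g φ0 * φ0 k * (g φ0)⁻¹ := congrArg Prod.snd e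
    rw [e1, mul_inv_eq_iff_eq_mul] at e2
    rw [mul_assoc, e2]
    group
  · rintro _ ⟨φ, hφ, rfl⟩
    simp only [Set.mem_iUnion]
    exact ⟨F φ, ⟨φ, hφ, rfl⟩, φ, ⟨hφ, rfl⟩, rfl⟩

/-- elements with finitely many images -/
def tame (Φ : Set (G →* G)) : Subgroup G where
  carrier := {x | ((fun φ : G →* G => φ x) '' Φ).Finite}
  one_mem' := by
    refine (Set.finite_singleton (1 : G)).subset ?_
    rintro _ ⟨φ, -, rfl⟩
    simp
  mul_mem' := by
    intro x y hx hy
    refine (hx.mul hy).subset ?_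
    rintro _ ⟨φ, h, rfl⟩
    exact ⟨φ x, ⟨φ, h, rfl⟩, φ y, ⟨φ, h, rfl⟩, (map_mul φ x y).symm⟩
  inv_mem' := by
    intro x hx
    refine hx.inv.subset ?_
    rintro _ ⟨φ, h, rfl⟩
    exact ⟨φ, h, by simp⟩

theorem mem_tame {Φ : Set (G →* G)} {x : G} :
    x ∈ tame Φ ↔ ((fun φ : G →* G => φ x) '' Φ).Finite := Iff.rfl

theorem tame_extend (Φ : Set (G →* G)) {B : Set G} (hB : B.Finite)
    (hBQ : ∀ Q : Subgroup G, (Q : Set G).Finite → ∃ g : G, ∀ q ∈ Q, g * q * g⁻¹ ∈ B)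
    (K L : Subgroup G) (hL : (L : Set G).Finite) (hKL : K ≤ L) (hKt : K ≤ tame Φ)
    (hc : ∀ φ ∈ Φ, (cenIm φ K).Finite) : L ≤ tame Φ := by
  have h1 : ∀ φ : G →* G, ∃ g : G, ∀ l ∈ L, g * φ l * g⁻¹ ∈ B := by
    intro φ
    obtain ⟨g, hg⟩ := hBQ (L.map φ) (by rw [Subgroup.coe_map]; exact hL.image φ)
    exact ⟨g, fun l hl => hg _ (Subgroup.mem_map_of_mem φ hl)⟩
  choose g hg using h1
  have hfin : (g '' Φ).Finite := by
    refine core Φ K (hL.subset hKL) g (fun k hk => hKt hk) (fun k hk => ?_) hc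
    refine hB.subset ?_
    rintro _ ⟨φ, -, rfl⟩
    exact hg φ k (hKL hk)
  intro l hl
  rw [mem_tame]
  refine ((hfin.inv.mul hB).mul hfin).subset ?_
  rintro _ ⟨φ, hφ, rfl⟩
  refine Set.mem_mul.2 ⟨(g φ)⁻¹ * (g φ * φ l * (g φ)⁻¹), Set.mem_mul.2 ⟨_, ?_, _, hg φ l hl, rfl⟩,
    g φ, ⟨φ, hφ, rfl⟩, by group⟩
  rw [Set.mem_inv, inv_inv]
  exact ⟨φ, hφ, rfl⟩

theorem Ctx.tame_path (hX : Ctx E) (Φ : Set (G →* G)) {B : Set G} (hB : B.Finite)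
    (hBQ : ∀ Q : Subgroup G, (Q : Set G).Finite → ∃ g : G, ∀ q ∈ Q, g * q * g⁻¹ ∈ B)
    (hc : ∀ φ ∈ Φ, ∀ D ∈ E, (cenIm φ (MulAction.stabilizer G D)).Finite) (L : List (Set G)) :
    ∀ v w : Set (Set G), IsPath E v L w → MulAction.stabilizer G v ≤ tame Φ →
      MulAction.stabilizer G w ≤ tame Φ := by
  have hE := hX.tree
  induction L with
  | nil =>
    intro v w h ht
    have h : v = w := h
    rwa [← h]
  | cons D L ih =>
    intro v w h ht
    refine ih _ w h.2.2 ?_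
    have hst : ∀ D : Set G, MulAction.stabilizer G D ≤ MulAction.stabilizer G (tv E D) := by
      intro D k hk
      rw [MulAction.mem_stabilizer_iff] at hk ⊢
      rw [tv_smul hE, hk]
    refine tame_extend Φ hB hBQ (MulAction.stabilizer G D) _
      (hX.stab_vert_finite (tv_isVert hE h.1) (tv_anch hE h.1)) (hst D) ?_ (fun φ hφ => hc φ hφ D h.1)
    refine le_trans ?_ ht
    rw [h.2.1, ← stab_compl]
    exact hst _

theorem Ctx.finite_hom (hX : Ctx E) (hfg : Group.FG G) {B : Set G} (hB : B.Finite)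
    (hBQ : ∀ Q : Subgroup G, (Q : Set G).Finite → ∃ g : G, ∀ q ∈ Q, g * q * g⁻¹ ∈ B)
    (Φ : Set (G →* G)) (hc : ∀ φ ∈ Φ, ∀ D ∈ E, (cenIm φ (MulAction.stabilizer G D)).Finite)
    (h0 : ∀ φ ∈ Φ, ∀ h : G, h • ov E 1 = ov E 1 → φ h ∈ B) : Φ.Finite := by
  have hE := hX.tree
  have hH : MulAction.stabilizer G (ov E 1) ≤ tame Φ := by
    intro h hh
    refine hB.subset ?_
    rintro _ ⟨φ, hφ, rfl⟩
    exact h0 φ hφ h hh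
  have hall : ∀ s : G, s ∈ tame Φ := by
    intro s
    obtain ⟨L, hL⟩ := ov_reach hE 1 s
    have ht := hX.tame_path Φ hB hBQ hc L _ _ hL hH
    have hs : s • ov E 1 = ov E s := by rw [ov_smul hE, mul_one]
    rcases L with _ | ⟨D, L⟩
    · have hL : ov E 1 = ov E s := hL
      exact hH (show s • ov E 1 = ov E 1 by rw [hs, hL])
    · have hK : ∀ k : G, k • D = D → k • ov E 1 = ov E 1 := by
        intro k hk
        rw [hL.2.1, tv_smul hE, smul_compl, hk]
      refine core Φ (MulAction.stabilizer G D) (hX.stab_finite hL.1) (fun φ => φ s)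
        (fun k hk => hH (hK k hk)) (fun k hk => ?_) (fun φ hφ => hc φ hφ D hL.1)
      have : s * k * s⁻¹ ∈ tame Φ := by
        apply ht
        rw [MulAction.mem_stabilizer_iff, ← hs, smul_smul, inv_mul_cancel_right, mul_smul,
          hK k hk]
      simpa [mem_tame] using this
  obtain ⟨S, hS⟩ := hfg.out
  let F : (G →* G) → (S → G) := fun φ s => φ s
  have hF : (F '' Φ).Finite := by
    refine (Set.Finite.pi fun s : S => hall s).subset ?_
    rintro _ ⟨φ, hφ, rfl⟩ s -
    exact ⟨φ, hφ, rfl⟩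
  refine Set.Finite.of_finite_image hF fun φ _ ψ _ h => ?_
  exact MonoidHom.eq_of_eqOn_dense hS fun s hs => congrFun h ⟨s, hs⟩

theorem Ctx.lemmaV (hX : Ctx E) (hfg : Group.FG G) :
    ∃ R : Set (Set G), R ⊆ E ∧ R.Finite ∧ ∃ F : Set G, F.Finite ∧ 1 ∉ F ∧ ∀ φ : G →* G,
      (∀ D ∈ R, (cenIm φ (MulAction.stabilizer G D)).Finite) → (∀ f ∈ F, φ f ≠ 1) →
      Function.Injective φ := by
  have hE := hX.tree
  obtain ⟨B, hB, hBQ⟩ := hX.finite_subgroups hfg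
  obtain ⟨R, hRE, hR, hRo⟩ := finite_orbits hE hfg
  let Φ : Set (G →* G) := {φ | (∀ D ∈ E, (cenIm φ (MulAction.stabilizer G D)).Finite) ∧
    ∀ h : G, h • ov E 1 = ov E 1 → φ h ∈ B}
  have hΦ : Φ.Finite := hX.finite_hom hfg hB hBQ Φ (fun φ h => h.1) (fun φ h => h.2)
  have hf : ∀ ψ : G →* G, ∃ f : G, ¬ Function.Injective ψ → f ≠ 1 ∧ ψ f = 1 := by
    intro ψ
    by_cases h : Function.Injective ψ
    · exact ⟨1, fun h' => absurd h h'⟩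
    · have h' := h
      rw [injective_iff_map_eq_one] at h'
      push Not at h'
      obtain ⟨f, h1, h2⟩ := h'
      exact ⟨f, fun _ => ⟨h2, h1⟩⟩
  choose f hf using hf
  refine ⟨R, hRE, hR, f '' {ψ | ψ ∈ Φ ∧ ¬ Function.Injective ψ}, (hΦ.subset fun ψ h => h.1).image f,
    ?_, ?_⟩
  · rintro ⟨ψ, ⟨-, h⟩, h1⟩
    exact (hf ψ h).1 h1
  · intro φ hφ hF
    by_contra hn
    obtain ⟨g, hg⟩ := hBQ ((MulAction.stabilizer G (ov E 1)).map φ) (by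
      rw [Subgroup.coe_map]
      exact (hX.stab_vert_finite (ov_isVert hE 1) (ov_anch 1)).image φ)
    let ψ : G →* G := (MulAut.conj g).toMonoidHom.comp φ
    have hψ : ∀ x, ψ x = g * φ x * g⁻¹ := fun x => rfl
    have hψ1 : ∀ x, ψ x = 1 ↔ φ x = 1 := by
      intro x
      rw [hψ, conj_eq_one_iff]
    have hψn : ¬ Function.Injective ψ := by
      intro h
      apply hn
      rw [injective_iff_map_eq_one] at h ⊢
      exact fun x hx => h x ((hψ1 x).2 hx)
    have hψΦ : ψ ∈ Φ := by
      refine ⟨fun D hD => ?_, fun h hh => hg _ (Subgroup.mem_map_of_mem φ hh)⟩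
      obtain ⟨a, ha⟩ := hRo D hD
      refine ((hφ _ ha).image fun c => (g * (φ a)⁻¹) * c * (g * (φ a)⁻¹)⁻¹).subset ?_
      intro c hc
      refine ⟨(g * (φ a)⁻¹)⁻¹ * c * (g * (φ a)⁻¹), ?_, by group⟩
      intro k hk
      have hk1 : (a⁻¹ * k * a) • D = D := by
        have hk : k • a • D = a • D := hk
        rw [mul_smul, mul_smul, hk, inv_smul_smul]
      have e := hc _ hk1
      rw [hψ, map_mul, map_mul, map_inv] at e
      calc (g * (φ a)⁻¹)⁻¹ * c * (g * (φ a)⁻¹) * φ k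
          = φ a * g⁻¹ * (c * (g * ((φ a)⁻¹ * φ k * φ a) * g⁻¹)) * g * (φ a)⁻¹ := by group
        _ = φ k * ((g * (φ a)⁻¹)⁻¹ * c * (g * (φ a)⁻¹)) := by rw [e]; group
    exact hF (f ψ) ⟨ψ, ⟨hψΦ, hψn⟩, rfl⟩ ((hψ1 _).1 (hf ψ hψn).2)

end LemmaV
end PrimeProof

namespace PrimeProof
universe u v w
open scoped Pointwise
set_option linter.unusedSectionVars false

section Assembly

theorem definable_ball {G : Type u} [Group G] {σ : Type w} {ι : Type v} {I : Set ι}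
    (hI : I.Finite) (T : ι → Set (σ → G)) (h : ∀ i ∈ I, (∅ : Set G).Definable groupLang (T i)) :
    (∅ : Set G).Definable groupLang {x | ∀ i ∈ I, x ∈ T i} := by
  induction I, hI using Set.Finite.induction_on with
  | empty =>
    have : {x : σ → G | ∀ i ∈ (∅ : Set ι), x ∈ T i} = Set.univ := by ext; simp
    rw [this]; exact Set.definable_univ
  | @insert a s _ _ ih =>
    have : {x : σ → G | ∀ i ∈ insert a s, x ∈ T i} = T a ∩ {x | ∀ i ∈ s, x ∈ T i} := by
      ext; simp
    rw [this]
    exact (h a (Set.mem_insert _ _)).inter (ih fun i hi => h i (Set.mem_insert_of_mem _ hi))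

theorem main {G : Type u} [Group G] (hfg : Group.FG G) (hvf : VirtuallyFree G)
    (hco : CoHopfian G) (hout : OutFinite G) (G' : Type v) [Group G'] (h : G ≅[groupLang] G') :
    Nonempty (G ↪ₑ[groupLang] G') := by
  classical
  obtain ⟨E, hE, hyp, hmove, hinf⟩ := exists_treeSet G hfg hvf
  have hX : Ctx E := ⟨hco, hE, hyp, hmove, hinf⟩
  obtain ⟨R, hRE, hR, F, hF, h1F, hinj⟩ := hX.lemmaV hfg
  obtain ⟨σ, hσ, s, rel, hrel, hs, hsrel, hpres⟩ := finite_presentation G hfg hvf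
  have hword : ∀ g : G, ∃ a : FreeGroup σ, FreeGroup.lift s a = g := by
    intro g
    have : g ∈ (FreeGroup.lift s).range := by
      rw [FreeGroup.range_lift_eq_closure, hs]; trivial
    exact this
  choose wd hwd using hword
  have hA : ∀ D : Set G, ∃ A : Finset (FreeGroup σ), D ∈ R →
      (A : Set (FreeGroup σ)) = wd '' (MulAction.stabilizer G D : Set G) := by
    intro D
    by_cases hD : D ∈ R
    · exact ⟨((hX.stab_finite (hRE hD)).image wd).toFinset, fun _ => by simp⟩
    · exact ⟨∅, fun h => absurd h hD⟩
  choose A hA using hA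
  let m : Set G → ℕ := fun D => (ZC D : Set G).ncard
  let T1 : FreeGroup σ → Set (σ → G) := fun r => {x | FreeGroup.lift x r = FreeGroup.lift x 1}
  let T2 : Set G → Set (σ → G) := fun D => {x | ¬ ∃ c : Fin (m D + 1) → G, Function.Injective c ∧
      ∀ i, ∀ a ∈ A D, c i * FreeGroup.lift x a = FreeGroup.lift x a * c i}
  let T3 : G → Set (σ → G) := fun f => {x | FreeGroup.lift x (wd f) = FreeGroup.lift x 1}ᶜ
  refine elementary_of_definable s hs ({x | ∀ r ∈ rel, x ∈ T1 r} ∩ {x | ∀ D ∈ R, x ∈ T2 D} ∩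
    {x | ∀ f ∈ F, x ∈ T3 f}) ?_ ?_ ?_ G' h
  · refine (Set.Definable.inter ?_ ?_).inter ?_
    · exact definable_ball hrel _ fun r _ => definable_word_eq r 1
    · exact definable_ball hR _ fun D _ => definable_centralizer (A D) (m D)
    · exact definable_ball hF _ fun f _ => (definable_word_eq (wd f) 1).compl
  · refine ⟨⟨fun r hr => ?_, fun D hD => ?_⟩, fun f hf => ?_⟩
    · show FreeGroup.lift s r = FreeGroup.lift s 1
      rw [hsrel r hr, map_one]
    · rintro ⟨c, hc, hcc⟩
      have hz : ∀ i, c i ∈ (ZC D : Set G) := by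
        intro i
        refine mem_ZC.2 fun k hk => ?_
        have := hcc i (wd k) (by
          rw [← Finset.mem_coe, hA D hD]; exact ⟨k, hk, rfl⟩)
        rw [hwd] at this
        exact this.symm
      have hfin : (ZC D : Set G).Finite := lemmaII hX hout (hRE hD)
      have h1 : (Set.range c).ncard ≤ (ZC D : Set G).ncard :=
        Set.ncard_le_ncard (by rintro _ ⟨i, rfl⟩; exact hz i) hfin
      rw [Set.ncard_range_of_injective hc, Nat.card_fin] at h1
      exact absurd h1 (by simp [m])
    · show ¬ (FreeGroup.lift s (wd f) = FreeGroup.lift s 1)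
      rw [hwd, map_one]
      rintro rfl
      exact h1F hf
  · rintro x ⟨⟨hx1, hx2⟩, hx3⟩
    obtain ⟨φ, hφ⟩ := hpres x fun r hr => by
      have : FreeGroup.lift x r = FreeGroup.lift x 1 := hx1 r hr
      rw [this, map_one]
    have hlift : ∀ a, FreeGroup.lift x a = φ (FreeGroup.lift s a) := by
      intro a
      have : FreeGroup.lift x = φ.comp (FreeGroup.lift s) := by
        ext i; simp [hφ]
      rw [this]; rfl
    have hi : Function.Injective φ := by
      refine hinj φ (fun D hD => ?_) fun f hf h1 => ?_
      · by_contra hn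
        have hn : (cenIm φ (MulAction.stabilizer G D)).Infinite := hn
        refine hx2 D hD ?_
        have := hn.to_subtype
        obtain ⟨e⟩ : Nonempty (Fin (m D + 1) ↪ cenIm φ (MulAction.stabilizer G D)) :=
          ⟨Fin.valEmbedding.trans (Infinite.natEmbedding _)⟩
        refine ⟨fun i => e i, Subtype.val_injective.comp e.injective, fun i a ha => ?_⟩
        rw [← Finset.mem_coe, hA D hD] at ha
        obtain ⟨k, hk, rfl⟩ := ha
        rw [hlift, hwd]
        exact (e i).2 k hk
      · apply hx3 f hf
        show FreeGroup.lift x (wd f) = FreeGroup.lift x 1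
        rw [hlift, hwd, h1, map_one]
    refine ⟨MulEquiv.ofBijective φ ⟨hi, hco φ hi⟩, fun i => ?_⟩
    exact (hφ i).symm

end Assembly
end PrimeProof


/-- A finitely generated co-Hopfian virtually free group with finite outer
automorphism group is a prime model: it elementarily embeds into every group
elementarily equivalent to it. -/
theorem coHopfian_outFinite_prime
    (G : Type*) [Group G] (hfg : Group.FG G) (hvf : VirtuallyFree G)
    (hco : CoHopfian G) (hout : OutFinite G) :
    ∀ (G' : Type*) [Group G'], (G ≅[groupLang] G') → Nonempty (G ↪ₑ[groupLang] G') := by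
  intro G' _ h
  exact PrimeProof.main hfg hvf hco hout G' h
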